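/- arXiv:math/0609339 — 5 statements merged into one kernel-verified Lean document; each statement's English description precedes it below -/
import Mathlib

section
/- Let T be a tree with n vertices, and let i, j be integers with 1 ≤ j ≤ i ≤ n−1. Then the number of subtrees S of T with #S = i edges and #L(S) = j leaf edges equals Σ_{λ ⊢ n} φ(λ,i,j) · c_λ(T), where for a partition λ = (λ_1 ≥ … ≥ λ_ℓ) of n one sets φ(λ,i,j) = (−1)^{i+j} C(ℓ−1, ℓ−n+i) Σ_{d=1}^{j} (−1)^d C(i−d, j−d) Σ_{k=1}^{ℓ} C(λ_k−1, d), with the convention C(p,q) = 0 if q < 0 or q > p. -/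
open SimpleGraph Finset

variable {V : Type*} {W : Type*}

open Classical in
/-- `edgeSetType A` : the "type" of the edge set `A`, i.e. the partition (as a multiset of
positive integers) of `#V` whose parts are the orders of the connected components of the
spanning subgraph `(V, A)`. -/
noncomputable def edgeSetType [Fintype V] (A : Finset (Sym2 V)) : Multiset ℕ :=
  ((Finset.univ : Finset V).image
    (fun v => (SimpleGraph.fromEdgeSet (↑A : Set (Sym2 V))).connectedComponentMk v)).val.map
    (fun c => c.supp.ncard)

open Classical in
/-- `cCoeff G λ = Σ_{A ⊆ E(G), type(A) = λ} (−1)^{#A}`, the coefficient of the power-sum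
symmetric function `p_λ` in the chromatic symmetric function `X_G`. -/
noncomputable def cCoeff [Fintype V] (G : SimpleGraph V) (lam : Multiset ℕ) : ℤ :=
  ∑ A ∈ (Finset.univ : Finset (Sym2 V)).powerset,
    if (↑A : Set (Sym2 V)) ⊆ G.edgeSet ∧ edgeSetType A = lam then (-1 : ℤ) ^ A.card else 0

open Classical in
/-- `NCoeff G λ` : the number of edge sets `A ⊆ E(G)` with `type(A) = λ`. -/
noncomputable def NCoeff [Fintype V] (G : SimpleGraph V) (lam : Multiset ℕ) : ℕ :=
  ((Finset.univ : Finset (Sym2 V)).powerset.filter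
    (fun (A : Finset (Sym2 V)) => (↑A : Set (Sym2 V)) ⊆ G.edgeSet ∧ edgeSetType A = lam)).card

/-- `S` is a subtree of `T`: a nonempty set of edges of `T` such that the subgraph consisting of
the edges of `S` together with their endpoints is connected. -/
def IsSubtreeSet (T : SimpleGraph V) (S : Set (Sym2 V)) : Prop :=
  S.Nonempty ∧ S ⊆ T.edgeSet ∧
    ((SimpleGraph.fromEdgeSet S).induce {v | ∃ e ∈ S, v ∈ e}).Connected

/-- The leaf edges of an edge set `S` : edges of `S` having an endpoint incident to no other
edge of `S`. -/
def leafEdges (S : Set (Sym2 V)) : Set (Sym2 V) :=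
  {e | e ∈ S ∧ ∃ v ∈ e, ∀ e' ∈ S, v ∈ e' → e' = e}

/-- The connector `K(A)` of a (nonempty) edge set `A` of a tree `T`: the minimal subset `K` of
`E(T) \ A` such that `A ∪ K` is a subtree of `T`. -/
def connector (T : SimpleGraph V) (A : Set (Sym2 V)) : Set (Sym2 V) :=
  ⋂₀ {B | B ⊆ T.edgeSet \ A ∧ IsSubtreeSet T (A ∪ B)}

/-- Integer-valued binomial coefficient `C(p, q)` with the convention `C(p,q) = 0` for `q < 0`
(and, as usual, for `q > p`). -/
def chooseInt (p : ℕ) (q : ℤ) : ℤ := if 0 ≤ q then (p.choose q.toNat : ℤ) else 0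

/-- `ψ(λ,a,b) = (−1)^{a+b} C(ℓ−1, ℓ−n+a+b) Σ_{k=1}^{ℓ} C(λ_k − 1, a)` for a partition `λ` of
`n` with `ℓ` parts. -/
def psi (n : ℕ) (lam : Multiset ℕ) (a b : ℕ) : ℤ :=
  (-1 : ℤ) ^ (a + b) * chooseInt (lam.card - 1) ((lam.card : ℤ) - n + a + b) *
    (lam.map (fun m => ((m - 1).choose a : ℤ))).sum

/-- `φ(λ,i,j) = (−1)^{i+j} C(ℓ−1, ℓ−n+i) Σ_{d=1}^{j} (−1)^d C(i−d, j−d) Σ_{k=1}^{ℓ} C(λ_k−1, d)`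
for a partition `λ` of `n` with `ℓ` parts. -/
def phi (n : ℕ) (lam : Multiset ℕ) (i j : ℕ) : ℤ :=
  (-1 : ℤ) ^ (i + j) * chooseInt (lam.card - 1) ((lam.card : ℤ) - n + i) *
    ∑ d ∈ Finset.Icc 1 j, (-1 : ℤ) ^ d * ((i - d).choose (j - d) : ℤ) *
      (lam.map (fun m => ((m - 1).choose d : ℤ))).sum


/-- Edges of `T` separating two vertices covered by `D`. -/
def hullS (T : SimpleGraph V) (D : Set (Sym2 V)) : Set (Sym2 V) :=
  {e | e ∈ T.edgeSet ∧ ∃ e1 ∈ D, ∃ u ∈ e1, ∃ e2 ∈ D, ∃ v ∈ e2,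
    ¬ (fromEdgeSet (T.edgeSet \ {e})).Reachable u v}

/-- All vertices covered by `D` are mutually reachable using edges of `A`. -/
def Cn (A D : Set (Sym2 V)) : Prop :=
  ∀ e1 ∈ D, ∀ u ∈ e1, ∀ e2 ∈ D, ∀ v ∈ e2, (fromEdgeSet A).Reachable u v

lemma bridge_sep {T : SimpleGraph V} (hT : T.IsTree) {x y : V} (h : s(x, y) ∈ T.edgeSet)
    {A : Set (Sym2 V)} (hA : A ⊆ T.edgeSet) (hn : s(x, y) ∉ A) :
    ¬ (fromEdgeSet A).Reachable x y := by
  intro hr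
  have hb := isAcyclic_iff_forall_isBridge.1 hT.isAcyclic h
  rw [isBridge_iff] at hb
  apply hb
  refine hr.mono ?_
  intro a b hab
  rw [fromEdgeSet_adj] at hab
  rw [deleteEdges_adj]
  refine ⟨hA hab.1, ?_⟩
  intro h'
  rw [Set.mem_singleton_iff] at h'
  exact hn (h' ▸ hab.1)

lemma hull_sub_iff {T : SimpleGraph V} (hT : T.IsTree) {A D : Set (Sym2 V)}
    (hA : A ⊆ T.edgeSet) : hullS T D ⊆ A ↔ Cn A D := by
  classical
  constructor
  · intro h e1 he1 u hu e2 he2 v hv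
    obtain ⟨p, hp⟩ := hT.1.exists_isPath u v
    have key : ∀ e ∈ p.edges, e ∈ A := by
      intro e he
      apply h
      refine ⟨p.edges_subset_edgeSet he, e1, he1, u, hu, e2, he2, v, hv, ?_⟩
      rintro ⟨q⟩
      have hle : fromEdgeSet (T.edgeSet \ {e}) ≤ T := by
        intro a b hab
        rw [fromEdgeSet_adj] at hab
        exact hab.1.1
      let q' := (q.mapLe hle).toPath
      have := (hT.isAcyclic.subsingleton_path u v).elim ⟨p, hp⟩ q'
      have h2 : e ∈ (q' : T.Walk u v).edges := by rw [← this]; exact he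
      have h3 := Walk.edges_toPath_subset_edges _ h2
      rw [Walk.edges_mapLe_eq_edges] at h3
      have h4 := q.edges_subset_edgeSet h3
      rw [edgeSet_fromEdgeSet] at h4
      exact h4.1.2 rfl
    refine ⟨p.transfer _ ?_⟩
    intro e he
    rw [edgeSet_fromEdgeSet]
    exact ⟨key e he, T.not_isDiag_of_mem_edgeSet (p.edges_subset_edgeSet he)⟩
  · rintro h e ⟨he, e1, he1, u, hu, e2, he2, v, hv, hr⟩
    by_contra hn
    apply hr
    refine (h e1 he1 u hu e2 he2 v hv).mono ?_
    apply fromEdgeSet_mono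
    intro f hf
    refine ⟨hA hf, ?_⟩
    rintro rfl
    exact hn hf

lemma sub_hull {T : SimpleGraph V} (hT : T.IsTree) {D : Set (Sym2 V)}
    (hD : D ⊆ T.edgeSet) : D ⊆ hullS T D := by
  intro e
  induction e with | h x y
  intro he
  exact ⟨hD he, _, he, x, by simp, _, he, y, by simp,
    bridge_sep hT (hD he) Set.sdiff_subset (by simp)⟩

/-- A vertex of degree one on each side of an edge. -/
lemma exists_leaf {T : SimpleGraph V} (hT : T.IsTree) (n : ℕ) :
    ∀ (B : Finset (Sym2 V)), B.card = n → (↑B : Set (Sym2 V)) ⊆ T.edgeSet →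
    ∀ x y, s(x, y) ∈ B → ∃ z, (fromEdgeSet ((↑B : Set (Sym2 V)) \ {s(x, y)})).Reachable x z ∧
      ∃ g ∈ B, z ∈ g ∧ ∀ g' ∈ B, z ∈ g' → g' = g := by
  classical
  induction n with
  | zero => intro B hB _ x y h; simp_all
  | succ n ih =>
    intro B hB hBT x y hxy
    by_cases hx : ∀ g' ∈ B, x ∈ g' → g' = s(x, y)
    · exact ⟨x, Reachable.refl _, s(x, y), hxy, by simp, hx⟩
    · push Not at hx
      obtain ⟨f, hf, hxf, hne⟩ := hx
      obtain ⟨w, rfl⟩ := hxf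
      have hc : (B.erase s(x, y)).card = n := by rw [card_erase_of_mem hxy]; omega
      have hsub : (↑(B.erase s(x, y)) : Set (Sym2 V)) ⊆ T.edgeSet :=
        fun e he => hBT (mem_of_mem_erase he)
      have hswap : s(w, x) = s(x, w) := Sym2.eq_swap
      obtain ⟨z, hz, g, hg, hzg, hu⟩ := ih (B.erase s(x, y)) hc hsub w x
        (by rw [hswap]; exact mem_erase.2 ⟨hne, hf⟩)
      have hxw : (fromEdgeSet ((↑B : Set (Sym2 V)) \ {s(x, y)})).Adj x w := by
        rw [fromEdgeSet_adj]
        exact ⟨⟨hf, by simpa using hne⟩, (T.mem_edgeSet.1 (hBT hf)).ne⟩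
      have hz' : (fromEdgeSet ((↑B : Set (Sym2 V)) \ {s(x, y)})).Reachable x z := by
        refine hxw.reachable.trans (hz.mono (fromEdgeSet_mono ?_))
        intro e he
        simp at he ⊢
        tauto
      refine ⟨z, hz', g, mem_of_mem_erase hg, hzg, ?_⟩
      intro g' hg' hzg'
      by_cases h : g' = s(x, y)
      · exfalso
        subst h
        rw [Sym2.mem_iff] at hzg'
        rcases hzg' with rfl | rfl
        · refine bridge_sep hT (x := w) (y := z) ?_ ?_ ?_ hz
          · rw [hswap]; exact hBT hf
          · exact fun e he => hsub he.1
          · simp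
        · exact bridge_sep hT (hBT hxy) (fun e he => hBT he.1) (by simp) hz'
      · exact hu g' (mem_erase.2 ⟨h, hg'⟩) hzg'

lemma subtree_cn {T : SimpleGraph V} {B : Set (Sym2 V)} (h : IsSubtreeSet T B) : Cn B B := by
  intro e1 he1 u hu e2 he2 v hv
  have := h.2.2.preconnected ⟨u, e1, he1, hu⟩ ⟨v, e2, he2, hv⟩
  exact this.map (Embedding.induce _).toHom

lemma cn_subtree {T : SimpleGraph V} {B : Set (Sym2 V)} (hne : B.Nonempty)
    (hB : B ⊆ T.edgeSet) (h : Cn B B) : IsSubtreeSet T B := by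
  refine ⟨hne, hB, ?_⟩
  have key : ∀ u v, ∀ p : (fromEdgeSet B).Walk u v, ∀ (hu : ∃ e ∈ B, u ∈ e)
      (hv : ∃ e ∈ B, v ∈ e),
      ((fromEdgeSet B).induce {v | ∃ e ∈ B, v ∈ e}).Reachable ⟨u, hu⟩ ⟨v, hv⟩ := by
    intro u v p
    induction p with
    | nil => intro _ _; exact Reachable.refl _
    | @cons a b c hab p ih =>
      intro hu hv
      have hb : ∃ e ∈ B, b ∈ e := ⟨s(a, b), ((fromEdgeSet_adj _).1 hab).1, by simp⟩
      refine Reachable.trans (Adj.reachable ?_) (ih hb hv)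
      exact hab
  obtain ⟨e, he⟩ := hne
  have : Nonempty {v | ∃ e ∈ B, v ∈ e} := by
    induction e with | h x y
    exact ⟨⟨x, _, he, by simp⟩⟩
  refine ⟨?_⟩
  rintro ⟨u, hu⟩ ⟨v, hv⟩
  obtain ⟨e1, h1, hu1⟩ := id hu
  obtain ⟨e2, h2, hv2⟩ := id hv
  obtain ⟨p⟩ := h e1 h1 u hu1 e2 h2 v hv2
  exact key u v p hu hv

lemma retract {B : Set (Sym2 V)} {x y : V} (hx : ∀ e' ∈ B, x ∈ e' → e' = s(x, y))
    {u v : V} (hu : u ≠ x) (hv : v ≠ x) (h : (fromEdgeSet B).Reachable u v) :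
    (fromEdgeSet (B \ {s(x, y)})).Reachable u v := by
  classical
  let f : V → V := fun a => if a = x then y else a
  obtain ⟨p⟩ := h
  have key : ∀ u v, ∀ _ : (fromEdgeSet B).Walk u v,
      (fromEdgeSet (B \ {s(x, y)})).Reachable (f u) (f v) := by
    intro u v p
    induction p with
    | nil => exact Reachable.refl _
    | @cons a b c hab p ih =>
      refine Reachable.trans ?_ ih
      rw [fromEdgeSet_adj] at hab
      by_cases ha : a = x
      · subst ha
        have := hx _ hab.1 (by simp)
        have hb : b = y := by
          simp at this
          grind
        have hba : b ≠ a := hab.2.symm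
        simp [f, hb]
      · by_cases hb : b = x
        · subst hb
          have := hx _ hab.1 (by simp)
          rw [Sym2.eq_swap] at this
          have : a = y := by
            simp at this
            grind
          simp [f, this]
        · simp only [f, if_neg ha, if_neg hb]
          apply Adj.reachable
          rw [fromEdgeSet_adj]
          refine ⟨⟨hab.1, ?_⟩, hab.2⟩
          intro h
          have : x ∈ s(a, b) := by rw [Set.mem_singleton_iff.1 h]; simp
          rw [Sym2.mem_iff] at this
          tauto
  have := key u v p
  simpa [f, hu, hv] using this

lemma hull_eq_iff {T : SimpleGraph V} (hT : T.IsTree) {B D : Finset (Sym2 V)}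
    (hD : (↑D : Set (Sym2 V)) ⊆ T.edgeSet) (hB : (↑B : Set (Sym2 V)) ⊆ T.edgeSet)
    (hne : D.Nonempty) :
    hullS T ↑D = ↑B ↔ (IsSubtreeSet T ↑B ∧ leafEdges (↑B : Set (Sym2 V)) ⊆ ↑D ∧ D ⊆ B) := by
  constructor
  · intro h
    have hDB : (↑D : Set (Sym2 V)) ⊆ ↑B := h ▸ sub_hull hT hD
    have hc : Cn (↑B : Set (Sym2 V)) ↑D := (hull_sub_iff hT hB).1 h.le
    refine ⟨?_, ?_, by exact_mod_cast hDB⟩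
    · obtain ⟨e0, he0⟩ := hne
      obtain ⟨u0, hu0⟩ : ∃ u, u ∈ e0 := by
        induction e0 with | h x y
        exact ⟨x, by simp⟩
      apply cn_subtree ⟨e0, hDB he0⟩ hB
      have key : ∀ e ∈ (↑B : Set (Sym2 V)), ∀ a ∈ e, (fromEdgeSet (↑B : Set (Sym2 V))).Reachable u0 a := by
        intro e he a ha
        have he' := he
        rw [← h] at he'
        obtain ⟨_, e1, he1, u, hu, e2, he2, v, hv, hr⟩ := he'
        obtain ⟨p⟩ := hc e1 he1 u hu e2 he2 v hv
        have : e ∈ p.edges := by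
          by_contra hn
          apply hr
          refine ⟨p.transfer _ ?_⟩
          intro f hf
          have := p.edges_subset_edgeSet hf
          rw [edgeSet_fromEdgeSet] at this ⊢
          refine ⟨⟨hB this.1, ?_⟩, this.2⟩
          rintro rfl
          exact hn hf
        have ha' : a ∈ p.support := by
          obtain ⟨b, rfl⟩ := ha
          exact p.fst_mem_support_of_mem_edges this
        classical
        exact (hc e0 he0 u0 hu0 e1 he1 u hu).trans ⟨p.takeUntil a ha'⟩
      intro e1 he1 u hu e2 he2 v hv
      exact (key e1 he1 u hu).symm.trans (key e2 he2 v hv)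
    · rintro e ⟨he, x, hxe, hx⟩
      by_contra hn
      obtain ⟨y, rfl⟩ := hxe
      have hxD : ∀ e1 ∈ (↑D : Set (Sym2 V)), ∀ u ∈ e1, u ≠ x := by
        rintro e1 he1 u hu rfl
        exact hn (hx e1 (hDB he1) hu ▸ he1)
      have : Cn ((↑B : Set (Sym2 V)) \ {s(x, y)}) ↑D := by
        intro e1 he1 u hu e2 he2 v hv
        exact retract hx (hxD e1 he1 u hu) (hxD e2 he2 v hv) (hc e1 he1 u hu e2 he2 v hv)
      rw [← hull_sub_iff hT (fun e he => hB he.1), h] at this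
      exact (this he).2 rfl
  · rintro ⟨hS, hL, hDB⟩
    apply subset_antisymm
    · rw [hull_sub_iff hT hB]
      intro e1 he1 u hu e2 he2 v hv
      exact subtree_cn hS e1 (hDB he1) u hu e2 (hDB he2) v hv
    · intro e
      induction e with | h x y
      intro he
      obtain ⟨z, hz, g, hg, hzg, hu⟩ := exists_leaf hT _ B rfl hB x y he
      have hsw : s(y, x) = s(x, y) := Sym2.eq_swap
      obtain ⟨z', hz', g', hg', hzg', hu'⟩ := exists_leaf hT _ B rfl hB y x (by rw [hsw]; exact he)
      rw [hsw] at hz'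
      have hmono : fromEdgeSet ((↑B : Set (Sym2 V)) \ {s(x, y)}) ≤
        fromEdgeSet (T.edgeSet \ {s(x, y)}) := fromEdgeSet_mono (Set.sdiff_subset_sdiff_left hB)
      refine ⟨hB he, g, hL ⟨hg, z, hzg, hu⟩, z, hzg, g', hL ⟨hg', z', hzg', hu'⟩, z', hzg', ?_⟩
      intro hr
      exact bridge_sep hT (hB he) Set.sdiff_subset (by simp)
        (((hz.mono hmono).trans hr).trans (hz'.mono hmono).symm)

lemma leaf_nonempty {T : SimpleGraph V} (hT : T.IsTree) {B : Finset (Sym2 V)}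
    (hB : (↑B : Set (Sym2 V)) ⊆ T.edgeSet) (hne : B.Nonempty) :
    (leafEdges (↑B : Set (Sym2 V))).Nonempty := by
  obtain ⟨e, he⟩ := hne
  induction e with | h x y
  obtain ⟨z, hz, g, hg, hzg, hu⟩ := exists_leaf hT _ B rfl hB x y he
  exact ⟨g, hg, z, hzg, hu⟩

open Classical in
/-- Edges of `A` inside a component. -/
noncomputable def compEdges (A : Finset (Sym2 V))
    (c : (fromEdgeSet (↑A : Set (Sym2 V))).ConnectedComponent) : Finset (Sym2 V) :=
  A.filter (fun e => ∀ v ∈ e, (fromEdgeSet (↑A : Set (Sym2 V))).connectedComponentMk v = c)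

lemma mem_compEdges {A : Finset (Sym2 V)}
    {c : (fromEdgeSet (↑A : Set (Sym2 V))).ConnectedComponent} {e : Sym2 V} :
    e ∈ compEdges A c ↔
      e ∈ A ∧ ∀ v ∈ e, (fromEdgeSet (↑A : Set (Sym2 V))).connectedComponentMk v = c := by
  classical
  simp [compEdges]

lemma forest_acyclic {T : SimpleGraph V} (hT : T.IsTree) {A : Finset (Sym2 V)}
    (hA : (↑A : Set (Sym2 V)) ⊆ T.edgeSet) : (fromEdgeSet (↑A : Set (Sym2 V))).IsAcyclic := by
  refine hT.isAcyclic.anti ?_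
  intro a b hab
  rw [fromEdgeSet_adj] at hab
  exact hA hab.1

lemma compEdges_card [Fintype V] {T : SimpleGraph V} (hT : T.IsTree) {A : Finset (Sym2 V)}
    (hA : (↑A : Set (Sym2 V)) ⊆ T.edgeSet)
    (c : (fromEdgeSet (↑A : Set (Sym2 V))).ConnectedComponent) :
    (compEdges A c).card + 1 = c.supp.ncard := by
  classical
  have ht : c.toSimpleGraph.IsTree := (forest_acyclic hT hA).isTree_connectedComponent c
  have h1 := ht.card_edgeFinset
  have h2 : Fintype.card c = c.supp.ncard := by
    rw [← Nat.card_eq_fintype_card]; rfl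
  rw [← h2, ← h1]
  congr 1
  symm
  apply Finset.card_bij (fun e _ => Sym2.map Subtype.val e)
  · intro e he
    induction e with | h x y
    rw [mem_edgeFinset, mem_edgeSet] at he
    have he' : (fromEdgeSet (↑A : Set (Sym2 V))).Adj x.1 y.1 := he
    rw [fromEdgeSet_adj] at he'
    simp only [mem_compEdges, Sym2.map_mk]
    refine ⟨he'.1, ?_⟩
    intro v hv
    rw [Sym2.mem_iff] at hv
    rcases hv with rfl | rfl
    · exact x.2
    · exact y.2
  · intro a _ b _ h
    exact Sym2.map.injective Subtype.val_injective h
  · intro e he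
    induction e with | h x y
    simp only [mem_compEdges] at he
    refine ⟨s(⟨x, he.2 x (by simp)⟩, ⟨y, he.2 y (by simp)⟩), ?_, by simp⟩
    rw [mem_edgeFinset, mem_edgeSet]
    show (fromEdgeSet (↑A : Set (Sym2 V))).Adj x y
    rw [fromEdgeSet_adj]
    exact ⟨he.1, (T.mem_edgeSet.1 (hA he.1)).ne⟩

lemma compEdges_disj (A : Finset (Sym2 V))
    {c c' : (fromEdgeSet (↑A : Set (Sym2 V))).ConnectedComponent} (h : c ≠ c')
    {e : Sym2 V} (h1 : e ∈ compEdges A c) (h2 : e ∈ compEdges A c') : False := by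
  simp only [mem_compEdges] at h1 h2
  induction e with | h x y
  exact h ((h1.2 x (by simp)).symm.trans (h2.2 x (by simp)))

open Classical in
lemma comps_univ [Fintype V] (A : Finset (Sym2 V)) :
    ((Finset.univ : Finset V).image
    (fun v => (SimpleGraph.fromEdgeSet (↑A : Set (Sym2 V))).connectedComponentMk v)) =
    Finset.univ := by
  ext c
  simp only [mem_image, mem_univ, true_and, iff_true]
  exact c.exists_rep

open Classical in
lemma type_map_sum [Fintype V] {M : Type*} [AddCommMonoid M] (A : Finset (Sym2 V)) (f : ℕ → M) :
    ((edgeSetType A).map f).sum =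
      ∑ c : (fromEdgeSet (↑A : Set (Sym2 V))).ConnectedComponent, f c.supp.ncard := by
  unfold edgeSetType
  rw [comps_univ, Multiset.map_map]
  rfl

open Classical in
lemma type_card [Fintype V] {T : SimpleGraph V} (hT : T.IsTree) {A : Finset (Sym2 V)}
    (hA : (↑A : Set (Sym2 V)) ⊆ T.edgeSet) :
    A.card + (edgeSetType A).card = Fintype.card V ∧ (edgeSetType A).sum = Fintype.card V := by
  have hs : (edgeSetType A).sum = Fintype.card V := by
    have := type_map_sum A id
    rw [Multiset.map_id] at this
    rw [this, ← Finset.card_univ, Finset.card_eq_sum_card_fiberwise (t := Finset.univ)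
      (f := fun v => (fromEdgeSet (↑A : Set (Sym2 V))).connectedComponentMk v) (by simp)]
    apply Finset.sum_congr rfl
    intro c _
    rw [id, ← Set.ncard_coe_finset]
    congr 1
    ext v
    simp
  refine ⟨?_, hs⟩
  have h1 : A.card = ∑ c : (fromEdgeSet (↑A : Set (Sym2 V))).ConnectedComponent,
      (compEdges A c).card := by
    rw [← Finset.card_biUnion]
    · congr 1
      ext e
      simp only [mem_biUnion, mem_univ, true_and]
      constructor
      · induction e with | h x y
        intro he
        refine ⟨(fromEdgeSet (↑A : Set (Sym2 V))).connectedComponentMk x, ?_⟩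
        simp only [mem_compEdges]
        refine ⟨he, ?_⟩
        intro v hv
        rw [Sym2.mem_iff] at hv
        rcases hv with rfl | rfl
        · rfl
        · rw [ConnectedComponent.eq]
          apply Adj.reachable
          rw [adj_comm, fromEdgeSet_adj]
          exact ⟨he, (T.mem_edgeSet.1 (hA he)).ne⟩
      · rintro ⟨c, hc⟩
        exact (mem_compEdges.1 hc).1
    · intro c _ c' _ h
      rw [Function.onFun, Finset.disjoint_left]
      intro e h1 h2
      exact compEdges_disj A h h1 h2
  have h2 : (edgeSetType A).card = ∑ c : (fromEdgeSet (↑A : Set (Sym2 V))).ConnectedComponent, 1 := by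
    have := type_map_sum A (fun _ => 1)
    rw [← this]; simp
  rw [h1, h2, ← Finset.sum_add_distrib, ← hs]
  have := type_map_sum A id
  rw [Multiset.map_id] at this
  rw [this]
  exact Finset.sum_congr rfl fun c _ => compEdges_card hT hA c

lemma type_pos [Fintype V] (A : Finset (Sym2 V)) {m : ℕ} (hm : m ∈ edgeSetType A) : 0 < m := by
  classical
  unfold edgeSetType at hm
  rw [Multiset.mem_map] at hm
  obtain ⟨c, _, rfl⟩ := hm
  rw [Set.ncard_pos]
  exact c.nonempty_supp

open Classical in
lemma type_choose [Fintype V] {T : SimpleGraph V} (hT : T.IsTree) {A : Finset (Sym2 V)}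
    (hA : (↑A : Set (Sym2 V)) ⊆ T.edgeSet) {d : ℕ} (hd : 1 ≤ d) :
    ((edgeSetType A).map (fun m => ((m - 1).choose d : ℤ))).sum =
      ((T.edgeFinset.powersetCard d).filter
        (fun D : Finset (Sym2 V) => hullS T (↑D : Set (Sym2 V)) ⊆ ↑A)).card := by
  rw [type_map_sum]
  have h1 : ∀ c : (fromEdgeSet (↑A : Set (Sym2 V))).ConnectedComponent,
      ((c.supp.ncard - 1).choose d : ℤ) = (((compEdges A c).powersetCard d).card : ℤ) := by
    intro c
    rw [card_powersetCard, ← compEdges_card hT hA c]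
    simp
  rw [Finset.sum_congr rfl (fun c _ => h1 c), ← Nat.cast_sum, ← Finset.card_biUnion]
  · congr 2
    ext D
    simp only [mem_biUnion, mem_univ, true_and, mem_filter, mem_powersetCard]
    rw [hull_sub_iff hT hA]
    constructor
    · rintro ⟨c, hc, hcard⟩
      refine ⟨⟨?_, hcard⟩, ?_⟩
      · intro e he
        rw [mem_edgeFinset]
        exact hA (mem_compEdges.1 (hc he)).1
      · intro e1 he1 u hu e2 he2 v hv
        have a1 := (mem_compEdges.1 (hc he1)).2 u hu
        have a2 := (mem_compEdges.1 (hc he2)).2 v hv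
        exact ConnectedComponent.eq.1 (a1.trans a2.symm)
    · rintro ⟨⟨hD, hcard⟩, hc⟩
      have hD' : (↑D : Set (Sym2 V)) ⊆ T.edgeSet := fun e he => mem_edgeFinset.1 (hD he)
      have hDA : (↑D : Set (Sym2 V)) ⊆ ↑A :=
        (sub_hull hT hD').trans ((hull_sub_iff hT hA).2 hc)
      obtain ⟨e0, he0⟩ : D.Nonempty := by rw [← Finset.card_pos]; omega
      obtain ⟨u0, hu0⟩ : ∃ u, u ∈ e0 := by
        induction e0 with | h x y
        exact ⟨x, by simp⟩
      refine ⟨(fromEdgeSet (↑A : Set (Sym2 V))).connectedComponentMk u0, ?_, hcard⟩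
      intro e he
      refine mem_compEdges.2 ⟨hDA he, ?_⟩
      intro v hv
      exact ConnectedComponent.eq.2 (hc e he v hv e0 he0 u0 hu0)
  · intro c _ c' _ h
    rw [Function.onFun, Finset.disjoint_left]
    intro D h1 h2
    rw [mem_powersetCard] at h1 h2
    obtain ⟨e0, he0⟩ : D.Nonempty := by rw [← Finset.card_pos]; omega
    exact compEdges_disj A h (h1.1 he0) (h2.1 he0)

lemma card_supersets {α : Type*} [DecidableEq α] {E S : Finset α} (h : S ⊆ E) (i : ℕ) :
    ((E.powersetCard i).filter (fun B => S ⊆ B)).card =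
      if S.card ≤ i then (E.card - S.card).choose (i - S.card) else 0 := by
  split_ifs with hi
  · rw [← card_sdiff_of_subset h, ← card_powersetCard]
    apply Finset.card_bij' (fun B _ => B \ S) (fun C _ => C ∪ S)
    · intro B hB
      simp only [mem_filter, mem_powersetCard] at hB ⊢
      refine ⟨sdiff_subset_sdiff hB.1.1 le_rfl, ?_⟩
      rw [card_sdiff_of_subset hB.2, hB.1.2]
    · intro C hC
      simp only [mem_filter, mem_powersetCard] at hC ⊢
      refine ⟨⟨union_subset (hC.1.trans sdiff_subset) h, ?_⟩, subset_union_right⟩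
      rw [card_union_of_disjoint (disjoint_of_subset_left hC.1 sdiff_disjoint), hC.2]
      omega
    · intro B hB
      simp only [mem_filter, mem_powersetCard] at hB
      exact sdiff_union_of_subset hB.2
    · intro C hC
      simp only [mem_powersetCard] at hC
      rw [union_sdiff_right]
      exact sdiff_eq_self_of_disjoint (disjoint_of_subset_left hC.1 sdiff_disjoint)
  · rw [Finset.card_eq_zero, Finset.filter_eq_empty_iff]
    intro B hB hS
    rw [mem_powersetCard] at hB
    have := card_le_card hS
    omega

lemma alt_sum {α : Type*} [DecidableEq α] {E B : Finset α} (H : Finset α) (hB : B ⊆ E) :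
    ∑ A ∈ E.powerset, (if A ⊆ B ∧ H ⊆ A then (-1 : ℤ) ^ A.card else 0) =
      if H = B then (-1 : ℤ) ^ B.card else 0 := by
  rw [← Finset.sum_filter]
  by_cases h : H ⊆ B
  · have : ∑ A ∈ E.powerset.filter (fun A => A ⊆ B ∧ H ⊆ A), (-1 : ℤ) ^ A.card =
        ∑ C ∈ (B \ H).powerset, (-1 : ℤ) ^ C.card * (-1) ^ H.card := by
      apply Finset.sum_bij' (fun A _ => A \ H) (fun C _ => C ∪ H)
      · intro A hA
        simp only [mem_filter, mem_powerset] at hA ⊢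
        exact sdiff_subset_sdiff hA.2.1 le_rfl
      · intro C hC
        simp only [mem_filter, mem_powerset] at hC ⊢
        have : C ∪ H ⊆ B := union_subset (hC.trans sdiff_subset) h
        exact ⟨this.trans hB, this, subset_union_right⟩
      · intro A hA
        simp only [mem_filter, mem_powerset] at hA
        exact sdiff_union_of_subset hA.2.2
      · intro C hC
        simp only [mem_powerset] at hC
        rw [union_sdiff_right]
        exact sdiff_eq_self_of_disjoint (disjoint_of_subset_left hC sdiff_disjoint)
      · intro A hA
        simp only [mem_filter, mem_powerset] at hA
        rw [← pow_add, card_sdiff_of_subset hA.2.2,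
          Nat.sub_add_cancel (card_le_card hA.2.2)]
    rw [this, ← Finset.sum_mul, sum_powerset_neg_one_pow_card]
    by_cases hh : H = B
    · simp [hh]
    · have : B \ H ≠ ∅ := by
        intro h0
        exact hh (subset_antisymm h (sdiff_eq_empty_iff_subset.1 h0))
      simp [hh, this]
  · rw [if_neg (fun hh => h hh.le)]
    apply Finset.sum_eq_zero
    intro A hA
    simp only [mem_filter] at hA
    exact absurd (hA.2.2.trans hA.2.1) h

lemma binom_sum {i j l : ℕ} (hl : 1 ≤ l) (hji : j ≤ i) :
    ∑ d ∈ Finset.Icc 1 j, (-1 : ℤ) ^ d * ((i - d).choose (j - d) : ℤ) *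
      (((if l ≤ d then (i - l).choose (d - l) else 0 : ℕ)) : ℤ) =
      if l = j then (-1 : ℤ) ^ j else 0 := by
  by_cases hlj : l ≤ j
  · have h1 : ∑ d ∈ Finset.Icc 1 j, (-1 : ℤ) ^ d * ((i - d).choose (j - d) : ℤ) *
        (((if l ≤ d then (i - l).choose (d - l) else 0 : ℕ)) : ℤ) =
        ∑ t ∈ Finset.range (j - l + 1), (-1 : ℤ) ^ l * ((i - l).choose (j - l) : ℤ) *
          ((-1 : ℤ) ^ t * ((j - l).choose t : ℤ)) := by
      symm
      apply Finset.sum_of_injOn (fun t => l + t)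
      · intro a _ b _ h
        simpa using h
      · intro t ht
        simp only [coe_range, Set.mem_Iio, coe_Icc, Set.mem_Icc] at ht ⊢
        omega
      · intro d hd hd'
        rw [if_neg]
        · simp
        · intro hld
          apply hd'
          rw [mem_Icc] at hd
          refine ⟨d - l, ?_, ?_⟩
          · simp; omega
          · simp; omega
      · intro t ht
        rw [mem_range] at ht
        rw [if_pos (by omega), pow_add]
        have := Nat.choose_mul (n := i - l) (k := j - l) (s := t) (by omega)
        have e1 : i - (l + t) = i - l - t := by omega
        have e2 : j - (l + t) = j - l - t := by omega
        have e3 : l + t - l = t := by omega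
        rw [e1, e2, e3]
        have h' : ((i - l).choose (j - l) : ℤ) * ((j - l).choose t : ℤ) =
          ((i - l).choose t : ℤ) * ((i - l - t).choose (j - l - t) : ℤ) := by exact_mod_cast this
        linear_combination (-1 : ℤ) ^ l * (-1) ^ t * h'
    rw [h1, ← Finset.mul_sum, Int.alternating_sum_range_choose]
    by_cases h : l = j
    · subst h; simp
    · have : j - l ≠ 0 := by omega
      simp [h, this]
  · rw [if_neg (by omega)]
    apply Finset.sum_eq_zero
    intro d hd
    rw [mem_Icc] at hd
    rw [if_neg (by omega)]
    simp

open Classical in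
lemma rhs_eq [Fintype V] {T : SimpleGraph V} (hT : T.IsTree) (i j : ℕ) :
    ∑ p : (Fintype.card V).Partition, phi (Fintype.card V) p.parts i j * cCoeff T p.parts =
      ∑ A ∈ T.edgeFinset.powerset,
        (-1 : ℤ) ^ A.card * phi (Fintype.card V) (edgeSetType A) i j := by
  unfold cCoeff
  simp only [Finset.mul_sum]
  rw [Finset.sum_comm]
  have hsub : T.edgeFinset.powerset ⊆ (Finset.univ : Finset (Sym2 V)).powerset :=
    powerset_mono.2 (subset_univ _)
  rw [← Finset.sum_subset hsub]
  · apply Finset.sum_congr rfl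
    intro A hA
    rw [mem_powerset] at hA
    have hA' : (↑A : Set (Sym2 V)) ⊆ T.edgeSet := fun e he => mem_edgeFinset.1 (hA he)
    let p0 : (Fintype.card V).Partition :=
      ⟨edgeSetType A, fun hm => type_pos A hm, (type_card hT hA').2⟩
    rw [Finset.sum_eq_single p0]
    · rw [if_pos ⟨hA', rfl⟩, mul_comm]
    · intro p _ hp
      rw [if_neg, mul_zero]
      rintro ⟨_, h⟩
      exact hp (Nat.Partition.ext h.symm)
    · simp
  · intro A _ hA
    apply Finset.sum_eq_zero
    intro p _
    rw [if_neg, mul_zero]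
    rintro ⟨h, _⟩
    apply hA
    rw [mem_powerset]
    exact fun e he => mem_edgeFinset.2 (h he)

open Classical in
lemma phi_type [Fintype V] {T : SimpleGraph V} (hT : T.IsTree) (i j : ℕ) {A : Finset (Sym2 V)}
    (hA : A ⊆ T.edgeFinset) :
    phi (Fintype.card V) (edgeSetType A) i j = (-1 : ℤ) ^ (i + j) *
      (((T.edgeFinset.powersetCard i).filter (fun B => A ⊆ B)).card : ℤ) *
      ∑ d ∈ Finset.Icc 1 j, (-1 : ℤ) ^ d * ((i - d).choose (j - d) : ℤ) *
        (((T.edgeFinset.powersetCard d).filter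
          (fun D : Finset (Sym2 V) => hullS T (↑D : Set (Sym2 V)) ⊆ ↑A)).card : ℤ) := by
  have hA' : (↑A : Set (Sym2 V)) ⊆ T.edgeSet := fun e he => mem_edgeFinset.1 (hA he)
  unfold phi
  congr 1
  · congr 1
    rw [card_supersets hA]
    have h1 := (type_card hT hA').1
    have h2 := hT.card_edgeFinset
    unfold chooseInt
    by_cases h : A.card ≤ i
    · rw [if_pos (by omega), if_pos h]
      congr 2 <;> omega
    · rw [if_neg (by omega), if_neg h]
      simp
  · apply Finset.sum_congr rfl
    intro d hd
    rw [mem_Icc] at hd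
    rw [type_choose hT hA' hd.1]

open Classical in
lemma per_B [Fintype V] {T : SimpleGraph V} (hT : T.IsTree) {i j : ℕ} (hj : 1 ≤ j) (hji : j ≤ i)
    {B : Finset (Sym2 V)} (hB : B ⊆ T.edgeFinset) (hi : B.card = i) :
    ∑ d ∈ Finset.Icc 1 j, (-1 : ℤ) ^ d * ((i - d).choose (j - d) : ℤ) *
        (((T.edgeFinset.powersetCard d).filter
          (fun D : Finset (Sym2 V) => hullS T (↑D : Set (Sym2 V)) = ↑B)).card : ℤ) =
      if IsSubtreeSet T (↑B : Set (Sym2 V)) ∧ (leafEdges (↑B : Set (Sym2 V))).ncard = j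
        then (-1 : ℤ) ^ j else 0 := by
  have hB' : (↑B : Set (Sym2 V)) ⊆ T.edgeSet := fun e he => mem_edgeFinset.1 (hB he)
  have hc : ∀ d ∈ Finset.Icc 1 j, ∀ D ∈ T.edgeFinset.powersetCard d,
      (hullS T ↑D = ↑B ↔
        (IsSubtreeSet T ↑B ∧ leafEdges (↑B : Set (Sym2 V)) ⊆ ↑D ∧ D ⊆ B)) := by
    intro d hd D hD
    rw [mem_Icc] at hd
    rw [mem_powersetCard] at hD
    apply hull_eq_iff hT (fun e he => mem_edgeFinset.1 (hD.1 he)) hB'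
    rw [← Finset.card_pos]; omega
  by_cases hS : IsSubtreeSet T (↑B : Set (Sym2 V))
  · have hBne : B.Nonempty := by rw [← Finset.card_pos]; omega
    let L : Finset (Sym2 V) := B.filter (fun e => e ∈ leafEdges (↑B : Set (Sym2 V)))
    have hL : (↑L : Set (Sym2 V)) = leafEdges (↑B : Set (Sym2 V)) := by
      ext e
      simp only [L, coe_filter, Set.mem_ofPred_eq]
      exact ⟨fun h => h.2, fun h => ⟨h.1, h⟩⟩
    have hLB : L ⊆ B := filter_subset _ _
    have hl1 : 1 ≤ L.card := by
      rw [Nat.one_le_iff_ne_zero, ← Nat.pos_iff_ne_zero, Finset.card_pos, ← Finset.coe_nonempty, hL]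
      exact leaf_nonempty hT hB' hBne
    have hn : (leafEdges (↑B : Set (Sym2 V))).ncard = L.card := by
      rw [← hL, Set.ncard_coe_finset]
    simp only [hS, true_and, hn]
    rw [← binom_sum hl1 hji]
    apply Finset.sum_congr rfl
    intro d hd
    congr 2
    rw [← hi, ← card_supersets hLB]
    congr 1
    ext D
    rw [mem_filter, mem_filter]
    constructor
    · rintro ⟨h1, h2⟩
      rw [hc d hd D h1, ← hL] at h2
      exact ⟨mem_powersetCard.2 ⟨h2.2.2, (mem_powersetCard.1 h1).2⟩, by exact_mod_cast h2.2.1⟩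
    · rintro ⟨h1, h2⟩
      rw [mem_powersetCard] at h1
      have h3 : D ∈ T.edgeFinset.powersetCard d := mem_powersetCard.2 ⟨h1.1.trans hB, h1.2⟩
      refine ⟨h3, ?_⟩
      rw [hc d hd D h3, ← hL]
      exact ⟨hS, by exact_mod_cast h2, h1.1⟩
  · rw [if_neg (fun h => hS h.1)]
    apply Finset.sum_eq_zero
    intro d hd
    rw [Finset.filter_eq_empty_iff.2]
    · simp
    · intro D hD h
      exact hS ((hc d hd D hD).1 h).1

open Classical in
lemma exchange [Fintype V] (T : SimpleGraph V) (i j : ℕ) :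
    ∑ A ∈ T.edgeFinset.powerset,
        (-1 : ℤ) ^ A.card * ((-1 : ℤ) ^ (i + j) *
      (((T.edgeFinset.powersetCard i).filter (fun B => A ⊆ B)).card : ℤ) *
      ∑ d ∈ Finset.Icc 1 j, (-1 : ℤ) ^ d * ((i - d).choose (j - d) : ℤ) *
        (((T.edgeFinset.powersetCard d).filter
          (fun D : Finset (Sym2 V) => hullS T (↑D : Set (Sym2 V)) ⊆ ↑A)).card : ℤ)) =
    ∑ B ∈ T.edgeFinset.powersetCard i, (-1 : ℤ) ^ j *
      ∑ d ∈ Finset.Icc 1 j, (-1 : ℤ) ^ d * ((i - d).choose (j - d) : ℤ) *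
        (((T.edgeFinset.powersetCard d).filter
          (fun D : Finset (Sym2 V) => hullS T (↑D : Set (Sym2 V)) = ↑B)).card : ℤ) := by
  have key : ∀ B ∈ T.edgeFinset.powersetCard i, ∀ d,
      (-1 : ℤ) ^ i * (((T.edgeFinset.powersetCard d).filter
          (fun D : Finset (Sym2 V) => hullS T (↑D : Set (Sym2 V)) = ↑B)).card : ℤ) =
      ∑ A ∈ T.edgeFinset.powerset, (-1 : ℤ) ^ A.card * ((if A ⊆ B then 1 else 0) *
        (((T.edgeFinset.powersetCard d).filter
          (fun D : Finset (Sym2 V) => hullS T (↑D : Set (Sym2 V)) ⊆ ↑A)).card : ℤ)) := by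
    intro B hB d
    rw [mem_powersetCard] at hB
    simp only [Finset.card_filter, Nat.cast_sum, Finset.mul_sum]
    rw [Finset.sum_comm]
    apply Finset.sum_congr rfl
    intro D _
    have hH : ((hullS T (↑D : Set (Sym2 V))).toFinset : Set (Sym2 V)) = hullS T ↑D := by simp
    have := alt_sum (hullS T (↑D : Set (Sym2 V))).toFinset hB.1
    have e1 : (hullS T (↑D : Set (Sym2 V))).toFinset = B ↔ hullS T (↑D : Set (Sym2 V)) = ↑B := by
      rw [← Finset.coe_inj, hH]
    have e2 : ∀ A : Finset (Sym2 V), (hullS T (↑D : Set (Sym2 V))).toFinset ⊆ A ↔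
        hullS T (↑D : Set (Sym2 V)) ⊆ ↑A := by
      intro A
      rw [← Finset.coe_subset, hH]
    simp only [e1, e2, hB.2] at this
    trans (if hullS T (↑D : Set (Sym2 V)) = ↑B then (-1 : ℤ) ^ i else 0)
    · split_ifs <;> simp
    · rw [← this]
      apply Finset.sum_congr rfl
      intro A _
      by_cases h1 : A ⊆ B <;> by_cases h2 : hullS T (↑D : Set (Sym2 V)) ⊆ ↑A <;> simp [h1, h2]
  have hsq : (-1 : ℤ) ^ i * (-1) ^ i = 1 := by rw [← mul_pow]; simp
  have h2 : ∀ B ∈ T.edgeFinset.powersetCard i, (-1 : ℤ) ^ j *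
      ∑ d ∈ Finset.Icc 1 j, (-1 : ℤ) ^ d * ((i - d).choose (j - d) : ℤ) *
        (((T.edgeFinset.powersetCard d).filter
          (fun D : Finset (Sym2 V) => hullS T (↑D : Set (Sym2 V)) = ↑B)).card : ℤ) =
      ∑ A ∈ T.edgeFinset.powerset, (-1 : ℤ) ^ A.card * ((-1 : ℤ) ^ (i + j) *
        (if A ⊆ B then 1 else 0) * ∑ d ∈ Finset.Icc 1 j, (-1 : ℤ) ^ d *
          ((i - d).choose (j - d) : ℤ) *
        (((T.edgeFinset.powersetCard d).filter
          (fun D : Finset (Sym2 V) => hullS T (↑D : Set (Sym2 V)) ⊆ ↑A)).card : ℤ)) := by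
    intro B hB
    simp only [Finset.mul_sum]
    rw [Finset.sum_comm]
    apply Finset.sum_congr rfl
    intro d _
    have := key B hB d
    trans (-1 : ℤ) ^ (i + j) * ((-1 : ℤ) ^ d * ((i - d).choose (j - d) : ℤ)) *
      ((-1 : ℤ) ^ i * (((T.edgeFinset.powersetCard d).filter
          (fun D : Finset (Sym2 V) => hullS T (↑D : Set (Sym2 V)) = ↑B)).card : ℤ))
    · rw [pow_add]
      generalize (((T.edgeFinset.powersetCard d).filter
          (fun D : Finset (Sym2 V) => hullS T (↑D : Set (Sym2 V)) = ↑B)).card : ℤ) = X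
      linear_combination (-(-1 : ℤ) ^ j * (-1) ^ d * ((i - d).choose (j - d) : ℤ) * X) * hsq
    · rw [this, Finset.mul_sum]
      apply Finset.sum_congr rfl
      intro A _
      ring
  rw [Finset.sum_congr rfl h2, Finset.sum_comm]
  apply Finset.sum_congr rfl
  intro A _
  rw [Finset.card_filter, Nat.cast_sum, ← Finset.mul_sum, ← Finset.sum_mul, ← Finset.mul_sum]
  simp

open Classical in
/-- Let `T` be a tree with `n` vertices and `1 ≤ j ≤ i ≤ n−1`.  Then the number of subtrees `S`
of `T` with `i` edges and `j` leaf edges equals `Σ_{λ ⊢ n} φ(λ,i,j)·c_λ(T)`. -/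
theorem stmt_9 [Fintype V] (T : SimpleGraph V) (hT : T.IsTree)
    (i j : ℕ) (hj : 1 ≤ j) (hji : j ≤ i) (hi : i ≤ Fintype.card V - 1) :
    (((Finset.univ : Finset (Sym2 V)).powerset.filter
        (fun (S : Finset (Sym2 V)) => IsSubtreeSet T (↑S : Set (Sym2 V)) ∧
          S.card = i ∧ (leafEdges (↑S : Set (Sym2 V))).ncard = j)).card : ℤ) =
      ∑ p : (Fintype.card V).Partition,
        phi (Fintype.card V) p.parts i j * cCoeff T p.parts := by
  rw [rhs_eq hT, Finset.sum_congr rfl (fun A hA => by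
    rw [phi_type hT i j (mem_powerset.1 hA)]), exchange]
  have h : ∀ B ∈ T.edgeFinset.powersetCard i, (-1 : ℤ) ^ j *
      ∑ d ∈ Finset.Icc 1 j, (-1 : ℤ) ^ d * ((i - d).choose (j - d) : ℤ) *
        (((T.edgeFinset.powersetCard d).filter
          (fun D : Finset (Sym2 V) => hullS T (↑D : Set (Sym2 V)) = ↑B)).card : ℤ) =
      if IsSubtreeSet T (↑B : Set (Sym2 V)) ∧ (leafEdges (↑B : Set (Sym2 V))).ncard = j
        then 1 else 0 := by
    intro B hB
    rw [mem_powersetCard] at hB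
    rw [per_B hT hj hji hB.1 hB.2]
    split_ifs
    · rw [← mul_pow]; simp
    · simp
  rw [Finset.sum_congr rfl h, Finset.sum_boole]
  congr 2
  ext S
  simp only [mem_filter, mem_powerset, mem_powersetCard]
  constructor
  · rintro ⟨_, h1, h2, h3⟩
    exact ⟨⟨fun e he => mem_edgeFinset.2 (h1.2.1 he), h2⟩, h1, h3⟩
  · rintro ⟨⟨_, h2⟩, h1, h3⟩
    exact ⟨subset_univ _, h1, h2, h3⟩
end

section
/- Let T and U be trees, each with n vertices, such that N_λ(T) = N_λ(U) for every partition λ of n (equivalently, X_T = X_U). Then for every i ≥ 1, the number of i-edge paths in T equals the number of i-edge paths in U, where an i-edge path is a set P of i edges forming a subtree in which every vertex is incident to at most two edges of P. -/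
open SimpleGraph Finset

variable {V : Type*} {W : Type*}

open Classical in
/-- `pathCount T i` : the number of `i`-edge paths in `T`, where an `i`-edge path is a set `P`
of `i` edges forming a subtree in which every vertex is incident to at most two edges of `P`. -/
noncomputable def pathCount [Fintype V] (T : SimpleGraph V) (i : ℕ) : ℕ :=
  ((Finset.univ : Finset (Sym2 V)).powerset.filter
    (fun (P : Finset (Sym2 V)) => P.card = i ∧ IsSubtreeSet T (↑P : Set (Sym2 V)) ∧
      ∀ v : V, (P.filter (fun e => v ∈ e)).card ≤ 2)).card

section Aux
open Classical

lemma aux_sum_type [Fintype V] (A : Finset (Sym2 V)) (f : ℕ → ℕ) :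
    ((edgeSetType A).map (fun m => m * f m)).sum =
      ∑ v : V, f ((SimpleGraph.fromEdgeSet (↑A : Set (Sym2 V))).connectedComponentMk v).supp.ncard := by
  rw [Finset.sum_comp (fun c : (SimpleGraph.fromEdgeSet (↑A : Set (Sym2 V))).ConnectedComponent =>
    f c.supp.ncard)]
  unfold edgeSetType
  rw [Multiset.map_map]
  change (∑ c ∈ _, _) = _
  refine Finset.sum_congr rfl fun c _ => ?_
  simp only [Function.comp, smul_eq_mul]
  congr 1
  rw [← Set.ncard_coe_finset]
  congr 1
  ext v
  simp

lemma aux_type_sum [Fintype V] (A : Finset (Sym2 V)) : (edgeSetType A).sum = Fintype.card V := by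
  have := aux_sum_type A (fun _ => 1)
  simpa using this

lemma aux_type_pos [Fintype V] (A : Finset (Sym2 V)) : ∀ m ∈ edgeSetType A, 0 < m := by
  intro m hm
  unfold edgeSetType at hm
  rw [Multiset.mem_map] at hm
  obtain ⟨c, _, rfl⟩ := hm
  rw [Set.ncard_pos]
  exact c.nonempty_supp

lemma aux_type_sq [Fintype V] (A : Finset (Sym2 V)) :
    ((edgeSetType A).map (fun m => m * m)).sum =
      ((Finset.univ : Finset (V × V)).filter
        (fun p => (SimpleGraph.fromEdgeSet (↑A : Set (Sym2 V))).Reachable p.1 p.2)).card := by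
  have := aux_sum_type A (fun m => m)
  rw [this, Finset.card_filter, Fintype.sum_prod_type]
  refine Finset.sum_congr rfl fun v _ => ?_
  rw [← Finset.card_filter, ← Set.ncard_coe_finset]
  congr 1
  ext w
  simp [SimpleGraph.ConnectedComponent.mem_supp_iff, SimpleGraph.ConnectedComponent.eq,
    SimpleGraph.reachable_comm]

lemma aux_type_card [Fintype V] (T : SimpleGraph V) (hT : T.IsTree) (A : Finset (Sym2 V))
    (hA : (↑A : Set (Sym2 V)) ⊆ T.edgeSet) :
    A.card + (edgeSetType A).card = Fintype.card V := by
  set G := SimpleGraph.fromEdgeSet (↑A : Set (Sym2 V)) with hG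
  have hle : G ≤ T := by
    intro a b hab
    rw [hG, SimpleGraph.fromEdgeSet_adj] at hab
    exact hA hab.1
  have hac : G.IsAcyclic := hT.isAcyclic.anti hle
  have hadj : ∀ a b, G.Adj a b ↔ s(a, b) ∈ A := by
    intro a b
    rw [hG, SimpleGraph.fromEdgeSet_adj]
    constructor
    · exact fun h => h.1
    · intro h
      exact ⟨h, (show T.Adj a b from hA h).ne⟩
  have hfib : ∀ c : G.ConnectedComponent,
      (A.filter (fun e => G.connectedComponentMk e.out.1 = c)).card + 1 = c.supp.ncard := by
    intro c
    have htree := hac.isTree_connectedComponent c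
    have h1 := htree.card_edgeFinset
    have h2 : Fintype.card c = c.supp.ncard := by
      rw [← Nat.card_eq_fintype_card]; rfl
    rw [← h2, ← h1]
    congr 1
    symm
    refine Finset.card_bij (fun e _ => Sym2.map Subtype.val e) ?_ ?_ ?_
    · intro e he
      induction e with | _ a b =>
      rw [SimpleGraph.mem_edgeFinset, SimpleGraph.mem_edgeSet] at he
      have hab : G.Adj a.1 b.1 := he
      rw [Finset.mem_filter]
      refine ⟨(hadj _ _).1 hab, ?_⟩
      have : (Sym2.map Subtype.val s(a, b)).out.1 ∈ Sym2.map Subtype.val s(a, b) :=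
        Sym2.out_fst_mem _
      rw [Sym2.map_mk, Sym2.mem_iff] at this
      rcases this with h | h
      · rw [Sym2.map_mk, h]; exact a.2
      · rw [Sym2.map_mk, h]; exact b.2
    · intro e _ e' _ h
      exact Sym2.map.injective Subtype.val_injective h
    · intro e he
      rw [Finset.mem_filter] at he
      obtain ⟨heA, hec⟩ := he
      obtain ⟨y, hy⟩ := Sym2.out_fst_mem e
      generalize e.out.1 = x at hec hy
      subst hy
      have hxy : G.Adj x y := (hadj _ _).2 heA
      have hyc : G.connectedComponentMk y = c := by
        rw [← hec, SimpleGraph.ConnectedComponent.eq]; exact hxy.symm.reachable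
      refine ⟨s(⟨x, hec⟩, ⟨y, hyc⟩), ?_, rfl⟩
      rw [SimpleGraph.mem_edgeFinset, SimpleGraph.mem_edgeSet]
      exact hxy
  have h3 : A.card = ∑ c ∈ (Finset.univ : Finset V).image (fun v => G.connectedComponentMk v),
      (A.filter (fun e => G.connectedComponentMk e.out.1 = c)).card :=
    Finset.card_eq_sum_card_fiberwise (fun e _ => by
      simp only [Finset.coe_image, Finset.coe_univ, Set.image_univ]
      exact Set.mem_range_self _)
  have h4 := aux_type_sum A
  unfold edgeSetType at h4 ⊢
  rw [Multiset.card_map, h3, ← h4]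
  change _ + Finset.card (Finset.image (fun v => G.connectedComponentMk v) Finset.univ) =
    ∑ c ∈ Finset.image (fun v => G.connectedComponentMk v) Finset.univ, c.supp.ncard
  rw [Finset.card_eq_sum_ones, ← Finset.sum_add_distrib]
  exact Finset.sum_congr rfl fun c _ => hfib c

/-- The unique path between two vertices of a tree. -/
noncomputable def auxPath (T : SimpleGraph V) (hT : T.IsTree) (u v : V) : T.Walk u v :=
  (hT.existsUnique_path u v).choose

lemma auxPath_isPath (T : SimpleGraph V) (hT : T.IsTree) (u v : V) :
    (auxPath T hT u v).IsPath := (hT.existsUnique_path u v).choose_spec.1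

lemma auxPath_unique (T : SimpleGraph V) (hT : T.IsTree) {u v : V} (p : T.Walk u v)
    (hp : p.IsPath) : p = auxPath T hT u v :=
  (hT.existsUnique_path u v).choose_spec.2 p hp

/-- Edge set of the unique path. -/
noncomputable def auxPE (T : SimpleGraph V) (hT : T.IsTree) (u v : V) : Finset (Sym2 V) :=
  (auxPath T hT u v).edges.toFinset

lemma auxPE_eq (T : SimpleGraph V) (hT : T.IsTree) {u v : V} (p : T.Walk u v)
    (hp : p.IsPath) : auxPE T hT u v = p.edges.toFinset := by
  rw [auxPE, ← auxPath_unique T hT p hp]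

lemma auxPE_subset (T : SimpleGraph V) (hT : T.IsTree) (u v : V) :
    (↑(auxPE T hT u v) : Set (Sym2 V)) ⊆ T.edgeSet := by
  intro e he
  simp only [auxPE, List.coe_toFinset, Set.mem_setOf_eq] at he
  exact SimpleGraph.Walk.edges_subset_edgeSet _ he

lemma aux_reach (T : SimpleGraph V) (hT : T.IsTree) (A : Finset (Sym2 V))
    (hA : (↑A : Set (Sym2 V)) ⊆ T.edgeSet) (u v : V) :
    (SimpleGraph.fromEdgeSet (↑A : Set (Sym2 V))).Reachable u v ↔ auxPE T hT u v ⊆ A := by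
  set G := SimpleGraph.fromEdgeSet (↑A : Set (Sym2 V)) with hG
  have hle : G ≤ T := by
    intro a b hab
    rw [hG, SimpleGraph.fromEdgeSet_adj] at hab
    exact hA hab.1
  constructor
  · intro h
    obtain ⟨p, hp⟩ := h.exists_isPath
    have h1 := auxPE_eq T hT (p.mapLe hle) (hp.mapLe hle)
    rw [h1]
    intro e he
    rw [List.mem_toFinset, SimpleGraph.Walk.edges_mapLe_eq_edges] at he
    have := p.edges_subset_edgeSet he
    rw [hG, SimpleGraph.edgeSet_fromEdgeSet] at this
    exact this.1
  · intro h
    refine ⟨(auxPath T hT u v).transfer G ?_⟩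
    intro e he
    rw [hG, SimpleGraph.edgeSet_fromEdgeSet]
    refine ⟨h (List.mem_toFinset.2 he), ?_⟩
    exact T.not_isDiag_of_mem_edgeSet (SimpleGraph.Walk.edges_subset_edgeSet _ he)

open Polynomial in
lemma aux_binom {α : Type*} (P E : Finset α) (h : P ⊆ E) :
    ∑ A ∈ E.powerset, (if P ⊆ A then (X : ℤ[X]) ^ A.card * (1 - X) ^ (E.card - A.card) else 0)
      = X ^ P.card := by
  rw [← Finset.sum_filter]
  have h1 : E.powerset.filter (fun A => P ⊆ A) = (E \ P).powerset.image (P ∪ ·) := by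
    rw [← Finset.Icc_eq_image_powerset h]
    ext A
    simp [and_comm]
  rw [h1, Finset.sum_image]
  · have h2 := Finset.sum_pow_mul_eq_add_pow (X : ℤ[X]) (1 - X) (E \ P)
    rw [add_sub_cancel, one_pow] at h2
    calc _ = ∑ B ∈ (E \ P).powerset, X ^ P.card * ((X : ℤ[X]) ^ B.card * (1 - X) ^ ((E \ P).card - B.card)) := by
          refine Finset.sum_congr rfl fun B hB => ?_
          rw [Finset.mem_powerset] at hB
          have hd : Disjoint P B := (Finset.disjoint_sdiff).mono_right hB
          rw [Finset.card_union_of_disjoint hd, Finset.card_sdiff_of_subset h, pow_add, mul_assoc,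
            Nat.sub_sub]
      _ = _ := by rw [← Finset.mul_sum, h2, mul_one]
  · intro B hB C hC hBC
    simp only [Finset.coe_powerset, Set.mem_preimage, Set.mem_powerset_iff, Finset.coe_subset] at hB hC
    have hd : Disjoint P B := (Finset.disjoint_sdiff).mono_right hB
    have hd' : Disjoint P C := (Finset.disjoint_sdiff).mono_right hC
    dsimp only at hBC
    rw [← Finset.union_sdiff_cancel_left hd, hBC, Finset.union_sdiff_cancel_left hd']

/-- The multiset of types of all edge subsets. -/
noncomputable def auxTypes [Fintype V] (T : SimpleGraph V) : Multiset (Multiset ℕ) :=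
  T.edgeFinset.powerset.val.map edgeSetType

lemma aux_count [Fintype V] (T : SimpleGraph V) (lam : Multiset ℕ) :
    (auxTypes T).count lam = NCoeff T lam := by
  unfold auxTypes NCoeff
  rw [Multiset.count_map]
  change Finset.card (T.edgeFinset.powerset.filter (fun A => lam = edgeSetType A)) = _
  congr 1
  ext A
  simp only [Finset.mem_filter, Finset.mem_powerset, Finset.subset_univ, true_and]
  rw [← Finset.coe_subset, SimpleGraph.coe_edgeFinset, eq_comm (a := lam)]

open Polynomial in
/-- Weight of a type. -/
noncomputable def auxF (n : ℕ) (lam : Multiset ℕ) : ℤ[X] :=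
  X ^ (n - lam.card) * (1 - X) ^ (lam.card - 1) * (((lam.map (fun m => m * m)).sum : ℕ) : ℤ[X])

open Polynomial in
lemma aux_gen [Fintype V] (T : SimpleGraph V) (hT : T.IsTree) :
    ((auxTypes T).map (auxF (Fintype.card V))).sum =
      ∑ p : V × V, (X : ℤ[X]) ^ (auxPE T hT p.1 p.2).card := by
  have hE := hT.card_edgeFinset
  have hs : ∀ u v, auxPE T hT u v ⊆ T.edgeFinset := by
    intro u v
    rw [← Finset.coe_subset, SimpleGraph.coe_edgeFinset]
    exact auxPE_subset T hT u v
  unfold auxTypes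
  rw [Multiset.map_map]
  change ∑ A ∈ T.edgeFinset.powerset, auxF (Fintype.card V) (edgeSetType A) = _
  calc _ = ∑ A ∈ T.edgeFinset.powerset, ∑ p : V × V, (if auxPE T hT p.1 p.2 ⊆ A then
        (X : ℤ[X]) ^ A.card * (1 - X) ^ (T.edgeFinset.card - A.card) else 0) := by
        refine Finset.sum_congr rfl fun A hA => ?_
        have hA' : (↑A : Set (Sym2 V)) ⊆ T.edgeSet := by
          rw [Finset.mem_powerset, ← Finset.coe_subset, SimpleGraph.coe_edgeFinset] at hA
          exact hA
        have hc := aux_type_card T hT A hA'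
        unfold auxF
        rw [aux_type_sq, ← Finset.sum_filter, Finset.sum_const, nsmul_eq_mul, mul_comm]
        congr 1
        · congr 2
          ext p
          simp only [Finset.mem_filter, Finset.mem_univ, true_and]
          exact aux_reach T hT A hA' _ _
        · congr 2 <;> omega
    _ = _ := by
        rw [Finset.sum_comm]
        refine Finset.sum_congr rfl fun p _ => ?_
        rw [← aux_binom _ _ (hs p.1 p.2)]
        refine Finset.sum_congr rfl fun A _ => ?_
        by_cases h : auxPE T hT p.1 p.2 ⊆ A
        · rw [if_pos h, if_pos h]
        · rw [if_neg h, if_neg h]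

lemma aux_pairs [Fintype V] [Fintype W] (T : SimpleGraph V) (U : SimpleGraph W)
    (hT : T.IsTree) (hU : U.IsTree) (n : ℕ)
    (hVn : Fintype.card V = n) (hWn : Fintype.card W = n)
    (hN : ∀ lam : Multiset ℕ, lam.sum = n → (∀ m ∈ lam, 0 < m) →
      NCoeff T lam = NCoeff U lam) (i : ℕ) :
    ((Finset.univ : Finset (V × V)).filter (fun p => (auxPE T hT p.1 p.2).card = i)).card =
    ((Finset.univ : Finset (W × W)).filter (fun p => (auxPE U hU p.1 p.2).card = i)).card := by
  have key : auxTypes T = auxTypes U := by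
    ext lam
    by_cases h : lam.sum = n ∧ ∀ m ∈ lam, 0 < m
    · rw [aux_count, aux_count, hN lam h.1 h.2]
    · rw [Multiset.count_eq_zero_of_notMem, Multiset.count_eq_zero_of_notMem]
      · intro hm
        obtain ⟨A, _, rfl⟩ := Multiset.mem_map.1 hm
        exact h ⟨(aux_type_sum A).trans hWn, aux_type_pos A⟩
      · intro hm
        obtain ⟨A, _, rfl⟩ := Multiset.mem_map.1 hm
        exact h ⟨(aux_type_sum A).trans hVn, aux_type_pos A⟩
  have h1 := aux_gen T hT
  have h2 := aux_gen U hU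
  rw [hVn, key] at h1
  rw [hWn, h1] at h2
  have h3 := congrArg (fun q => Polynomial.coeff q i) h2
  simp only [Polynomial.finset_sum_coeff, Polynomial.coeff_X_pow] at h3
  rw [Finset.card_filter, Finset.card_filter]
  simp only [eq_comm (b := i)]
  exact_mod_cast h3

lemma auxPE_comm (T : SimpleGraph V) (hT : T.IsTree) (u v : V) :
    auxPE T hT u v = auxPE T hT v u := by
  rw [auxPE_eq T hT _ (auxPath_isPath T hT v u).reverse]
  ext e
  simp [auxPE]

lemma auxPE_card (T : SimpleGraph V) (hT : T.IsTree) {u v : V} (p : T.Walk u v)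
    (hp : p.IsPath) : (auxPE T hT u v).card = p.length := by
  rw [auxPE_eq T hT p hp, List.toFinset_card_of_nodup hp.isTrail.edges_nodup,
    SimpleGraph.Walk.length_edges]

lemma aux_nbr (T : SimpleGraph V) {u v : V} (p : T.Walk u v) (hp : p.IsPath) (w : V)
    (hw : w ∈ p.support) (hu : w ≠ u) (hv : w ≠ v) :
    ∃ x y, x ≠ y ∧ ∀ z, s(w, z) ∈ p.edges ↔ z = x ∨ z = y := by
  obtain ⟨i, rfl, hi⟩ := SimpleGraph.Walk.mem_support_iff_exists_getVert.1 hw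
  have h0 : i ≠ 0 := by rintro rfl; simp at hu
  have h1 : i < p.length := by
    refine lt_of_le_of_ne hi ?_
    rintro rfl; simp at hv
  have h2 := hp.neighborSet_toSubgraph_internal h0 h1
  have h3 := hp.ncard_neighborSet_toSubgraph_internal_eq_two h0 h1
  refine ⟨p.getVert (i - 1), p.getVert (i + 1), ?_, ?_⟩
  · intro h
    rw [h2, h] at h3
    simp at h3
  · intro z
    have : z ∈ p.toSubgraph.neighborSet (p.getVert i) ↔ z ∈ ({p.getVert (i - 1), p.getVert (i + 1)} : Set V) := by
      rw [h2]
    rw [SimpleGraph.Subgraph.mem_neighborSet, SimpleGraph.Walk.adj_toSubgraph_iff_mem_edges] at this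
    simpa using this

lemma aux_nbr_start (T : SimpleGraph V) {u v : V} (p : T.Walk u v) (hp : p.IsPath)
    (huv : u ≠ v) : ∃ x, ∀ z, s(u, z) ∈ p.edges ↔ z = x := by
  have h2 := hp.neighborSet_toSubgraph_startpoint (SimpleGraph.Walk.not_nil_of_ne huv)
  refine ⟨p.snd, fun z => ?_⟩
  have : z ∈ p.toSubgraph.neighborSet u ↔ z ∈ ({p.snd} : Set V) := by rw [h2]
  rw [SimpleGraph.Subgraph.mem_neighborSet, SimpleGraph.Walk.adj_toSubgraph_iff_mem_edges] at this
  simpa using this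

lemma aux_end (T : SimpleGraph V) (hT : T.IsTree) {u v u' v' : V} (huv : u ≠ v) (huv' : u' ≠ v')
    (h : auxPE T hT u v = auxPE T hT u' v') : u' = u ∨ u' = v := by
  by_contra hcon
  push Not at hcon
  obtain ⟨x, hx⟩ := aux_nbr_start T _ (auxPath_isPath T hT u' v') huv'
  have hmem : ∀ e, e ∈ (auxPath T hT u v).edges ↔ e ∈ (auxPath T hT u' v').edges := by
    intro e
    rw [← List.mem_toFinset, ← List.mem_toFinset]
    change e ∈ auxPE T hT u v ↔ e ∈ auxPE T hT u' v'
    rw [h]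
  have hs : u' ∈ (auxPath T hT u v).support := by
    refine SimpleGraph.Walk.fst_mem_support_of_mem_edges (u := x) _ ?_
    rw [hmem, hx]
  obtain ⟨y, z, hyz, hall⟩ := aux_nbr T _ (auxPath_isPath T hT u v) u' hs hcon.1 hcon.2
  have e1 := (hx y).1 ((hmem _).1 ((hall y).2 (Or.inl rfl)))
  have e2 := (hx z).1 ((hmem _).1 ((hall z).2 (Or.inr rfl)))
  exact hyz (e1.trans e2.symm)

lemma aux_deg (T : SimpleGraph V) (hT : T.IsTree) (u v w : V) :
    ((auxPE T hT u v).filter (fun e => w ∈ e)).card ≤ 2 := by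
  suffices h : ∃ x y, ∀ z, s(w, z) ∈ auxPE T hT u v → z = x ∨ z = y by
    obtain ⟨x, y, h⟩ := h
    refine le_trans (Finset.card_le_card (t := {s(w, x), s(w, y)}) ?_) Finset.card_le_two
    intro e he
    rw [Finset.mem_filter] at he
    obtain ⟨he, z, rfl⟩ := he
    rcases h z he with rfl | rfl <;> simp
  by_cases huv : u = v
  · subst huv
    refine ⟨u, u, fun z hz => ?_⟩
    rw [auxPE_eq T hT SimpleGraph.Walk.nil (by simp)] at hz
    simp at hz
  by_cases hu : w = u
  · subst hu
    obtain ⟨x, hx⟩ := aux_nbr_start T _ (auxPath_isPath T hT w v) huv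
    exact ⟨x, x, fun z hz => Or.inl ((hx z).1 (List.mem_toFinset.1 hz))⟩
  by_cases hv : w = v
  · subst hv
    obtain ⟨x, hx⟩ := aux_nbr_start T _ (auxPath_isPath T hT w u) (Ne.symm huv)
    rw [auxPE_comm]
    exact ⟨x, x, fun z hz => Or.inl ((hx z).1 (List.mem_toFinset.1 hz))⟩
  by_cases hs : w ∈ (auxPath T hT u v).support
  · obtain ⟨y, z, _, hall⟩ := aux_nbr T _ (auxPath_isPath T hT u v) w hs hu hv
    exact ⟨y, z, fun a ha => (hall a).1 (List.mem_toFinset.1 ha)⟩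
  · refine ⟨w, w, fun z hz => ?_⟩
    exact (hs (SimpleGraph.Walk.fst_mem_support_of_mem_edges _ (List.mem_toFinset.1 hz))).elim

lemma aux_subtree (T : SimpleGraph V) (hT : T.IsTree) {u v : V} (huv : u ≠ v) :
    IsSubtreeSet T (↑(auxPE T hT u v) : Set (Sym2 V)) := by
  have hnil : ¬ (auxPath T hT u v).Nil := SimpleGraph.Walk.not_nil_of_ne huv
  refine ⟨⟨s(u, (auxPath T hT u v).snd), ?_⟩, auxPE_subset T hT u v, ?_⟩
  · have := SimpleGraph.Walk.mk_start_snd_mem_edges hnil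
    simpa [auxPE] using this
  · have ht : ∀ e ∈ (auxPath T hT u v).edges,
        e ∈ (SimpleGraph.fromEdgeSet (↑(auxPE T hT u v) : Set (Sym2 V))).edgeSet := by
      intro e he
      rw [SimpleGraph.edgeSet_fromEdgeSet]
      exact ⟨by simpa [auxPE] using he,
        T.not_isDiag_of_mem_edgeSet (SimpleGraph.Walk.edges_subset_edgeSet _ he)⟩
    have hc := ((auxPath T hT u v).transfer _ ht).connected_induce_support
    have hset : {w | ∃ e ∈ (↑(auxPE T hT u v) : Set (Sym2 V)), w ∈ e} =
        {w | w ∈ ((auxPath T hT u v).transfer _ ht).support} := by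
      ext w
      rw [Set.mem_setOf_eq, Set.mem_setOf_eq, SimpleGraph.Walk.support_transfer,
        SimpleGraph.Walk.mem_support_iff_exists_mem_edges_of_not_nil hnil]
      simp [auxPE]
    rw [hset]
    exact hc

lemma aux_chord (T : SimpleGraph V) (hT : T.IsTree) {u v : V} (p : T.Walk u v) (hp : p.IsPath)
    {w x : V} (hw : w ∈ p.support) (hx : x ∈ p.support) (hadj : T.Adj w x) :
    s(w, x) ∈ p.edges := by
  have hx' := hx
  rw [← p.take_spec hw, SimpleGraph.Walk.mem_support_append_iff] at hx'
  have one : ∀ {a b : V} (h : T.Adj a b) (q : T.Walk a b), q.IsPath → s(a, b) ∈ q.edges := by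
    intro a b h q hq
    have h1 : (SimpleGraph.Walk.cons h SimpleGraph.Walk.nil).IsPath := by
      simp [h.ne]
    rw [auxPath_unique T hT q hq, ← auxPath_unique T hT _ h1]
    simp
  rcases hx' with h | h
  · have := one hadj.symm ((p.takeUntil w hw).dropUntil x h) ((hp.takeUntil hw).dropUntil h)
    rw [Sym2.eq_swap]
    exact p.edges_takeUntil_subset hw (SimpleGraph.Walk.edges_dropUntil_subset _ _ this)
  · have := one hadj ((p.dropUntil w hw).takeUntil x h) ((hp.dropUntil hw).takeUntil h)
    exact p.edges_dropUntil_subset hw (SimpleGraph.Walk.edges_takeUntil_subset _ _ this)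

lemma aux_exists (T : SimpleGraph V) (hT : T.IsTree) (P : Finset (Sym2 V))
    (hP : IsSubtreeSet T (↑P : Set (Sym2 V)))
    (hd : ∀ v : V, (P.filter (fun e => v ∈ e)).card ≤ 2) :
    ∃ u v, u ≠ v ∧ auxPE T hT u v = P := by
  obtain ⟨⟨e0, he0⟩, hPT, hconn⟩ := hP
  -- lengths of paths inside `P`
  let S : Set ℕ := {k | ∃ u v, auxPE T hT u v ⊆ P ∧ (auxPE T hT u v).card = k}
  have hbd : ∀ k ∈ S, k ≤ P.card := by
    rintro k ⟨u, v, h, rfl⟩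
    exact Finset.card_le_card h
  have hmax : ∃ u v, auxPE T hT u v ⊆ P ∧ 1 ≤ (auxPE T hT u v).card ∧ ∀ a b, auxPE T hT a b ⊆ P →
      (auxPE T hT a b).card ≤ (auxPE T hT u v).card := by
    have hne : S.Nonempty := by
      refine ⟨_, e0.out.1, e0.out.1, ?_, rfl⟩
      rw [auxPE_eq T hT SimpleGraph.Walk.nil (by simp)]
      simp
    have hb : BddAbove S := ⟨P.card, hbd⟩
    obtain ⟨u, v, huv, hk⟩ := Nat.sSup_mem hne hb
    have hall : ∀ a b, auxPE T hT a b ⊆ P → (auxPE T hT a b).card ≤ (auxPE T hT u v).card := by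
      intro a b hab
      rw [hk]
      exact le_csSup hb ⟨a, b, hab, rfl⟩
    refine ⟨u, v, huv, ?_, hall⟩
    induction e0 with | _ a b =>
    have hab : T.Adj a b := hPT he0
    have h1 : (SimpleGraph.Walk.cons hab SimpleGraph.Walk.nil).IsPath := by
      simp [hab.ne]
    have h2 := auxPE_card T hT _ h1
    have h3 := hall a b (by rw [auxPE_eq T hT _ h1]; simpa using he0)
    rw [h2] at h3
    simpa using h3
  obtain ⟨u, v, hsub, hone, hmax⟩ := hmax
  have hne : u ≠ v := by
    rintro rfl
    rw [auxPE_card T hT SimpleGraph.Walk.nil (by simp)] at hone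
    simp at hone
  refine ⟨u, v, hne, ?_⟩
  set p := auxPath T hT u v with hpdef
  have hp : p.IsPath := auxPath_isPath T hT u v
  have hpe : ∀ e, e ∈ auxPE T hT u v ↔ e ∈ p.edges := fun e => List.mem_toFinset
  -- extension at the start
  have hext : ∀ {a b x : V} (q : T.Walk a b), q.IsPath → q.edges.toFinset ⊆ P →
      s(a, x) ∈ P → x ∉ q.support → q.length < (auxPE T hT u v).card := by
    intro a b x q hq hqP hax hxq
    have hadj : T.Adj x a := (show T.Adj a x from hPT hax).symm
    have h1 : (SimpleGraph.Walk.cons hadj q).IsPath := hq.cons hxq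
    have h2 := hmax x b (by
      rw [auxPE_eq T hT _ h1]
      intro e he
      rw [List.mem_toFinset, SimpleGraph.Walk.edges_cons, List.mem_cons] at he
      rcases he with rfl | he
      · rwa [Sym2.eq_swap]
      · exact hqP (List.mem_toFinset.2 he))
    rw [auxPE_card T hT _ h1, SimpleGraph.Walk.length_cons] at h2
    omega
  have hclosed : ∀ w x, w ∈ p.support → s(w, x) ∈ P → s(w, x) ∈ p.edges := by
    intro w x hw hwx
    have hadj : T.Adj w x := hPT hwx
    by_cases hx : x ∈ p.support
    · exact aux_chord T hT p hp hw hx hadj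
    exfalso
    by_cases hu : w = u
    · subst hu
      have := hext p hp hsub hwx hx
      rw [auxPE_card T hT p hp] at this
      exact lt_irrefl _ this
    by_cases hv : w = v
    · subst hv
      have := hext p.reverse hp.reverse (by
        intro e he
        rw [List.mem_toFinset, SimpleGraph.Walk.edges_reverse, List.mem_reverse] at he
        exact hsub ((hpe e).2 he)) hwx (by simpa using hx)
      rw [auxPE_card T hT p hp, SimpleGraph.Walk.length_reverse] at this
      exact lt_irrefl _ this
    obtain ⟨y, z, hyz, hall⟩ := aux_nbr T p hp w hw hu hv
    have hy := (hall y).2 (Or.inl rfl)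
    have hz := (hall z).2 (Or.inr rfl)
    have hxy : x ≠ y := by
      rintro rfl; exact hx (p.snd_mem_support_of_mem_edges hy)
    have hxz : x ≠ z := by
      rintro rfl; exact hx (p.snd_mem_support_of_mem_edges hz)
    have h3 : ({s(w, x), s(w, y), s(w, z)} : Finset (Sym2 V)) ⊆ P.filter (fun e => w ∈ e) := by
      intro e he
      simp only [Finset.mem_insert, Finset.mem_singleton] at he
      rw [Finset.mem_filter]
      rcases he with rfl | rfl | rfl
      · exact ⟨hwx, by simp⟩
      · exact ⟨hsub ((hpe _).2 hy), by simp⟩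
      · exact ⟨hsub ((hpe _).2 hz), by simp⟩
    have h4 := (Finset.card_le_card h3).trans (hd w)
    have h5 : ({s(w, x), s(w, y), s(w, z)} : Finset (Sym2 V)).card = 3 := by
      rw [Finset.card_eq_three]
      refine ⟨_, _, _, ?_, ?_, ?_, rfl⟩ <;> rw [Ne, Sym2.congr_right] <;> assumption
    omega
  have hreach : ∀ a b, (SimpleGraph.fromEdgeSet (↑P : Set (Sym2 V))).Walk a b →
      a ∈ p.support → b ∈ p.support := by
    intro a b q
    induction q with
    | nil => exact id
    | cons h q ih =>
      intro ha
      rw [SimpleGraph.fromEdgeSet_adj] at h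
      exact ih (p.snd_mem_support_of_mem_edges (hclosed _ _ ha h.1))
  have hsnd : s(u, p.snd) ∈ P :=
    hsub ((hpe _).2 (SimpleGraph.Walk.mk_start_snd_mem_edges (SimpleGraph.Walk.not_nil_of_ne hne)))
  refine Finset.Subset.antisymm hsub ?_
  intro e he
  induction e with | _ a b =>
  rw [hpe]
  refine hclosed a b ?_ he
  obtain ⟨q⟩ := hconn.preconnected ⟨u, _, hsnd, by simp⟩ ⟨a, _, he, by simp⟩
  exact hreach u a (q.map (SimpleGraph.Embedding.induce _).toHom) p.start_mem_support

lemma aux_pathCount [Fintype V] (T : SimpleGraph V) (hT : T.IsTree) (i : ℕ) (hi : 1 ≤ i) :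
    ((Finset.univ : Finset (V × V)).filter (fun p => (auxPE T hT p.1 p.2).card = i)).card =
      pathCount T i * 2 := by
  have hne : ∀ u v, 1 ≤ (auxPE T hT u v).card → u ≠ v := by
    rintro u v h rfl
    rw [auxPE_card T hT SimpleGraph.Walk.nil (by simp)] at h
    simp at h
  unfold pathCount
  rw [Finset.card_eq_sum_card_fiberwise (f := fun p : V × V => auxPE T hT p.1 p.2)
    (t := (Finset.univ : Finset (Sym2 V)).powerset.filter
      (fun (P : Finset (Sym2 V)) => P.card = i ∧ IsSubtreeSet T (↑P : Set (Sym2 V)) ∧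
      ∀ v : V, (P.filter (fun e => v ∈ e)).card ≤ 2))]
  · rw [Finset.sum_const_nat]
    intro P hP
    rw [Finset.mem_filter] at hP
    obtain ⟨_, hPi, hPs, hPd⟩ := hP
    obtain ⟨u, v, huv, rfl⟩ := aux_exists T hT P hPs hPd
    rw [Finset.card_eq_two]
    refine ⟨(u, v), (v, u), by simp [huv], ?_⟩
    ext ⟨a, b⟩
    simp only [Finset.mem_filter, Finset.mem_univ, true_and, Finset.mem_insert,
      Finset.mem_singleton, Prod.mk.injEq]
    constructor
    · rintro ⟨h1, h2⟩
      have hab := hne a b (by omega)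
      have ha := aux_end T hT huv hab h2.symm
      have hb := aux_end T hT huv hab.symm (h2.symm.trans (auxPE_comm T hT a b))
      grind
    · rintro (⟨rfl, rfl⟩ | ⟨rfl, rfl⟩)
      · exact ⟨hPi, rfl⟩
      · rw [auxPE_comm]; exact ⟨hPi, rfl⟩
  · intro p hp
    simp only [Finset.coe_filter, Finset.mem_univ, true_and, Set.mem_setOf_eq] at hp
    simp only [Finset.coe_filter, Set.mem_setOf_eq, Finset.mem_powerset, Finset.subset_univ, true_and]
    exact ⟨hp, aux_subtree T hT (hne _ _ (by omega)), fun w => aux_deg T hT _ _ w⟩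

end Aux

/-- Let `T` and `U` be trees, each with `n` vertices, with `N_λ(T) = N_λ(U)` for every
partition `λ` of `n` (equivalently, `X_T = X_U`).  Then for every `i ≥ 1` the trees `T` and `U`
have the same number of `i`-edge paths. -/
theorem stmt_11 [Fintype V] [Fintype W] (T : SimpleGraph V) (U : SimpleGraph W)
    (hT : T.IsTree) (hU : U.IsTree) (n : ℕ)
    (hVn : Fintype.card V = n) (hWn : Fintype.card W = n)
    (hN : ∀ lam : Multiset ℕ, lam.sum = n → (∀ m ∈ lam, 0 < m) →
      NCoeff T lam = NCoeff U lam) :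
    ∀ i : ℕ, 1 ≤ i → pathCount T i = pathCount U i := by
  intro i hi
  have h := aux_pairs T U hT hU n hVn hWn hN i
  rw [aux_pathCount T hT i hi, aux_pathCount U hU i hi] at h
  omega
end

section
/- Let T and U be spiders (trees with exactly one vertex of degree at least 3). Suppose that for all integers i, j, the number of subtrees of T with exactly i edges and exactly j leaf edges equals the number of subtrees of U with exactly i edges and exactly j leaf edges (i.e., T and U have the same subtree polynomial). Then T and U are isomorphic as graphs. -/
open SimpleGraph Finset

variable {V : Type*} {W : Type*}

/-- A spider is a tree with exactly one vertex of degree at least 3. -/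
def IsSpider [Fintype V] (T : SimpleGraph V) [DecidableRel T.Adj] : Prop :=
  T.IsTree ∧ ∃! v : V, 3 ≤ T.degree v

open Classical in
/-- `subtreeCount T i j` : the number of subtrees of `T` with exactly `i` edges and exactly
`j` leaf edges (the coefficient of `q^i r^j` in the subtree polynomial `S_T(q,r)`). -/
noncomputable def subtreeCount [Fintype V] (T : SimpleGraph V) (i j : ℕ) : ℕ :=
  ((Finset.univ : Finset (Sym2 V)).powerset.filter
    (fun (S : Finset (Sym2 V)) => IsSubtreeSet T (↑S : Set (Sym2 V)) ∧
      S.card = i ∧ (leafEdges (↑S : Set (Sym2 V))).ncard = j)).card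

/-- Leg decomposition of a spider: `v k i` is the vertex at distance `i` from the center on leg
`k`, and `a k` is the length of the leg `k`. -/
structure IsLegs {V ι : Type*} (T : SimpleGraph V) (a : ι → ℕ) (v : ι → ℕ → V) : Prop where
  zero : ∀ k k', v k 0 = v k' 0
  pos : ∀ k, 0 < a k
  inj : ∀ k k' i j, i ≤ a k → j ≤ a k' → v k i = v k' j → (i = 0 ∧ j = 0) ∨ (k = k' ∧ i = j)
  surj : ∀ x, ∃ k i, i ≤ a k ∧ v k i = x
  adj : ∀ x y, T.Adj x y ↔ ∃ k i, i < a k ∧ s(x, y) = s(v k i, v k (i + 1))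

lemma tree_parent_exists {V : Type*} {T : SimpleGraph V} (hT : T.IsTree) (c x : V) (hx : x ≠ c) :
    ∃ y, T.Adj y x ∧ T.dist c y + 1 = T.dist c x := by
  obtain ⟨p, hp, hl⟩ := hT.connected.exists_path_of_dist c x
  have hn : ¬ p.Nil := by
    intro h
    exact hx h.eq.symm
  refine ⟨p.penultimate, p.adj_penultimate hn, ?_⟩
  rcases hT.dist_eq_dist_add_one_of_adj c (p.adj_penultimate hn) with h | h
  · exfalso
    have h1 := dist_le p.dropLast
    have h2 : p.dropLast.length = p.length - 1 := by simp
    omega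
  · omega

lemma tree_parent_unique {V : Type*} {T : SimpleGraph V} (hT : T.IsTree) (c x y z : V)
    (hy : T.Adj y x) (hz : T.Adj z x) (hy' : T.dist c y + 1 = T.dist c x)
    (hz' : T.dist c z + 1 = T.dist c x) : y = z := by
  obtain ⟨p, hp, hl⟩ := hT.connected.exists_path_of_dist c x
  have key : ∀ y, T.Adj y x → T.dist c y + 1 = T.dist c x → y = p.penultimate := by
    intro y hy hy'
    obtain ⟨q, hq, hql⟩ := hT.connected.exists_path_of_dist c y
    refine hT.isAcyclic.eq_penultimate_of_adj_end hp hy.symm ?_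
    by_contra hcon
    have := hT.isAcyclic.mem_support_of_ne_mem_support_of_adj_of_isPath hq hp hy hcon
    have h2 := hT.isAcyclic.path_concat hp hq hy.symm this
    have h3 := congrArg Walk.length h2
    rw [Walk.length_concat] at h3
    omega
  rw [key y hy hy', key z hz hz']

lemma exists_legs {V : Type*} [Fintype V] (T : SimpleGraph V) [DecidableRel T.Adj]
    (hT : IsSpider T) :
    ∃ (d : ℕ) (a : Fin d → ℕ) (v : Fin d → ℕ → V), 3 ≤ d ∧ IsLegs T a v := by
  classical
  obtain ⟨ht, c, hc, huniq⟩ := hT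
  have hpe : ∀ x, ∃ y, (x = c → y = c) ∧ (x ≠ c → T.Adj y x ∧ T.dist c y + 1 = T.dist c x) := by
    intro x
    by_cases hx : x = c
    · exact ⟨c, fun _ => rfl, fun h => absurd hx h⟩
    · obtain ⟨y, hy⟩ := tree_parent_exists ht c x hx
      exact ⟨y, fun h => absurd h hx, fun _ => hy⟩
  choose par hpc hpar using hpe
  have hD0 : ∀ x, T.dist c x = 0 ↔ x = c := by
    intro x
    rw [ht.connected.dist_eq_zero_iff]
    exact eq_comm
  have hDpar : ∀ x, T.dist c (par x) = T.dist c x - 1 := by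
    intro x
    by_cases hx : x = c
    · rw [hpc x hx, hx]; simp
    · have := (hpar x hx).2; omega
  have hDit : ∀ n x, T.dist c (par^[n] x) = T.dist c x - n := by
    intro n
    induction n with
    | zero => simp
    | succ n ih => intro x; rw [Function.iterate_succ_apply', hDpar, ih]; omega
  have hadj : ∀ x y, T.Adj x y ↔ (y ≠ c ∧ x = par y) ∨ (x ≠ c ∧ y = par x) := by
    intro x y
    constructor
    · intro h
      rcases ht.dist_eq_dist_add_one_of_adj c h with h1 | h1
      · right
        have hx : x ≠ c := fun h0 => by have := (hD0 x).2 h0; omega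
        exact ⟨hx, tree_parent_unique ht c x y (par x) h.symm (hpar x hx).1 h1.symm (hpar x hx).2⟩
      · left
        have hx : y ≠ c := fun h0 => by have := (hD0 y).2 h0; omega
        exact ⟨hx, tree_parent_unique ht c y x (par y) h (hpar y hx).1 h1.symm (hpar y hx).2⟩
    · rintro (⟨h, rfl⟩ | ⟨h, rfl⟩)
      · exact (hpar y h).1
      · exact (hpar x h).1.symm
  -- at most one child
  have hchild : ∀ x y, x ≠ c → y ≠ c → par x = par y → par x ≠ c → x = y := by
    intro x y hx hy hxy hz
    by_contra hne
    have h3 : 3 ≤ T.degree (par x) := by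
      have hsub : ({x, y, par (par x)} : Finset V) ⊆ T.neighborFinset (par x) := by
        intro w hw
        simp only [Finset.mem_insert, Finset.mem_singleton] at hw
        rw [mem_neighborFinset, hadj]
        rcases hw with rfl | rfl | rfl
        · left; exact ⟨hx, rfl⟩
        · left; exact ⟨hy, hxy⟩
        · right; exact ⟨hz, rfl⟩
      have hcard : ({x, y, par (par x)} : Finset V).card = 3 := by
        have e1 := (hpar x hx).2
        have e2 := (hpar y hy).2
        have e3 := (hpar _ hz).2
        rw [← hxy] at e2
        rw [Finset.card_eq_three]
        refine ⟨x, y, _, hne, ?_, ?_, rfl⟩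
        · intro h; rw [← h] at e3; omega
        · intro h; rw [← h] at e3; omega
      rw [← hcard, ← card_neighborFinset_eq_degree]
      exact Finset.card_le_card hsub
    exact hz (huniq _ h3)
  have hinj : ∀ n x y, T.dist c x = n + 1 → T.dist c y = n + 1 → par^[n] x = par^[n] y →
      x = y := by
    intro n
    induction n with
    | zero => intro x y _ _ h; simpa using h
    | succ n ih =>
      intro x y hx hy h
      rw [Function.iterate_succ_apply, Function.iterate_succ_apply] at h
      have h1 := ih (par x) (par y) (by rw [hDpar]; omega) (by rw [hDpar]; omega) h
      refine hchild x y ?_ ?_ h1 ?_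
      · intro h; rw [(hD0 x).2 h] at hx; omega
      · intro h; rw [(hD0 y).2 h] at hy; omega
      · intro h; have := (hD0 _).2 h; rw [hDpar] at this; omega
  -- the tips
  have htip : ∀ k : T.neighborFinset c, ∃ t, t ≠ c ∧ par^[T.dist c t - 1] t = k.1 ∧
      ∀ x, x ≠ c → par^[T.dist c x - 1] x = k.1 → T.dist c x ≤ T.dist c t := by
    intro k
    have hk : T.Adj c k.1 := (mem_neighborFinset _ _ _).1 k.2
    have hk1 : T.dist c k.1 = 1 := dist_eq_one_iff_adj.2 hk
    obtain ⟨t, ht1, ht2⟩ := Finset.exists_max_image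
      (Finset.univ.filter (fun x => x ≠ c ∧ par^[T.dist c x - 1] x = k.1)) (fun x => T.dist c x)
      ⟨k.1, by simp [hk1, hk.ne']⟩
    simp only [Finset.mem_filter, Finset.mem_univ, true_and] at ht1 ht2
    exact ⟨t, ht1.1, ht1.2, fun x h1 h2 => ht2 x ⟨h1, h2⟩⟩
  choose tip htc htk htm using htip
  let e := (Fintype.equivFin (T.neighborFinset c)).symm
  have hcard : Fintype.card (T.neighborFinset c) = T.degree c := by
    rw [Fintype.card_coe, card_neighborFinset_eq_degree]
  have hDt : ∀ k, 0 < T.dist c (tip k) := fun k =>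
    Nat.pos_of_ne_zero (fun h => htc k ((hD0 _).1 h))
  have hDv : ∀ k i, i ≤ T.dist c (tip k) →
      T.dist c (par^[T.dist c (tip k) - i] (tip k)) = i := by
    intro k i hi; rw [hDit]; omega
  have hanc : ∀ k i, i + 1 ≤ T.dist c (tip k) →
      par^[i] (par^[T.dist c (tip k) - (i + 1)] (tip k)) = k.1 := by
    intro k i hi
    rw [← Function.iterate_add_apply, ← htk k]
    congr 1
    congr 1
    have := htk k
    omega
  have hsucc : ∀ k i, i + 1 ≤ T.dist c (tip k) →
      par (par^[T.dist c (tip k) - (i + 1)] (tip k)) = par^[T.dist c (tip k) - i] (tip k) := by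
    intro k i hi
    rw [← Function.iterate_succ_apply' par]
    congr 1
    congr 1
    omega
  have hsurj : ∀ x, x ≠ c → ∃ k i, i + 1 ≤ T.dist c (tip k) ∧
      par^[T.dist c (tip k) - (i + 1)] (tip k) = x := by
    intro x hx
    have hx0 : T.dist c x ≠ 0 := fun h => hx ((hD0 x).1 h)
    have hk : par^[T.dist c x - 1] x ∈ T.neighborFinset c := by
      rw [mem_neighborFinset, ← dist_eq_one_iff_adj, hDit]; omega
    have hle := htm ⟨_, hk⟩ x hx rfl
    refine ⟨⟨_, hk⟩, T.dist c x - 1, by omega, ?_⟩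
    refine hinj (T.dist c x - 1) _ _ ?_ (by omega) ?_
    · rw [hDv _ _ (by omega)]
    · rw [hanc _ _ (by omega)]
  refine ⟨Fintype.card (T.neighborFinset c), fun k => T.dist c (tip (e k)),
    fun k i => par^[T.dist c (tip (e k)) - i] (tip (e k)), by omega, ?_⟩
  have hv0 : ∀ k, par^[T.dist c (tip k) - 0] (tip k) = c := fun k =>
    (hD0 _).1 (hDv k 0 (Nat.zero_le _))
  refine ⟨?_, ?_, ?_, ?_, ?_⟩
  · intro k k'
    exact (hv0 _).trans (hv0 _).symm
  · intro k; exact hDt _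
  · intro k k' i j hi hj h
    have h1 := hDv _ i hi
    have h2 := hDv _ j hj
    beta_reduce at h hi hj
    rw [h, h2] at h1
    subst h1
    rcases j with _ | j
    · left; simp
    · right
      refine ⟨?_, rfl⟩
      have h3 := hanc _ j hi
      rw [h, hanc _ j hj] at h3
      exact (e.injective (Subtype.ext h3)).symm
  · intro x
    by_cases hx : x = c
    · have : 0 < Fintype.card (T.neighborFinset c) := by omega
      exact ⟨⟨0, this⟩, 0, Nat.zero_le _, by rw [hx]; exact hv0 _⟩
    · obtain ⟨k, i, hi, h⟩ := hsurj x hx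
      refine ⟨e.symm k, i + 1, by simpa using hi, by simpa using h⟩
  · intro x y
    constructor
    · intro h
      rcases (hadj x y).1 h with ⟨h1, h2⟩ | ⟨h1, h2⟩
      · obtain ⟨k, i, hi, rfl⟩ := hsurj y h1
        refine ⟨e.symm k, i, by simpa using hi, ?_⟩
        rw [hsucc k i hi] at h2
        simp [h2]
      · obtain ⟨k, i, hi, rfl⟩ := hsurj x h1
        refine ⟨e.symm k, i, by simpa using hi, ?_⟩
        rw [hsucc k i hi] at h2
        simp [h2, Sym2.eq_swap]
    · rintro ⟨k, i, hi, h⟩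
      rw [← mem_edgeSet, h, mem_edgeSet, hadj]
      left
      refine ⟨?_, (hsucc _ i hi).symm⟩
      intro h0
      have := (hD0 _).2 h0
      rw [hDv _ _ hi] at this
      omega

lemma multiset_eq_of_prod_eq (n : ℕ) : ∀ (s t : Multiset ℕ), s.card + t.card ≤ n →
    (∀ x ∈ s, 0 < x) → (∀ x ∈ t, 0 < x) →
    (s.map (fun a => (1 - Polynomial.X ^ a : Polynomial ℂ))).prod =
      (t.map (fun a => (1 - Polynomial.X ^ a : Polynomial ℂ))).prod → s = t := by
  have hne : ∀ a : ℕ, 0 < a → (1 - Polynomial.X ^ a : Polynomial ℂ) ≠ 0 := by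
    intro a ha h
    have := congrArg (Polynomial.eval 0) h
    simp [ha.ne'] at this
  have key : ∀ (s t : Multiset ℕ) (M : ℕ), M ∈ s → 0 < M → (∀ x ∈ t, 0 < x) → (∀ x ∈ t, x ≤ M) →
      (s.map (fun a => (1 - Polynomial.X ^ a : Polynomial ℂ))).prod =
      (t.map (fun a => (1 - Polynomial.X ^ a : Polynomial ℂ))).prod → M ∈ t := by
    intro s t M hM hM0 ht htM h
    have hz := Complex.isPrimitiveRoot_exp M hM0.ne'
    set z := Complex.exp (2 * Real.pi * Complex.I / M) with hzdef
    have h1 := congrArg (Polynomial.eval z) h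
    rw [Polynomial.eval_multiset_prod, Polynomial.eval_multiset_prod, Multiset.map_map,
      Multiset.map_map] at h1
    have h0 : (Multiset.map (Polynomial.eval z ∘ fun a => (1 - Polynomial.X ^ a : Polynomial ℂ))
        s).prod = 0 := by
      rw [Multiset.prod_eq_zero_iff, Multiset.mem_map]
      exact ⟨M, hM, by simp [hz.pow_eq_one]⟩
    rw [h0] at h1
    have h2 := h1.symm
    rw [Multiset.prod_eq_zero_iff, Multiset.mem_map] at h2
    obtain ⟨b, hb, hb0⟩ := h2
    have h3 : z ^ b = 1 := by
      simp only [Function.comp, Polynomial.eval_sub, Polynomial.eval_one, Polynomial.eval_pow,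
        Polynomial.eval_X] at hb0
      exact (sub_eq_zero.1 hb0).symm
    have h4 := Nat.le_of_dvd (ht b hb) (hz.dvd_of_pow_eq_one b h3)
    have h5 := htM b hb
    have : b = M := by omega
    exact this ▸ hb
  induction n with
  | zero =>
    intro s t hc _ _ _
    have h1 : s.card = 0 := by omega
    have h2 : t.card = 0 := by omega
    rw [Multiset.card_eq_zero.1 h1, Multiset.card_eq_zero.1 h2]
  | succ n ih =>
    intro s t hc hs ht h
    by_cases h0 : s + t = 0
    · have h1 := congrArg Multiset.card h0
      simp only [Multiset.card_add, Multiset.card_zero] at h1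
      have h1' : s.card = 0 := by omega
      have h2 : t.card = 0 := by omega
      rw [Multiset.card_eq_zero.1 h1', Multiset.card_eq_zero.1 h2]
    · obtain ⟨x0, hx0⟩ := Multiset.exists_mem_of_ne_zero h0
      obtain ⟨M, hM, hmax⟩ := Finset.exists_max_image (s + t).toFinset id
        ⟨x0, Multiset.mem_toFinset.2 hx0⟩
      have hmax' : ∀ x ∈ s + t, x ≤ M := fun x hx => hmax x (Multiset.mem_toFinset.2 hx)
      rw [Multiset.mem_toFinset, Multiset.mem_add] at hM
      have hM2 : M ∈ s ∧ M ∈ t := by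
        rcases hM with hM | hM
        · exact ⟨hM, key s t M hM (hs M hM) ht
            (fun x hx => hmax' x (Multiset.mem_add.2 (Or.inr hx))) h⟩
        · exact ⟨key t s M hM (ht M hM) hs
            (fun x hx => hmax' x (Multiset.mem_add.2 (Or.inl hx))) h.symm, hM⟩
      obtain ⟨s', rfl⟩ := Multiset.exists_cons_of_mem hM2.1
      obtain ⟨t', rfl⟩ := Multiset.exists_cons_of_mem hM2.2
      rw [Multiset.map_cons, Multiset.map_cons, Multiset.prod_cons, Multiset.prod_cons] at h
      have h' := mul_left_cancel₀ (hne M (hs M hM2.1)) h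
      rw [Multiset.card_cons, Multiset.card_cons] at hc
      rw [ih s' t' (by omega) (fun x hx => hs x (Multiset.mem_cons_of_mem hx))
        (fun x hx => ht x (Multiset.mem_cons_of_mem hx)) h']

lemma exists_perm_of_counts {d : ℕ} (a a' : Fin d → ℕ) (ha : ∀ k, 0 < a k) (ha' : ∀ k, 0 < a' k)
    (h : ∀ n, ((Fintype.piFinset (fun k => Finset.Icc 1 (a k))).filter
        (fun b => ∑ k, b k = n)).card =
      ((Fintype.piFinset (fun k => Finset.Icc 1 (a' k))).filter
        (fun b => ∑ k, b k = n)).card) :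
    ∃ σ : Fin d ≃ Fin d, ∀ k, a' (σ k) = a k := by
  classical
  have hgen : ∀ a : Fin d → ℕ, ∏ k, ∑ i ∈ Finset.Icc 1 (a k), (Polynomial.X ^ i : Polynomial ℂ) =
      ∑ b ∈ Fintype.piFinset (fun k => Finset.Icc 1 (a k)), Polynomial.X ^ (∑ k, b k) := by
    intro a
    rw [Finset.prod_univ_sum]
    refine Finset.sum_congr rfl fun b _ => ?_
    rw [Finset.prod_pow_eq_pow_sum]
  have hprod : ∏ k, ∑ i ∈ Finset.Icc 1 (a k), (Polynomial.X ^ i : Polynomial ℂ) =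
      ∏ k, ∑ i ∈ Finset.Icc 1 (a' k), (Polynomial.X ^ i : Polynomial ℂ) := by
    rw [hgen, hgen]
    ext n
    simp only [Polynomial.finsetSum_coeff, Polynomial.coeff_X_pow]
    rw [Finset.sum_boole, Finset.sum_boole]
    have := h n
    simp only [eq_comm (a := n)]
    rw [this]
  have hgeom : ∀ m : ℕ, (1 - Polynomial.X) * ∑ i ∈ Finset.Icc 1 m, (Polynomial.X ^ i : Polynomial ℂ)
      = Polynomial.X * (1 - Polynomial.X ^ m) := by
    intro m
    induction m with
    | zero => simp
    | succ m ih => rw [Finset.sum_Icc_succ_top (by omega), mul_add, ih]; ring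
  have hprod2 : ∏ k, (1 - Polynomial.X ^ (a k) : Polynomial ℂ) =
      ∏ k, (1 - Polynomial.X ^ (a' k) : Polynomial ℂ) := by
    have h1 := congrArg (fun p => (∏ _k : Fin d, (1 - Polynomial.X : Polynomial ℂ)) * p) hprod
    beta_reduce at h1
    rw [← Finset.prod_mul_distrib, ← Finset.prod_mul_distrib] at h1
    simp only [hgeom] at h1
    rw [Finset.prod_mul_distrib, Finset.prod_mul_distrib] at h1
    refine mul_left_cancel₀ ?_ h1
    rw [Finset.prod_ne_zero_iff]
    intro _ _
    exact Polynomial.X_ne_zero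
  have hms : Multiset.map a Finset.univ.val = Multiset.map a' Finset.univ.val := by
    refine multiset_eq_of_prod_eq _ _ _ le_rfl ?_ ?_ ?_
    · intro x hx
      obtain ⟨k, _, rfl⟩ := Multiset.mem_map.1 hx
      exact ha k
    · intro x hx
      obtain ⟨k, _, rfl⟩ := Multiset.mem_map.1 hx
      exact ha' k
    · rw [Multiset.map_map, Multiset.map_map]
      exact hprod2
  have hfib : ∀ c, Nonempty ({k // a k = c} ≃ {k // a' k = c}) := by
    intro c
    refine ⟨Fintype.equivOfCardEq ?_⟩
    have h1 := congrArg (Multiset.count c) hms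
    rw [Multiset.count_map, Multiset.count_map] at h1
    rw [Fintype.card_subtype, Fintype.card_subtype, Finset.card_def, Finset.card_def,
      Finset.filter_val, Finset.filter_val]
    simpa only [eq_comm (a := c)] using h1
  let e := fun c => (hfib c).some
  exact ⟨Equiv.ofFiberEquiv e, fun k => Equiv.ofFiberEquiv_map e k⟩

lemma iso_of_legs {V W : Type*} {d : ℕ} {T : SimpleGraph V} {U : SimpleGraph W} {a a' : Fin d → ℕ}
    {v : Fin d → ℕ → V} {w : Fin d → ℕ → W} (hT : IsLegs T a v) (hU : IsLegs U a' w)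
    (σ : Fin d ≃ Fin d) (hσ : ∀ k, a' (σ k) = a k) : Nonempty (T ≃g U) := by
  choose kT iT hiT hvT using hT.surj
  choose kU iU hiU hvU using hU.surj
  have hf : ∀ k i, i ≤ a k → w (σ (kT (v k i))) (iT (v k i)) = w (σ k) i := by
    intro k i hi
    rcases hT.inj _ _ _ _ (hiT (v k i)) hi (hvT (v k i)) with ⟨h1, h2⟩ | ⟨h1, h2⟩
    · rw [h1, h2]; exact hU.zero _ _
    · rw [h1, h2]
  have hσ' : ∀ k, a (σ.symm k) = a' k := fun k => by rw [← hσ]; simp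
  have hg : ∀ k i, i ≤ a' k → v (σ.symm (kU (w k i))) (iU (w k i)) = v (σ.symm k) i := by
    intro k i hi
    rcases hU.inj _ _ _ _ (hiU (w k i)) hi (hvU (w k i)) with ⟨h1, h2⟩ | ⟨h1, h2⟩
    · rw [h1, h2]; exact hT.zero _ _
    · rw [h1, h2]
  let e : V ≃ W :=
    { toFun := fun x => w (σ (kT x)) (iT x)
      invFun := fun y => v (σ.symm (kU y)) (iU y)
      left_inv := by
        intro x
        beta_reduce
        rw [hg _ _ (by rw [hσ]; exact hiT x), Equiv.symm_apply_apply]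
        exact hvT x
      right_inv := by
        intro y
        beta_reduce
        rw [hf _ _ (by rw [hσ']; exact hiU y), Equiv.apply_symm_apply]
        exact hvU y }
  have he : ∀ k i, i ≤ a k → e (v k i) = w (σ k) i := hf
  have he' : ∀ k i, i ≤ a' k → e.symm (w k i) = v (σ.symm k) i := hg
  refine ⟨⟨e, ?_⟩⟩
  intro x y
  rw [hT.adj, hU.adj]
  constructor
  · rintro ⟨k, i, hi, h⟩
    refine ⟨σ.symm k, i, by rw [hσ']; exact hi, ?_⟩
    have := congrArg (Sym2.map e.symm) h
    simpa [Sym2.map_mk, he' k i hi.le, he' k (i + 1) hi] using this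
  · rintro ⟨k, i, hi, h⟩
    refine ⟨σ k, i, by rw [hσ]; exact hi, ?_⟩
    have := congrArg (Sym2.map e) h
    simpa [Sym2.map_mk, he k i hi.le, he k (i + 1) hi] using this

section Counting

variable {X : Type*} {d : ℕ} {G : SimpleGraph X} {a : Fin d → ℕ} {v : Fin d → ℕ → X}

lemma legs_mem (hL : IsLegs G a v) {k k' : Fin d} {i i' : ℕ} (hi : i ≤ a k) (hi' : i' < a k')
    (h : v k i ∈ s(v k' i', v k' (i' + 1))) :
    (i = 0 ∧ i' = 0) ∨ (k = k' ∧ (i = i' ∨ i = i' + 1)) := by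
  rcases Sym2.mem_iff.1 h with h | h
  · rcases hL.inj _ _ _ _ hi hi'.le h with h | h
    · exact Or.inl h
    · exact Or.inr ⟨h.1, Or.inl h.2⟩
  · rcases hL.inj _ _ _ _ hi hi' h with h | h
    · omega
    · exact Or.inr ⟨h.1, Or.inr h.2⟩

lemma legs_edge_inj (hL : IsLegs G a v) {k k' : Fin d} {i i' : ℕ} (hi : i < a k) (hi' : i' < a k')
    (h : s(v k i, v k (i + 1)) = s(v k' i', v k' (i' + 1))) : k = k' ∧ i = i' := by
  have h1 := legs_mem hL (i := i + 1) hi hi' (h ▸ Sym2.mem_mk_right _ _)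
  have h2 := legs_mem hL (i := i' + 1) hi' hi (h ▸ Sym2.mem_mk_right _ _)
  rcases h1 with h1 | h1
  · omega
  · rcases h2 with h2 | h2
    · omega
    · exact ⟨h1.1, by omega⟩

lemma legs_edgeSet (hL : IsLegs G a v) (e : Sym2 X) :
    e ∈ G.edgeSet ↔ ∃ k i, i < a k ∧ e = s(v k i, v k (i + 1)) := by
  induction e with
  | _ x y => rw [mem_edgeSet, hL.adj]

lemma conn_cut {S : Set (Sym2 X)} (hS : IsSubtreeSet G S) (P : X → Prop)
    (hP : ∀ x y, s(x, y) ∈ S → P x → P y) {e e' : Sym2 X} {x y : X} (he : e ∈ S) (hx : x ∈ e)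
    (he' : e' ∈ S) (hy : y ∈ e') (h : P x) : P y := by
  obtain ⟨p⟩ := hS.2.2.preconnected ⟨x, e, he, hx⟩ ⟨y, e', he', hy⟩
  have key : ∀ (x y : {v | ∃ e ∈ S, v ∈ e})
      (p : ((SimpleGraph.fromEdgeSet S).induce {v | ∃ e ∈ S, v ∈ e}).Walk x y),
      P x.1 → P y.1 := by
    intro x y p
    induction p with
    | nil => exact id
    | cons hadj _ ih =>
      intro hx
      refine ih (hP _ _ ?_ hx)
      exact ((fromEdgeSet_adj S).1 hadj).1
  exact key _ _ p h

lemma legs_cut (hL : IsLegs G a v) {S : Set (Sym2 X)} (hS : IsSubtreeSet G S) {k k' : Fin d}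
    {i j j' : ℕ} (hj : j < a k) (hj' : j' < a k') (hij : i < j)
    (hi : s(v k i, v k (i + 1)) ∉ S) (hjS : s(v k j, v k (j + 1)) ∈ S)
    (hjS' : s(v k' j', v k' (j' + 1)) ∈ S) : k' = k ∧ i < j' := by
  have h := conn_cut hS (fun x => ∃ m, i < m ∧ m ≤ a k ∧ x = v k m) ?_ hjS
    (Sym2.mem_mk_right _ _) hjS' (Sym2.mem_mk_right _ _) ⟨j + 1, by omega, hj, rfl⟩
  · obtain ⟨m, hm, hma, h⟩ := h
    rcases hL.inj _ _ _ _ hj' hma h with h | ⟨rfl, h⟩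
    · omega
    · refine ⟨rfl, ?_⟩
      by_contra hcon
      have : j' = i := by omega
      exact hi (this ▸ hjS')
  · rintro x y hxy ⟨m, hm, hma, rfl⟩
    obtain ⟨k1, n, hn, he⟩ := (legs_edgeSet hL _).1 (hS.2.1 hxy)
    have hmem := legs_mem hL hma hn (he ▸ Sym2.mem_mk_left _ _)
    rcases hmem with hmem | ⟨rfl, hmem⟩
    · omega
    · have hne : n ≠ i := by
        rintro rfl
        exact hi (he ▸ hxy)
      have hy : y ∈ s(v k n, v k (n + 1)) := he ▸ Sym2.mem_mk_right _ _
      rcases Sym2.mem_iff.1 hy with hy | hy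
      · exact ⟨n, by omega, by omega, hy⟩
      · exact ⟨n + 1, by omega, by omega, hy⟩

/-- The edge set consisting of the first `b k` edges of each leg `k`. -/
def legSet (v : Fin d → ℕ → X) (b : Fin d → ℕ) : Set (Sym2 X) :=
  {e | ∃ k i, i < b k ∧ e = s(v k i, v k (i + 1))}

lemma mem_legSet (hL : IsLegs G a v) {b : Fin d → ℕ} (hb : ∀ k, b k ≤ a k) {k : Fin d} {i : ℕ}
    (hi : i < a k) : s(v k i, v k (i + 1)) ∈ legSet v b ↔ i < b k := by
  constructor
  · rintro ⟨k', i', hi', h⟩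
    obtain ⟨rfl, rfl⟩ := legs_edge_inj hL hi (lt_of_lt_of_le hi' (hb k')) h
    exact hi'
  · intro h
    exact ⟨k, i, h, rfl⟩

lemma legSet_subtree (hL : IsLegs G a v) {b : Fin d → ℕ} (hb : ∀ k, b k ≤ a k) (k0 : Fin d)
    (hk0 : 0 < b k0) : IsSubtreeSet G (legSet v b) := by
  have hmem : ∀ k i, 0 < b k → i ≤ b k → v k i ∈ {x | ∃ e ∈ legSet v b, x ∈ e} := by
    intro k i hk hi
    rcases i with _ | i
    · exact ⟨_, ⟨k, 0, hk, rfl⟩, Sym2.mem_mk_left _ _⟩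
    · exact ⟨_, ⟨k, i, hi, rfl⟩, Sym2.mem_mk_right _ _⟩
  refine ⟨⟨_, k0, 0, hk0, rfl⟩, ?_, ?_⟩
  · rintro e ⟨k, i, hi, rfl⟩
    exact (legs_edgeSet hL _).2 ⟨k, i, lt_of_lt_of_le hi (hb k), rfl⟩
  · rw [connected_iff_exists_forall_reachable]
    refine ⟨⟨v k0 0, hmem k0 0 hk0 (Nat.zero_le _)⟩, ?_⟩
    have key : ∀ k i (hk : 0 < b k) (hi : i ≤ b k),
        ((SimpleGraph.fromEdgeSet (legSet v b)).induce {x | ∃ e ∈ legSet v b, x ∈ e}).Reachable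
          ⟨v k0 0, hmem k0 0 hk0 (Nat.zero_le _)⟩ ⟨v k i, hmem k i hk hi⟩ := by
      intro k i hk
      induction i with
      | zero =>
        intro hi
        have : (⟨v k0 0, hmem k0 0 hk0 (Nat.zero_le _)⟩ : {x | ∃ e ∈ legSet v b, x ∈ e}) =
          ⟨v k 0, hmem k 0 hk hi⟩ := Subtype.ext (hL.zero _ _)
        rw [this]
      | succ i ih =>
        intro hi
        refine (ih (by omega)).trans (Adj.reachable ?_)
        refine (fromEdgeSet_adj _).2 ⟨⟨k, i, hi, rfl⟩, ?_⟩
        intro h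
        have := hb k
        rcases hL.inj _ _ _ _ (by omega) (by omega) h with h | h <;> omega
    rintro ⟨x, e, ⟨k, i, hi, rfl⟩, hx⟩
    rcases Sym2.mem_iff.1 hx with rfl | rfl
    · exact key k i (by omega) (by omega)
    · exact key k (i + 1) (by omega) (by omega)

lemma legSet_leafEdges (hL : IsLegs G a v) {b : Fin d → ℕ} (hb : ∀ k, b k ≤ a k)
    (h2 : ∀ k, ∃ k', k' ≠ k ∧ 0 < b k') :
    (leafEdges (legSet v b)).ncard = (Finset.univ.filter (fun k => 0 < b k)).card := by
  have himg : leafEdges (legSet v b) =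
      (fun k => s(v k (b k - 1), v k (b k - 1 + 1))) '' {k | 0 < b k} := by
    ext e
    constructor
    · rintro ⟨⟨k, i, hi, rfl⟩, w, hw, hleaf⟩
      have hbk := hb k
      refine ⟨k, by simp only [Set.mem_ofPred_eq]; omega, ?_⟩
      rcases Sym2.mem_iff.1 hw with rfl | rfl
      · exfalso
        rcases i with _ | i
        · obtain ⟨k', hk', hbk'⟩ := h2 k
          have h1 := hleaf _ ⟨k', 0, hbk', rfl⟩ (by rw [hL.zero k k']; exact Sym2.mem_mk_left _ _)
          exact hk' (legs_edge_inj hL (hL.pos k') (hL.pos k) h1).1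
        · have h1 := hleaf _ ⟨k, i, by omega, rfl⟩ (Sym2.mem_mk_right _ _)
          have := (legs_edge_inj hL (by omega) (by omega) h1).2
          omega
      · by_cases hlt : i + 1 < b k
        · have h1 := hleaf _ ⟨k, i + 1, hlt, rfl⟩ (Sym2.mem_mk_left _ _)
          have := (legs_edge_inj hL (by omega) (by omega) h1).2
          omega
        · have : b k - 1 = i := by omega
          simp only [this]
    · rintro ⟨k, hk, rfl⟩
      simp only [Set.mem_ofPred_eq] at hk
      have hbk := hb k
      refine ⟨⟨k, b k - 1, by omega, rfl⟩, v k (b k - 1 + 1), Sym2.mem_mk_right _ _, ?_⟩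
      rintro e' ⟨k', i', hi', rfl⟩ hmem
      have hbk' := hb k'
      rcases legs_mem hL (by omega) (by omega) hmem with h | ⟨rfl, h⟩
      · omega
      · have : b k - 1 = i' := by omega
        simp only [this]
  rw [himg, Set.InjOn.ncard_image]
  · rw [← Set.ncard_coe_finset]
    congr 1
    ext k
    simp
  · intro k hk k' hk' h
    simp only [Set.mem_ofPred_eq] at hk hk'
    have := hb k
    have := hb k'
    exact (legs_edge_inj hL (by omega) (by omega) h).1

lemma one_leg_leafEdges (hL : IsLegs G a v) {S : Set (Sym2 X)} (hS : IsSubtreeSet G S) (k : Fin d)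
    (hk : ∀ e ∈ S, ∃ i, i < a k ∧ e = s(v k i, v k (i + 1))) :
    (leafEdges S).ncard ≤ 2 := by
  classical
  set I := (Finset.range (a k)).filter (fun i => s(v k i, v k (i + 1)) ∈ S) with hI
  have hmem : ∀ i, i ∈ I ↔ i < a k ∧ s(v k i, v k (i + 1)) ∈ S := by
    intro i; simp [hI]
  have hne : I.Nonempty := by
    obtain ⟨e, he⟩ := hS.1
    obtain ⟨i, hi, rfl⟩ := hk e he
    exact ⟨i, (hmem i).2 ⟨hi, he⟩⟩
  obtain ⟨M, hM, hmax⟩ := Finset.exists_max_image I id hne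
  obtain ⟨m, hm, hmin⟩ := Finset.exists_min_image I id hne
  simp only [id] at hmax hmin
  have hM' := (hmem M).1 hM
  have hm' := (hmem m).1 hm
  have hsub : leafEdges S ⊆ {s(v k M, v k (M + 1)), s(v k m, v k (m + 1))} := by
    rintro e ⟨heS, w, hw, hleaf⟩
    obtain ⟨i, hi, rfl⟩ := hk e heS
    have hiM := hmax i ((hmem i).2 ⟨hi, heS⟩)
    have him := hmin i ((hmem i).2 ⟨hi, heS⟩)
    rcases Sym2.mem_iff.1 hw with rfl | rfl
    · right
      by_cases hlt : m < i
      · exfalso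
        obtain ⟨j, rfl⟩ : ∃ j, i = j + 1 := ⟨i - 1, by omega⟩
        have hj : s(v k j, v k (j + 1)) ∉ S := by
          intro hjS
          have h1 := hleaf _ hjS (Sym2.mem_mk_right _ _)
          have := (legs_edge_inj hL (by omega) (by omega) h1).2
          omega
        have := (legs_cut hL hS hi hm'.1 (Nat.lt_succ_self j) hj heS hm'.2).2
        omega
      · have : i = m := by omega
        rw [this]; rfl
    · left
      by_cases hlt : i < M
      · exfalso
        have hj : s(v k (i + 1), v k (i + 1 + 1)) ∉ S := by
          intro hjS
          have h1 := hleaf _ hjS (Sym2.mem_mk_left _ _)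
          have := (legs_edge_inj hL (by omega) (by omega) h1).2
          omega
        have hne : i + 1 ≠ M := by
          rintro rfl
          exact hj hM'.2
        have := (legs_cut hL hS hM'.1 hi (by omega : i + 1 < M) hj hM'.2 heS).2
        omega
      · have : i = M := by omega
        rw [this]
  refine (Set.ncard_le_ncard hsub (Set.toFinite _)).trans ?_
  exact (Set.ncard_insert_le _ _).trans (by simp)

lemma subtree_eq_legSet (hL : IsLegs G a v) {S : Set (Sym2 X)} (hS : IsSubtreeSet G S)
    (h2 : ∀ k, ∃ k' i, k' ≠ k ∧ i < a k' ∧ s(v k' i, v k' (i + 1)) ∈ S) :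
    ∃ b : Fin d → ℕ, (∀ k, b k ≤ a k) ∧ (∀ k, ∃ k', k' ≠ k ∧ 0 < b k') ∧ S = legSet v b := by
  classical
  have hex : ∀ k, ∃ i, a k ≤ i ∨ s(v k i, v k (i + 1)) ∉ S := fun k => ⟨a k, Or.inl le_rfl⟩
  have hlt : ∀ k i, i < Nat.find (hex k) → i < a k ∧ s(v k i, v k (i + 1)) ∈ S := by
    intro k i hi
    have := Nat.find_min (hex k) hi
    push Not at this
    exact this
  have hb : ∀ k, Nat.find (hex k) ≤ a k := fun k => Nat.find_min' (hex k) (Or.inl le_rfl)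
  have hge : ∀ k i, i < a k → s(v k i, v k (i + 1)) ∈ S → i < Nat.find (hex k) := by
    intro k i hi hiS
    by_contra hcon
    rcases Nat.find_spec (hex k) with h | h
    · omega
    · have hne : Nat.find (hex k) ≠ i := fun heq => h (by rw [heq]; exact hiS)
      obtain ⟨k', i', hk', hi', hS'⟩ := h2 k
      exact hk' (legs_cut hL hS hi hi' (by omega) h hiS hS').1
  refine ⟨fun k => Nat.find (hex k), hb, ?_, ?_⟩
  · intro k
    obtain ⟨k', i', hk', hi', hS'⟩ := h2 k
    exact ⟨k', hk', lt_of_le_of_lt (Nat.zero_le _) (hge k' i' hi' hS')⟩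
  · ext e
    constructor
    · intro he
      obtain ⟨k, i, hi, rfl⟩ := (legs_edgeSet hL e).1 (hS.2.1 he)
      exact ⟨k, i, hge k i hi he, rfl⟩
    · rintro ⟨k, i, hi, rfl⟩
      exact (hlt k i hi).2

lemma subtree_classify (hL : IsLegs G a v) (hd : 3 ≤ d) {S : Set (Sym2 X)}
    (hS : IsSubtreeSet G S) : (leafEdges S).ncard < d ∨ ((leafEdges S).ncard = d ∧
      ∃ b : Fin d → ℕ, (∀ k, 1 ≤ b k ∧ b k ≤ a k) ∧ S = legSet v b) := by
  by_cases h2 : ∀ k, ∃ k' i, k' ≠ k ∧ i < a k' ∧ s(v k' i, v k' (i + 1)) ∈ S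
  · obtain ⟨b, hb, hb2, rfl⟩ := subtree_eq_legSet hL hS h2
    rw [legSet_leafEdges hL hb hb2]
    by_cases hall : ∀ k, 0 < b k
    · right
      refine ⟨?_, b, fun k => ⟨hall k, hb k⟩, rfl⟩
      rw [Finset.filter_true_of_mem (fun k _ => hall k)]
      simp
    · left
      push Not at hall
      obtain ⟨k, hk⟩ := hall
      have : Finset.univ.filter (fun k => 0 < b k) ⊂ Finset.univ := by
        rw [Finset.ssubset_univ_iff]
        intro h
        have := h ▸ Finset.mem_univ k
        simp at this
        omega
      simpa using Finset.card_lt_card this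
  · left
    push Not at h2
    obtain ⟨k, hk⟩ := h2
    refine lt_of_le_of_lt (one_leg_leafEdges hL hS k ?_) (by omega)
    intro e he
    obtain ⟨k', i, hi, rfl⟩ := (legs_edgeSet hL e).1 (hS.2.1 he)
    by_cases hkk : k' = k
    · subst hkk; exact ⟨i, hi, rfl⟩
    · exact absurd he (hk k' i hkk hi)

lemma legs_count_zero [Fintype X] (hL : IsLegs G a v) (hd : 3 ≤ d) (n j : ℕ) (hj : d < j) :
    subtreeCount G n j = 0 := by
  classical
  unfold subtreeCount
  rw [Finset.card_eq_zero, Finset.filter_eq_empty_iff]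
  rintro S _ ⟨hS, _, hl⟩
  rcases subtree_classify hL hd hS with h | h
  · omega
  · omega

lemma legs_count [Fintype X] (hL : IsLegs G a v) (hd : 3 ≤ d) (n : ℕ) :
    subtreeCount G n d = ((Fintype.piFinset (fun k => Finset.Icc 1 (a k))).filter
        (fun b => ∑ k, b k = n)).card := by
  classical
  let F : (Fin d → ℕ) → Finset (Sym2 X) := fun b =>
    (Finset.univ.sigma (fun k => Finset.range (b k))).image
      (fun p => s(v p.1 p.2, v p.1 (p.2 + 1)))
  have hF : ∀ b, (F b : Set (Sym2 X)) = legSet v b := by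
    intro b
    ext e
    simp only [F, legSet, Finset.coe_image, Set.mem_image, Finset.mem_coe, Finset.mem_sigma,
      Finset.mem_univ, Finset.mem_range, true_and, Set.mem_ofPred_eq]
    constructor
    · rintro ⟨p, hp, rfl⟩; exact ⟨p.1, p.2, hp, rfl⟩
    · rintro ⟨k, i, hi, rfl⟩; exact ⟨⟨k, i⟩, hi, rfl⟩
  have hFc : ∀ b, (∀ k, b k ≤ a k) → (F b).card = ∑ k, b k := by
    intro b hb
    rw [Finset.card_image_of_injOn, Finset.card_sigma]
    · simp
    · rintro ⟨k, i⟩ hp ⟨k', i'⟩ hp' h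
      simp only [Finset.mem_coe, Finset.mem_sigma, Finset.mem_univ, Finset.mem_range,
        true_and] at hp hp'
      obtain ⟨rfl, rfl⟩ := legs_edge_inj hL (lt_of_lt_of_le hp (hb k))
        (lt_of_lt_of_le hp' (hb k')) h
      rfl
  unfold subtreeCount
  symm
  refine Finset.card_bij (fun b _ => F b) ?_ ?_ ?_
  · intro b hb
    simp only [Finset.mem_filter, Fintype.mem_piFinset, Finset.mem_Icc] at hb
    have hb' : ∀ k, b k ≤ a k := fun k => (hb.1 k).2
    simp only [Finset.mem_filter, Finset.mem_powerset, Finset.subset_univ, true_and]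
    rw [hF, hFc b hb', legSet_leafEdges hL hb']
    · refine ⟨legSet_subtree hL hb' ⟨0, by omega⟩ (hb.1 _).1, hb.2, ?_⟩
      rw [Finset.filter_true_of_mem (fun k _ => Nat.lt_of_succ_le (hb.1 k).1)]
      simp
    · intro k
      have : Nontrivial (Fin d) := Fin.nontrivial_iff_two_le.2 (by omega)
      obtain ⟨k', hk'⟩ := exists_ne k
      exact ⟨k', hk', (hb.1 k').1⟩
  · intro b hb b' hb' h
    simp only [Finset.mem_filter, Fintype.mem_piFinset, Finset.mem_Icc] at hb hb'
    have h1 : legSet v b = legSet v b' := by rw [← hF, ← hF]; exact congrArg _ h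
    funext k
    have hk := (hb.1 k).2
    have hk' := (hb'.1 k).2
    have hm : ∀ i, i < a k → (i < b k ↔ i < b' k) := by
      intro i hi
      rw [← mem_legSet hL (fun k => (hb.1 k).2) hi, h1, mem_legSet hL (fun k => (hb'.1 k).2) hi]
    by_contra hne
    rcases Nat.lt_or_gt_of_ne hne with hlt | hlt
    · have := (hm (b k) (by omega)).2 hlt
      omega
    · have := (hm (b' k) (by omega)).1 hlt
      omega
  · intro S hS
    simp only [Finset.mem_filter, Finset.mem_powerset, Finset.subset_univ, true_and] at hS
    obtain ⟨hS, hn, hl⟩ := hS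
    rcases subtree_classify hL hd hS with h | ⟨-, b, hb, h⟩
    · omega
    · rw [← hF] at h
      have h' := Finset.coe_injective h
      refine ⟨b, ?_, h'.symm⟩
      simp only [Finset.mem_filter, Fintype.mem_piFinset, Finset.mem_Icc]
      refine ⟨hb, ?_⟩
      rw [← hFc b (fun k => (hb k).2), ← h', hn]

lemma legs_count_pos [Fintype X] (hL : IsLegs G a v) (hd : 3 ≤ d) :
    0 < subtreeCount G (∑ k, a k) d := by
  rw [legs_count hL hd, Finset.card_pos]
  refine ⟨a, ?_⟩
  simp only [Finset.mem_filter, Fintype.mem_piFinset, Finset.mem_Icc, and_true]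
  exact fun k => ⟨hL.pos k, le_rfl⟩

end Counting

/-- Two spiders with the same subtree polynomial are isomorphic. -/
theorem stmt_13 [Fintype V] [Fintype W] (T : SimpleGraph V) (U : SimpleGraph W)
    [DecidableRel T.Adj] [DecidableRel U.Adj]
    (hT : IsSpider T) (hU : IsSpider U)
    (h : ∀ i j : ℕ, subtreeCount T i j = subtreeCount U i j) :
    Nonempty (T ≃g U) := by
  obtain ⟨d, a, v, hd, hL⟩ := exists_legs T hT
  obtain ⟨d', a', w, hd', hL'⟩ := exists_legs U hU
  have h1 : d ≤ d' := by
    by_contra hlt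
    have h2 := legs_count_pos hL hd
    rw [h, legs_count_zero hL' hd' _ _ (by omega)] at h2
    omega
  have h2 : d' ≤ d := by
    by_contra hlt
    have h2 := legs_count_pos hL' hd'
    rw [← h, legs_count_zero hL hd _ _ (by omega)] at h2
    omega
  obtain rfl : d = d' := le_antisymm h1 h2
  obtain ⟨σ, hσ⟩ := exists_perm_of_counts a a' hL.pos hL'.pos (fun n => by
    rw [← legs_count hL hd, ← legs_count hL' hd', h])
  exact iso_of_legs hL hL' σ hσ
end

section
/- Let T and U be spiders, each with n vertices, and suppose that for every partition of n into exactly two parts (n−a, a), N_{(n−a,a)}(T) = N_{(n−a,a)}(U); equivalently, for every a with 1 ≤ a ≤ ⌊n/2⌋, the number of edges e of T such that the smaller of the two components of T − e has exactly a vertices equals the corresponding number for U. Then T and U are isomorphic as graphs. (That is, the two-part portion of the chromatic symmetric function determines a spider up to isomorphism.) -/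
open SimpleGraph Finset

variable {V : Type*} {W : Type*}

/-- Rooted-tree structure: centre `c`, parent map `p`, depth `d`. -/
structure PS (T : SimpleGraph V) (c : V) (p : V → V) (d : V → ℕ) : Prop where
  pc : p c = c
  dc : d c = 0
  dp : ∀ v, v ≠ c → d (p v) + 1 = d v
  adj : ∀ v w, T.Adj v w ↔ (v ≠ c ∧ p v = w) ∨ (w ≠ c ∧ p w = v)

open Classical in
/-- Descendants of `v` under the parent map. -/
noncomputable def desc [Fintype V] (p : V → V) (v : V) : Finset V :=
  Finset.univ.filter (fun w => ∃ k : ℕ, p^[k] w = v)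

theorem mem_desc [Fintype V] {p : V → V} {v w : V} : w ∈ desc p v ↔ ∃ k : ℕ, p^[k] w = v := by
  classical simp [desc]

theorem self_mem_desc [Fintype V] (p : V → V) (v : V) : v ∈ desc p v := mem_desc.2 ⟨0, rfl⟩

theorem spider_PS [Fintype V] (T : SimpleGraph V) [DecidableRel T.Adj] (hT : IsSpider T) :
    ∃ c p d, PS T c p d ∧ (∀ v w, p v ≠ c → p v = p w → v = w) ∧ 3 ≤ T.degree c := by
  classical
  obtain ⟨hT, c, hc, huniq⟩ := hT
  have hex : ∀ v, ∃ w, (v = c → w = c) ∧ (v ≠ c → T.Adj v w ∧ T.dist w c + 1 = T.dist v c) := by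
    intro v
    by_cases hv : v = c
    · exact ⟨c, fun _ => rfl, fun h => absurd hv h⟩
    · obtain ⟨q, hq⟩ := hT.1.exists_walk_length_eq_dist v c
      cases q with
      | nil => exact absurd rfl hv
      | cons h q =>
        rename_i w
        refine ⟨w, fun h => absurd h hv, fun _ => ⟨h, ?_⟩⟩
        have h1 := SimpleGraph.dist_le q
        have h2 := hT.1.dist_triangle (u := v) (v := w) (w := c)
        have h3 : T.dist v w = 1 := SimpleGraph.dist_eq_one_iff_adj.2 h
        simp only [SimpleGraph.Walk.length_cons] at hq
        omega
  choose p hp0 hp using hex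
  have hinj : ∀ v w, v ≠ c → w ≠ c → s(v, p v) = s(w, p w) → v = w := by
    intro v w hv hw h
    rw [Sym2.eq_iff] at h
    rcases h with h | ⟨h1, h2⟩
    · exact h.1
    · have := (hp v hv).2
      have := (hp w hw).2
      rw [← h1] at this
      rw [h2] at *
      omega
  have hsurj : ∀ e ∈ T.edgeFinset, ∃ v, v ≠ c ∧ s(v, p v) = e := by
    have hcard := hT.card_edgeFinset
    have himg : (Finset.univ.erase c).image (fun v => s(v, p v)) = T.edgeFinset := by
      apply Finset.eq_of_subset_of_card_le
      · intro e he
        simp only [Finset.mem_image, Finset.mem_erase, Finset.mem_univ, and_true] at he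
        obtain ⟨v, hv, rfl⟩ := he
        simpa using (hp v hv).1
      · rw [Finset.card_image_of_injOn]
        · rw [Finset.card_erase_of_mem (Finset.mem_univ c), Finset.card_univ]
          omega
        · intro v hv w hw h
          exact hinj v w (by simpa using hv) (by simpa using hw) h
    intro e he
    rw [← himg] at he
    simpa using he
  have hPS : PS T c p (fun v => T.dist v c) := by
    refine ⟨hp0 c rfl, by simp, fun v hv => (hp v hv).2, ?_⟩
    intro v w
    constructor
    · intro h
      obtain ⟨x, hx, he⟩ := hsurj s(v, w) (by simpa using h)
      rw [Sym2.eq_iff] at he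
      rcases he with ⟨rfl, h5⟩ | ⟨rfl, h5⟩
      · exact Or.inl ⟨hx, h5⟩
      · exact Or.inr ⟨hx, h5⟩
    · rintro (⟨h, rfl⟩ | ⟨h, rfl⟩)
      · exact (hp v h).1
      · exact (hp w h).1.symm
  refine ⟨c, p, _, hPS, ?_, hc⟩
  intro v w hx hvw
  by_contra hne
  have hv : v ≠ c := by rintro rfl; exact hx (hp0 _ rfl)
  have hw : w ≠ c := by rintro rfl; exact hx (hvw ▸ hp0 _ rfl)
  apply hx
  apply huniq
  have h1 := hp v hv
  have h2 := hp w hw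
  have h3 := hp (p v) hx
  rw [← hvw] at h2
  have hsub : ({v, w, p (p v)} : Finset V) ⊆ T.neighborFinset (p v) := by
    intro x hxm
    simp only [Finset.mem_insert, Finset.mem_singleton] at hxm
    rw [SimpleGraph.mem_neighborFinset]
    rcases hxm with rfl | rfl | rfl
    · exact h1.1.symm
    · exact h2.1.symm
    · exact h3.1
  have h4 : v ≠ p (p v) := by intro h; rw [← h] at h3; omega
  have h5 : w ≠ p (p v) := by intro h; rw [← h] at h3; omega
  have := Finset.card_le_card hsub
  rw [Finset.card_eq_three.2 ⟨v, w, p (p v), hne, h4, h5, rfl⟩] at this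
  exact this

section
variable {T : SimpleGraph V} {c : V} {p : V → V} {d : V → ℕ}

theorem PS.d_iter (h : PS T c p d) (k : ℕ) (v : V) : d (p^[k] v) = d v - k := by
  induction k with
  | zero => simp
  | succ k ih =>
    rw [Function.iterate_succ_apply']
    by_cases hc : p^[k] v = c
    · rw [hc, h.dc] at ih
      rw [hc, h.pc, h.dc]; omega
    · have := h.dp _ hc
      omega

theorem PS.d_eq_zero (h : PS T c p d) {v : V} (hv : d v = 0) : v = c := by
  by_contra hne
  have := h.dp v hne
  omega

theorem PS.d_pos (h : PS T c p d) {v : V} (hv : v ≠ c) : 1 ≤ d v := by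
  have := h.dp v hv
  omega

theorem PS.iter_c (h : PS T c p d) (k : ℕ) : p^[k] c = c := Function.iterate_fixed h.pc k

theorem PS.iter_d (h : PS T c p d) (v : V) : p^[d v] v = c :=
  h.d_eq_zero (by rw [h.d_iter]; omega)

theorem PS.antisymm [Fintype V] (h : PS T c p d) {v w : V} (h1 : v ∈ desc p w)
    (h2 : w ∈ desc p v) : v = w := by
  obtain ⟨k, hk⟩ := mem_desc.1 h1
  obtain ⟨l, hl⟩ := mem_desc.1 h2
  have a1 := h.d_iter k v
  have a2 := h.d_iter l w
  rw [hk] at a1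
  rw [hl] at a2
  by_cases hk0 : k = 0
  · subst hk0; exact hk
  · have : d v = 0 := by omega
    have hv := h.d_eq_zero this
    rw [← hk, hv, h.iter_c]

theorem PS.c_not_mem [Fintype V] (h : PS T c p d) {v : V} (hv : v ≠ c) : c ∉ desc p v := by
  intro hm
  obtain ⟨k, hk⟩ := mem_desc.1 hm
  rw [h.iter_c] at hk
  exact hv hk.symm

theorem desc_trans [Fintype V] {p : V → V} {u v : V} (h : v ∈ desc p u) : desc p v ⊆ desc p u := by
  intro w hw
  obtain ⟨k, hk⟩ := mem_desc.1 h
  obtain ⟨l, hl⟩ := mem_desc.1 hw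
  exact mem_desc.2 ⟨k + l, by rw [Function.iterate_add_apply, hl, hk]⟩

/-- If the edge `v - p v` is missing from `A`, then descendants of `v` are closed. -/
theorem PS.closed [Fintype V] (h : PS T c p d) {A : Set (Sym2 V)} (hA : A ⊆ T.edgeSet) {v : V}
    (hv : v ≠ c) (hvA : s(v, p v) ∉ A) {x y : V}
    (hxy : (SimpleGraph.fromEdgeSet A).Reachable x y) : x ∈ desc p v → y ∈ desc p v := by
  obtain ⟨q⟩ := hxy
  induction q with
  | nil => exact id
  | cons hadj q ih =>
    rename_i a b e
    intro ha
    apply ih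
    rw [SimpleGraph.fromEdgeSet_adj] at hadj
    have hT : T.Adj a b := hA hadj.1
    rcases (h.adj a b).1 hT with ⟨h1, h2⟩ | ⟨h1, h2⟩
    · obtain ⟨k, hk⟩ := mem_desc.1 ha
      cases k with
      | zero =>
        simp only [Function.iterate_zero, id] at hk
        subst hk; subst h2
        exact absurd hadj.1 hvA
      | succ k =>
        rw [Function.iterate_succ_apply, h2] at hk
        exact mem_desc.2 ⟨k, hk⟩
    · exact desc_trans ha (mem_desc.2 ⟨1, h2⟩)

theorem PS.reach [Fintype V] {B : SimpleGraph V} (x : V) (k : ℕ)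
    (hB : ∀ j < k, B.Adj (p^[j] x) (p^[j+1] x)) : B.Reachable x (p^[k] x) := by
  induction k with
  | zero => exact SimpleGraph.Reachable.refl _
  | succ k ih =>
    exact (ih fun j hj => hB j (by omega)).trans (hB k (by omega)).reachable

theorem PS.adj_p (h : PS T c p d) {v : V} (hv : v ≠ c) : T.Adj v (p v) :=
  (h.adj _ _).2 (Or.inl ⟨hv, rfl⟩)

theorem PS.edge_inj (h : PS T c p d) {v w : V} (hv : v ≠ c) (hw : w ≠ c)
    (he : s(v, p v) = s(w, p w)) : v = w := by
  rw [Sym2.eq_iff] at he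
  rcases he with he | ⟨h1, h2⟩
  · exact he.1
  · have a := h.dp v hv
    have b := h.dp w hw
    rw [← h1] at b
    rw [h2] at a
    omega

theorem PS.iter_ne (h : PS T c p d) {x : V} {j : ℕ} (hj : j < d x) : p^[j] x ≠ c := by
  intro hc
  have := h.d_iter j x
  rw [hc, h.dc] at this
  omega

/-- Components after deleting one edge. -/
theorem PS.reach_v [Fintype V] (h : PS T c p d) {v : V} (hv : v ≠ c) {x : V}
    (hx : x ∈ desc p v) :
    (SimpleGraph.fromEdgeSet (T.edgeSet \ {s(v, p v)})).Reachable x v := by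
  obtain ⟨k, hk⟩ := mem_desc.1 hx
  have hkd := h.d_iter k x
  rw [hk] at hkd
  have := h.d_pos hv
  rw [← hk]
  apply PS.reach
  intro j hj
  have hne : p^[j] x ≠ c := h.iter_ne (by omega)
  rw [Function.iterate_succ_apply', SimpleGraph.fromEdgeSet_adj]
  refine ⟨⟨h.adj_p hne, ?_⟩, (h.adj_p hne).ne⟩
  rw [hk]
  intro he
  have := h.edge_inj hne hv he
  have h2 := h.d_iter j x
  rw [this] at h2
  omega

theorem PS.reach_c [Fintype V] (h : PS T c p d) {v : V} (hv : v ≠ c) {x : V}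
    (hx : x ∉ desc p v) :
    (SimpleGraph.fromEdgeSet (T.edgeSet \ {s(v, p v)})).Reachable x c := by
  rw [← h.iter_d x]
  apply PS.reach
  intro j hj
  have hne : p^[j] x ≠ c := h.iter_ne hj
  rw [Function.iterate_succ_apply', SimpleGraph.fromEdgeSet_adj]
  refine ⟨⟨h.adj_p hne, ?_⟩, (h.adj_p hne).ne⟩
  intro he
  rw [Set.mem_singleton_iff] at he
  exact hx (mem_desc.2 ⟨j, h.edge_inj hne hv he⟩)

open Classical in
theorem PS.type_single [Fintype V] (h : PS T c p d) {v : V} (hv : v ≠ c) (A : Finset (Sym2 V))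
    (hA : (A : Set (Sym2 V)) = T.edgeSet \ {s(v, p v)}) :
    edgeSetType A = {(desc p v).card, Fintype.card V - (desc p v).card} := by
  unfold edgeSetType
  rw [hA]
  set B := SimpleGraph.fromEdgeSet (T.edgeSet \ {s(v, p v)}) with hB
  have hcl : ∀ {x y : V}, B.Reachable x y → x ∈ desc p v → y ∈ desc p v := fun hxy =>
    h.closed Set.sdiff_subset hv (by simp) hxy
  have hne : B.connectedComponentMk v ≠ B.connectedComponentMk c := by
    intro he
    exact h.c_not_mem hv (hcl (SimpleGraph.ConnectedComponent.exact he) (self_mem_desc p v))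
  have himg : (Finset.univ : Finset V).image (fun x => B.connectedComponentMk x) =
      {B.connectedComponentMk v, B.connectedComponentMk c} := by
    ext C
    simp only [Finset.mem_image, Finset.mem_univ, true_and, Finset.mem_insert,
      Finset.mem_singleton]
    constructor
    · rintro ⟨x, rfl⟩
      by_cases hx : x ∈ desc p v
      · exact Or.inl (SimpleGraph.ConnectedComponent.sound (h.reach_v hv hx))
      · exact Or.inr (SimpleGraph.ConnectedComponent.sound (h.reach_c hv hx))
    · rintro (rfl | rfl)
      · exact ⟨_, rfl⟩
      · exact ⟨_, rfl⟩
  have hs1 : (B.connectedComponentMk v).supp = (desc p v : Set V) := by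
    ext x
    rw [SimpleGraph.ConnectedComponent.mem_supp_iff, SimpleGraph.ConnectedComponent.eq,
      Finset.mem_coe]
    exact ⟨fun hx => hcl hx.symm (self_mem_desc p v), fun hx => h.reach_v hv hx⟩
  have hs2 : (B.connectedComponentMk c).supp = (((desc p v)ᶜ : Finset V) : Set V) := by
    ext x
    rw [SimpleGraph.ConnectedComponent.mem_supp_iff, SimpleGraph.ConnectedComponent.eq,
      Finset.mem_coe, Finset.mem_compl]
    exact ⟨fun hx hm => h.c_not_mem hv (hcl hx hm), fun hx => h.reach_c hv hx⟩
  rw [himg, Finset.insert_val_of_notMem (by simpa using hne)]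
  simp only [Multiset.map_cons, Finset.singleton_val, Multiset.map_singleton]
  rw [hs1, hs2, Set.ncard_coe_finset, Set.ncard_coe_finset, Finset.card_compl]
  rfl

open Classical in
theorem PS.exists_single [Fintype V] (h : PS T c p d) (A : Finset (Sym2 V))
    (hA : (A : Set (Sym2 V)) ⊆ T.edgeSet) (hcard : (edgeSetType A).card = 2) :
    ∃ v, v ≠ c ∧ (A : Set (Sym2 V)) = T.edgeSet \ {s(v, p v)} := by
  unfold edgeSetType at hcard
  rw [Multiset.card_map, Finset.card_val] at hcard
  set B := SimpleGraph.fromEdgeSet (A : Set (Sym2 V)) with hB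
  have hm : ∀ x, B.connectedComponentMk x ∈ (Finset.univ : Finset V).image
    (fun x => B.connectedComponentMk x) := fun x => Finset.mem_image_of_mem _ (Finset.mem_univ x)
  have hnc : ∀ v, v ≠ c → s(v, p v) ∉ (A : Set (Sym2 V)) →
      B.connectedComponentMk v ≠ B.connectedComponentMk c := by
    intro v hv hvA he
    exact h.c_not_mem hv
      (h.closed hA hv hvA (SimpleGraph.ConnectedComponent.exact he) (self_mem_desc p v))
  have hex : ∃ v, v ≠ c ∧ s(v, p v) ∉ (A : Set (Sym2 V)) := by
    by_contra hno
    push Not at hno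
    have hsub : (Finset.univ : Finset V).image (fun x => B.connectedComponentMk x) ⊆
        {B.connectedComponentMk c} := by
      intro C hC
      simp only [Finset.mem_image, Finset.mem_univ, true_and] at hC
      obtain ⟨x, rfl⟩ := hC
      rw [Finset.mem_singleton]
      apply SimpleGraph.ConnectedComponent.sound
      rw [← h.iter_d x]
      apply PS.reach
      intro j hj
      have hne : p^[j] x ≠ c := h.iter_ne hj
      rw [Function.iterate_succ_apply', SimpleGraph.fromEdgeSet_adj]
      exact ⟨hno _ hne, (h.adj_p hne).ne⟩
    have := Finset.card_le_card hsub
    rw [hcard, Finset.card_singleton] at this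
    omega
  obtain ⟨v, hv, hvA⟩ := hex
  refine ⟨v, hv, ?_⟩
  apply Set.Subset.antisymm
  · intro e he
    refine ⟨hA he, ?_⟩
    rintro rfl
    exact hvA he
  · rintro e ⟨he, hev⟩
    by_contra heA
    have : ∃ w, w ≠ c ∧ s(w, p w) = e := by
      induction e with
      | _ x y =>
        rcases (h.adj x y).1 he with ⟨h1, h2⟩ | ⟨h1, h2⟩
        · exact ⟨x, h1, by rw [h2]⟩
        · exact ⟨y, h1, by rw [h2, Sym2.eq_swap]⟩
    obtain ⟨w, hw, rfl⟩ := this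
    have hvw : v ≠ w := by
      rintro rfl
      exact hev rfl
    have hne : B.connectedComponentMk v ≠ B.connectedComponentMk w := by
      intro he
      have hr := SimpleGraph.ConnectedComponent.exact he
      exact hvw (h.antisymm (h.closed hA hw heA hr.symm (self_mem_desc p w))
        (h.closed hA hv hvA hr (self_mem_desc p v)))
    have hsub : ({B.connectedComponentMk v, B.connectedComponentMk w, B.connectedComponentMk c} :
        Finset B.ConnectedComponent) ⊆
        (Finset.univ : Finset V).image (fun x => B.connectedComponentMk x) := by
      intro C hC
      simp only [Finset.mem_insert, Finset.mem_singleton] at hC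
      rcases hC with rfl | rfl | rfl <;> exact hm _
    have := Finset.card_le_card hsub
    rw [hcard, Finset.card_eq_three.2 ⟨_, _, _, hne, hnc v hv hvA, hnc w hw heA, rfl⟩] at this
    omega

theorem pair_eq {x n a : ℕ} (hx : x ≤ n) (ha : a ≤ n) :
    ({x, n - x} : Multiset ℕ) = {n - a, a} ↔ x = a ∨ x = n - a := by
  constructor
  · intro h
    have : x ∈ ({n - a, a} : Multiset ℕ) := by rw [← h]; simp
    simp at this
    tauto
  · rintro (rfl | rfl)
    · exact Multiset.pair_comm _ _
    · congr 2
      omega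

open Classical in
theorem PS.NCoeff_eq [Fintype V] (h : PS T c p d) {a : ℕ} (ha : a ≤ Fintype.card V) :
    NCoeff T {Fintype.card V - a, a} = ((Finset.univ : Finset V).filter (fun v => v ≠ c ∧
      ((desc p v).card = a ∨ (desc p v).card = Fintype.card V - a))).card := by
  unfold NCoeff
  symm
  have hcoe : ∀ v, (((Finset.univ : Finset (Sym2 V)).filter
      (fun e => e ∈ T.edgeSet \ {s(v, p v)}) : Finset (Sym2 V)) : Set (Sym2 V)) =
      T.edgeSet \ {s(v, p v)} := by
    intro v; ext e; simp
  apply Finset.card_bij (fun v _ => (Finset.univ : Finset (Sym2 V)).filter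
    (fun e => e ∈ T.edgeSet \ {s(v, p v)}))
  · intro v hv
    rw [Finset.mem_filter] at hv ⊢
    obtain ⟨-, hv, hd⟩ := hv
    refine ⟨by simp, ?_, ?_⟩
    · rw [hcoe]; exact Set.sdiff_subset
    · rw [h.type_single hv _ (hcoe v)]
      exact (pair_eq (Finset.card_le_univ _) ha).2 hd
  · intro v hv w hw he
    have hv := (Finset.mem_filter.1 hv).2.1
    have hw := (Finset.mem_filter.1 hw).2.1
    have he' : T.edgeSet \ {s(v, p v)} = T.edgeSet \ {s(w, p w)} := by
      rw [← hcoe v, ← hcoe w]; exact congrArg _ he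
    by_contra hne
    have : s(v, p v) ∈ T.edgeSet \ {s(w, p w)} :=
      ⟨h.adj_p hv, fun hh => hne (h.edge_inj hv hw hh)⟩
    rw [← he'] at this
    exact this.2 rfl
  · intro A hA
    obtain ⟨-, hA, ht⟩ := Finset.mem_filter.1 hA
    obtain ⟨v, hv, hAv⟩ := h.exists_single A hA (by rw [ht]; rfl)
    refine ⟨v, ?_, ?_⟩
    · rw [Finset.mem_filter]
      refine ⟨Finset.mem_univ _, hv, ?_⟩
      rw [h.type_single hv A hAv] at ht
      exact (pair_eq (Finset.card_le_univ _) ha).1 ht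
    · apply Finset.coe_injective
      rw [hcoe, hAv]

/-! ### Spider-specific part -/

theorem PS.cancel (h : PS T c p d) (hi : ∀ v w, p v ≠ c → p v = p w → v = w) (k : ℕ) {x y : V}
    (hxy : p^[k] x = p^[k] y) (hne : p^[k] x ≠ c) : x = y := by
  induction k with
  | zero => exact hxy
  | succ k ih =>
    rw [Function.iterate_succ_apply'] at hxy hne
    rw [Function.iterate_succ_apply'] at hxy
    apply ih (hi _ _ hne hxy)
    intro hc
    rw [hc, h.pc] at hne
    exact hne rfl

/-- The top vertex of the leg of `v`. -/
def legTop (p : V → V) (d : V → ℕ) (v : V) : V := p^[d v - 1] v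

theorem PS.leg_d (h : PS T c p d) {v : V} (hv : v ≠ c) : d (legTop p d v) = 1 := by
  unfold legTop
  rw [h.d_iter]
  have := h.d_pos hv
  omega

theorem PS.leg_ne (h : PS T c p d) {v : V} (hv : v ≠ c) : legTop p d v ≠ c := by
  intro hc
  have := h.leg_d hv
  rw [hc, h.dc] at this
  omega

theorem PS.leg_p (h : PS T c p d) {v : V} (hv : v ≠ c) : p (legTop p d v) = c := by
  apply h.d_eq_zero
  have := h.dp _ (h.leg_ne hv)
  have := h.leg_d hv
  omega

theorem PS.leg_of_p (h : PS T c p d) {v : V} (hv : v ≠ c) (hp : p v = c) :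
    legTop p d v = v := by
  have := h.dp v hv
  rw [hp, h.dc] at this
  unfold legTop
  rw [← this]
  rfl

theorem PS.leg_parent (h : PS T c p d) {v : V} (hp : p v ≠ c) :
    legTop p d (p v) = legTop p d v := by
  have hv : v ≠ c := by rintro rfl; exact hp h.pc
  have h1 := h.dp v hv
  have h2 := h.d_pos hp
  unfold legTop
  rw [← Function.iterate_succ_apply]
  congr 1
  congr 1
  omega

theorem PS.mem_leg [Fintype V] (v : V) : v ∈ desc p (legTop p d v) := mem_desc.2 ⟨_, rfl⟩

theorem PS.leg_of_mem [Fintype V] (h : PS T c p d) {u v : V} (hu : u ≠ c) (hpu : p u = c)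
    (hv : v ∈ desc p u) : v ≠ c ∧ legTop p d v = u := by
  obtain ⟨k, hk⟩ := mem_desc.1 hv
  have h1 := h.dp u hu
  rw [hpu, h.dc] at h1
  have h2 := h.d_iter k v
  rw [hk] at h2
  refine ⟨?_, ?_⟩
  · rintro rfl
    rw [h.dc] at h2
    omega
  · unfold legTop
    rw [← hk]
    congr 1
    congr 1
    omega

theorem PS.uniq_aux [Fintype V] (h : PS T c p d) (hi : ∀ v w, p v ≠ c → p v = p w → v = w)
    {v w : V} (hv : v ≠ c) (hw : w ≠ c) (hl : legTop p d v = legTop p d w)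
    (hc : (desc p v).card = (desc p w).card) (hd : d v ≤ d w) : v = w := by
  have hvp := h.d_pos hv
  have : v = p^[d w - d v] w := by
    apply h.cancel hi (d v - 1)
    · rw [← Function.iterate_add_apply]
      have : d v - 1 + (d w - d v) = d w - 1 := by omega
      rw [this]
      exact hl
    · exact h.leg_ne hv
  have hm : w ∈ desc p v := mem_desc.2 ⟨_, this.symm⟩
  have heq := Finset.eq_of_subset_of_card_le (desc_trans hm) hc.le
  exact h.antisymm (heq ▸ self_mem_desc p v) hm

theorem PS.uniq [Fintype V] (h : PS T c p d) (hi : ∀ v w, p v ≠ c → p v = p w → v = w)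
    {v w : V} (hv : v ≠ c) (hw : w ≠ c) (hl : legTop p d v = legTop p d w)
    (hc : (desc p v).card = (desc p w).card) : v = w := by
  rcases le_total (d v) (d w) with hd | hd
  · exact h.uniq_aux hi hv hw hl hc hd
  · exact (h.uniq_aux hi hw hv hl.symm hc.symm hd).symm

theorem PS.card_parent [Fintype V] (h : PS T c p d) (hi : ∀ v w, p v ≠ c → p v = p w → v = w)
    {v : V} (hp : p v ≠ c) : (desc p (p v)).card = (desc p v).card + 1 := by
  classical
  have hv : v ≠ c := by rintro rfl; exact hp h.pc
  have hnot : p v ∉ desc p v := by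
    intro hm
    have := h.antisymm hm (mem_desc.2 ⟨1, rfl⟩)
    have h1 := h.dp v hv
    rw [this] at h1
    omega
  rw [← Finset.card_insert_of_notMem hnot]
  congr 1
  ext x
  rw [Finset.mem_insert]
  constructor
  · intro hx
    obtain ⟨k, hk⟩ := mem_desc.1 hx
    cases k with
    | zero => exact Or.inl hk
    | succ k =>
      rw [Function.iterate_succ_apply'] at hk
      exact Or.inr (mem_desc.2 ⟨k, (hi _ _ hp hk.symm).symm⟩)
  · rintro (rfl | hx)
    · exact self_mem_desc _ _
    · exact desc_trans (mem_desc.2 ⟨1, rfl⟩) hx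

theorem desc_card_pos [Fintype V] (p : V → V) (v : V) : 1 ≤ (desc p v).card :=
  Finset.card_pos.2 ⟨v, self_mem_desc p v⟩

theorem PS.surj [Fintype V] (h : PS T c p d) (hi : ∀ v w, p v ≠ c → p v = p w → v = w)
    {u : V} (hu : u ≠ c) (hpu : p u = c) {b : ℕ} (hb : 1 ≤ b) (hbu : b ≤ (desc p u).card) :
    ∃ v, v ≠ c ∧ legTop p d v = u ∧ (desc p v).card = b := by
  have := Finset.surj_on_of_inj_on_of_card_le (s := desc p u)
    (t := Finset.Icc 1 (desc p u).card) (fun v _ => (desc p v).card)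
    (fun v hv => Finset.mem_Icc.2 ⟨desc_card_pos p v, Finset.card_le_card (desc_trans hv)⟩)
    (fun v w hv hw he => h.uniq hi (h.leg_of_mem hu hpu hv).1 (h.leg_of_mem hu hpu hw).1
      ((h.leg_of_mem hu hpu hv).2.trans (h.leg_of_mem hu hpu hw).2.symm) he)
    (by simp) b (Finset.mem_Icc.2 ⟨hb, hbu⟩)
  obtain ⟨v, hv, he⟩ := this
  exact ⟨v, (h.leg_of_mem hu hpu hv).1, (h.leg_of_mem hu hpu hv).2, he.symm⟩

open Classical in
/-- Leg tops whose leg has length at least `b`. -/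
noncomputable def legsGE [Fintype V] (c : V) (p : V → V) (b : ℕ) : Finset V :=
  Finset.univ.filter (fun u => (u ≠ c ∧ p u = c) ∧ b ≤ (desc p u).card)

theorem mem_legsGE [Fintype V] {b : ℕ} {u : V} :
    u ∈ legsGE c p b ↔ (u ≠ c ∧ p u = c) ∧ b ≤ (desc p u).card := by
  classical simp [legsGE]

open Classical in
theorem PS.count [Fintype V] (h : PS T c p d) (hi : ∀ v w, p v ≠ c → p v = p w → v = w)
    {b : ℕ} (hb : 1 ≤ b) :
    ((Finset.univ : Finset V).filter (fun v => v ≠ c ∧ (desc p v).card = b)).card =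
      (legsGE c p b).card := by
  apply Finset.card_bij (fun v _ => legTop p d v)
  · intro v hv
    obtain ⟨-, hv, he⟩ := Finset.mem_filter.1 hv
    rw [mem_legsGE]
    refine ⟨⟨h.leg_ne hv, h.leg_p hv⟩, ?_⟩
    rw [← he]
    exact Finset.card_le_card (desc_trans (PS.mem_leg v))
  · intro v hv w hw he
    obtain ⟨-, hv, he1⟩ := Finset.mem_filter.1 hv
    obtain ⟨-, hw, he2⟩ := Finset.mem_filter.1 hw
    exact h.uniq hi hv hw he (he1.trans he2.symm)
  · intro u hu
    obtain ⟨⟨h1, h2⟩, h3⟩ := mem_legsGE.1 hu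
    obtain ⟨v, hv, hl, hc⟩ := h.surj hi h1 h2 hb h3
    exact ⟨v, by simp [hv, hc], hl⟩

theorem legsGE_anti [Fintype V] {a b : ℕ} (hab : a ≤ b) :
    (legsGE c p b).card ≤ (legsGE c p a).card := by
  apply Finset.card_le_card
  intro u hu
  rw [mem_legsGE] at hu ⊢
  exact ⟨hu.1, hab.trans hu.2⟩

theorem PS.N_lt [Fintype V] (h : PS T c p d) (hi : ∀ v w, p v ≠ c → p v = p w → v = w)
    {n a : ℕ} (hn : Fintype.card V = n) (ha : 1 ≤ a) (han : 2 * a < n) :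
    NCoeff T {n - a, a} = (legsGE c p a).card + (legsGE c p (n - a)).card := by
  classical
  subst hn
  rw [h.NCoeff_eq (by omega), ← h.count hi ha, ← h.count hi (by omega : 1 ≤ Fintype.card V - a),
    ← Finset.card_union_of_disjoint]
  · congr 1
    ext v
    simp only [Finset.mem_filter, Finset.mem_univ, true_and, Finset.mem_union]
    tauto
  · rw [Finset.disjoint_left]
    intro v hv hw
    have h1 := (Finset.mem_filter.1 hv).2.2
    have h2 := (Finset.mem_filter.1 hw).2.2
    omega

theorem PS.N_eq [Fintype V] (h : PS T c p d) (hi : ∀ v w, p v ≠ c → p v = p w → v = w)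
    {n a : ℕ} (hn : Fintype.card V = n) (ha : 1 ≤ a) (han : 2 * a = n) :
    NCoeff T {n - a, a} = (legsGE c p a).card := by
  classical
  subst hn
  rw [h.NCoeff_eq (by omega), ← h.count hi ha]
  congr 1
  ext v
  have : Fintype.card V - a = a := by omega
  simp [this]

theorem PS.deg [Fintype V] [DecidableRel T.Adj] (h : PS T c p d) :
    (legsGE c p 1).card = T.degree c := by
  rw [← SimpleGraph.card_neighborFinset_eq_degree]
  congr 1
  ext u
  rw [mem_legsGE, SimpleGraph.mem_neighborFinset, h.adj]
  have := desc_card_pos p u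
  tauto

theorem PS.disj [Fintype V] (h : PS T c p d) {u v : V} (hu : u ≠ c ∧ p u = c)
    (hv : v ≠ c ∧ p v = c) (huv : u ≠ v) : Disjoint (desc p u) (desc p v) := by
  rw [Finset.disjoint_left]
  intro x hx hy
  exact huv ((h.leg_of_mem hu.1 hu.2 hx).2.symm.trans (h.leg_of_mem hv.1 hv.2 hy).2)

/-- Since a spider has at least three legs, two legs miss at least two vertices. -/
theorem PS.three [Fintype V] (h : PS T c p d) (h3 : 3 ≤ (legsGE c p 1).card) {a b : ℕ}
    (ha : 2 ≤ (legsGE c p a).card) (hb : 1 ≤ (legsGE c p b).card) :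
    a + b + 2 ≤ Fintype.card V := by
  classical
  obtain ⟨u, hu⟩ := Finset.card_pos.1 hb
  obtain ⟨v, hv, hvu⟩ := Finset.exists_mem_ne (by omega : 1 < (legsGE c p a).card) u
  obtain ⟨w, hw⟩ : ((legsGE c p 1) \ {u, v}).Nonempty := by
    rw [← Finset.card_pos]
    have := Finset.le_card_sdiff {u, v} (legsGE c p 1)
    have := Finset.card_le_two (a := u) (b := v)
    omega
  simp only [Finset.mem_sdiff, Finset.mem_insert, Finset.mem_singleton, not_or] at hw
  obtain ⟨hw, hwu, hwv⟩ := hw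
  rw [mem_legsGE] at hu hv hw
  have d1 := h.disj hu.1 hv.1 hvu.symm
  have d2 := h.disj hu.1 hw.1 (Ne.symm hwu)
  have d3 := h.disj hv.1 hw.1 (Ne.symm hwv)
  have hsub : (desc p u ∪ desc p v) ∪ desc p w ⊆ Finset.univ.erase c := by
    intro x hx
    rw [Finset.mem_erase]
    refine ⟨?_, Finset.mem_univ _⟩
    rintro rfl
    simp only [Finset.mem_union] at hx
    rcases hx with (hx | hx) | hx
    · exact h.c_not_mem hu.1.1 hx
    · exact h.c_not_mem hv.1.1 hx
    · exact h.c_not_mem hw.1.1 hx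
  have := Finset.card_le_card hsub
  rw [Finset.card_union_of_disjoint (Finset.disjoint_union_left.2 ⟨d2, d3⟩),
    Finset.card_union_of_disjoint d1, Finset.card_erase_of_mem (Finset.mem_univ _),
    Finset.card_univ] at this
  omega

end

/-- One direction of the arithmetic core. -/
theorem arith_aux (n : ℕ) (f g : ℕ → ℕ) (hf : ∀ a b, a ≤ b → f b ≤ f a)
    (hg : ∀ a b, a ≤ b → g b ≤ g a)
    (hP : ∀ a b, 2 ≤ f a → 1 ≤ f b → a + b + 2 ≤ n)
    (hQ : ∀ a b, 2 ≤ g a → 1 ≤ g b → a + b + 2 ≤ n)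
    (hlt : ∀ a, 1 ≤ a → 2 * a < n → f a + f (n - a) = g a + g (n - a))
    (heq : ∀ a, 1 ≤ a → 2 * a = n → f a = g a)
    (b : ℕ) (hbn : b < n) (hb2 : n < 2 * b) (hfb : 1 ≤ f b) (hgb : g b = 0) : False := by
  have h0 := hlt (n - b) (by omega) (by omega)
  have e0 : n - (n - b) = b := by omega
  rw [e0] at h0
  have h1 := hf (n - b) b (by omega)
  -- M + 1 is the first value at or above n - b where g vanishes
  have hex : ∃ m, n - b ≤ m ∧ g m = 0 := ⟨b, by omega, hgb⟩
  classical
  obtain ⟨hm1, hm2⟩ := Nat.find_spec hex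
  have hmin : ∀ m, m < Nat.find hex → ¬ (n - b ≤ m ∧ g m = 0) := fun m hm => Nat.find_min hex hm
  have hmb : Nat.find hex ≤ b := Nat.find_min' hex ⟨by omega, hgb⟩
  generalize Nat.find hex = m at *
  have hmne : m ≠ n - b := by rintro rfl; omega
  have hgM : 1 ≤ g (m - 1) := by
    have := hmin (m - 1) (by omega)
    by_contra hcon
    exact this ⟨by omega, by omega⟩
  have hfm := hf m b hmb
  rcases lt_trichotomy (2 * m) n with hlt' | heq' | hgt
  · have h2 := hlt m (by omega) hlt'
    have := hg m (n - m) (by omega)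
    omega
  · have := heq m (by omega) heq'
    omega
  · have h2 := hlt (n - m) (by omega) (by omega)
    have e : n - (n - m) = m := by omega
    rw [e] at h2
    have h3 := hf (n - m) m (by omega)
    have := hQ (n - m) (m - 1) (by omega) hgM
    omega

theorem arith (n : ℕ) (f g : ℕ → ℕ) (hf : ∀ a b, a ≤ b → f b ≤ f a)
    (hg : ∀ a b, a ≤ b → g b ≤ g a)
    (hP : ∀ a b, 2 ≤ f a → 1 ≤ f b → a + b + 2 ≤ n)
    (hQ : ∀ a b, 2 ≤ g a → 1 ≤ g b → a + b + 2 ≤ n)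
    (hf0 : ∀ b, n ≤ b → f b = 0) (hg0 : ∀ b, n ≤ b → g b = 0)
    (hlt : ∀ a, 1 ≤ a → 2 * a < n → f a + f (n - a) = g a + g (n - a))
    (heq : ∀ a, 1 ≤ a → 2 * a = n → f a = g a)
    (b : ℕ) (hb : 1 ≤ b) : f b = g b := by
  have key : ∀ b, n < 2 * b → f b = g b := by
    intro b hb
    by_cases hbn : n ≤ b
    · rw [hf0 b hbn, hg0 b hbn]
    have h1 : f b ≤ 1 := by
      by_contra hcon
      have := hP b b (by omega) (by omega)
      omega
    have h2 : g b ≤ 1 := by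
      by_contra hcon
      have := hQ b b (by omega) (by omega)
      omega
    by_contra hne
    by_cases h3 : g b = 0
    · exact arith_aux n f g hf hg hP hQ hlt heq b (by omega) hb (by omega) h3
    · exact arith_aux n g f hg hf hQ hP (fun a h h' => (hlt a h h').symm)
        (fun a h h' => (heq a h h').symm) b (by omega) hb (by omega) (by omega)
  rcases lt_trichotomy (2 * b) n with h | h | h
  · have := hlt b hb h
    have := key (n - b) (by omega)
    omega
  · exact heq b hb h
  · exact key b h

open Classical in
theorem legs_exact [Fintype V] (c : V) (p : V → V) (b : ℕ) :
    Fintype.card {u : {u : V // u ≠ c ∧ p u = c} // (desc p u.1).card = b} =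
      (legsGE c p b).card - (legsGE c p (b + 1)).card := by
  have hsub : legsGE c p (b + 1) ⊆ legsGE c p b := by
    intro u hu
    rw [mem_legsGE] at hu ⊢
    exact ⟨hu.1, by omega⟩
  rw [← Finset.card_sdiff_of_subset hsub, ← Fintype.card_coe]
  apply Fintype.card_congr
  refine ⟨fun u => ⟨u.1.1, ?_⟩, fun u => ⟨⟨u.1, ?_⟩, ?_⟩, fun u => rfl, fun u => rfl⟩
  · rw [Finset.mem_sdiff, mem_legsGE, mem_legsGE]
    exact ⟨⟨u.1.2, u.2.ge⟩, fun hh => by have := u.2; have := hh.2; omega⟩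
  · exact (mem_legsGE.1 (Finset.mem_sdiff.1 u.2).1).1
  · have h1 := mem_legsGE.1 (Finset.mem_sdiff.1 u.2).1
    have h2 := (Finset.mem_sdiff.1 u.2).2
    rw [mem_legsGE] at h2
    by_contra hne
    exact h2 ⟨h1.1, by have := h1.2; simp only at hne; omega⟩

theorem legs_equiv [Fintype V] [Fintype W] (c : V) (p : V → V) (c' : W) (p' : W → W)
    (h : ∀ b, 1 ≤ b → (legsGE c p b).card = (legsGE c' p' b).card) :
    ∃ σ : {u : V // u ≠ c ∧ p u = c} ≃ {u : W // u ≠ c' ∧ p' u = c'},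
      ∀ u, (desc p' (σ u).1).card = (desc p u.1).card := by
  classical
  have hb : ∀ b, Nonempty ({u : {u : V // u ≠ c ∧ p u = c} // (desc p u.1).card = b} ≃
      {u : {u : W // u ≠ c' ∧ p' u = c'} // (desc p' u.1).card = b}) := by
    intro b
    rcases Nat.eq_zero_or_pos b with rfl | hb
    · have : IsEmpty {u : {u : V // u ≠ c ∧ p u = c} // (desc p u.1).card = 0} :=
        ⟨fun u => by have := desc_card_pos p u.1.1; have := u.2; omega⟩
      have : IsEmpty {u : {u : W // u ≠ c' ∧ p' u = c'} // (desc p' u.1).card = 0} :=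
        ⟨fun u => by have := desc_card_pos p' u.1.1; have := u.2; omega⟩
      exact ⟨Equiv.equivOfIsEmpty _ _⟩
    · rw [← Fintype.card_eq, legs_exact, legs_exact, h b hb, h (b + 1) (by omega)]
  have e := fun b => Classical.choice (hb b)
  refine ⟨(Equiv.sigmaFiberEquiv (fun u : {u : V // u ≠ c ∧ p u = c} =>
    (desc p u.1).card)).symm.trans ((Equiv.sigmaCongrRight e).trans
    (Equiv.sigmaFiberEquiv (fun u : {u : W // u ≠ c' ∧ p' u = c'} => (desc p' u.1).card))), ?_⟩
  intro u
  exact (e _ ⟨u, rfl⟩).2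

theorem PS.iso [Fintype V] [Fintype W] {T : SimpleGraph V} {U : SimpleGraph W}
    {c : V} {p : V → V} {d : V → ℕ} {c' : W} {p' : W → W} {d' : W → ℕ}
    (h : PS T c p d) (hi : ∀ v w, p v ≠ c → p v = p w → v = w)
    (h' : PS U c' p' d') (hi' : ∀ v w, p' v ≠ c' → p' v = p' w → v = w)
    (hcard : Fintype.card V = Fintype.card W)
    (hl : ∀ b, 1 ≤ b → (legsGE c p b).card = (legsGE c' p' b).card) :
    Nonempty (T ≃g U) := by
  classical
  obtain ⟨σ, hσ⟩ := legs_equiv c p c' p' hl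
  have hex : ∀ v, ∃ w, (v = c → w = c') ∧ (∀ hv : v ≠ c, w ≠ c' ∧
      legTop p' d' w = (σ ⟨legTop p d v, h.leg_ne hv, h.leg_p hv⟩).1 ∧
      (desc p' w).card = (desc p v).card) := by
    intro v
    by_cases hv : v = c
    · exact ⟨c', fun _ => rfl, fun hh => absurd hv hh⟩
    · obtain ⟨w, hw⟩ := h'.surj hi' (σ ⟨legTop p d v, h.leg_ne hv, h.leg_p hv⟩).2.1
        (σ ⟨legTop p d v, h.leg_ne hv, h.leg_p hv⟩).2.2 (desc_card_pos p v)
        (by rw [hσ]; exact Finset.card_le_card (desc_trans (PS.mem_leg v)))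
      exact ⟨w, fun hh => absurd hh hv, fun _ => hw⟩
  choose φ hφc hφ using hex
  have hφc' : ∀ v, φ v = c' ↔ v = c := by
    intro v
    refine ⟨fun hh => ?_, hφc v⟩
    by_contra hv
    exact (hφ v hv).1 hh
  have hinj : Function.Injective φ := by
    intro v w hvw
    by_cases hv : v = c
    · have := (hφc' v).2 hv
      rw [hvw, hφc'] at this
      rw [hv, this]
    · have hw : w ≠ c := by
        intro hw
        exact (hφ v hv).1 (hvw.trans (hφc w hw))
      have h1 := hφ v hv
      have h2 := hφ w hw
      rw [hvw] at h1
      have h3 := σ.injective (Subtype.ext (h1.2.1.symm.trans h2.2.1))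
      exact h.uniq hi hv hw (congrArg Subtype.val h3) (h1.2.2.symm.trans h2.2.2)
  have hbij : Function.Bijective φ :=
    (Fintype.bijective_iff_injective_and_card φ).2 ⟨hinj, hcard⟩
  have hcomm : ∀ v, φ (p v) = p' (φ v) := by
    intro v
    by_cases hv : v = c
    · rw [hv, h.pc, hφc c rfl, h'.pc]
    obtain ⟨a1, a2, a3⟩ := hφ v hv
    by_cases hp : p v = c
    · rw [hφc _ hp]
      have : φ v = legTop p' d' (φ v) := by
        apply h'.uniq hi' a1 (h'.leg_ne a1)
        · exact (h'.leg_of_p (h'.leg_ne a1) (h'.leg_p a1)).symm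
        · rw [a2, hσ, a3]
          exact congrArg (fun x => (desc p x).card) (h.leg_of_p hv hp).symm
      rw [this, h'.leg_p a1]
    · obtain ⟨b1, b2, b3⟩ := hφ (p v) hp
      have hc1 := h.card_parent hi hp
      have hp' : p' (φ v) ≠ c' := by
        intro hh
        have h1 := h'.leg_of_p a1 hh
        rw [a2] at h1
        have h2 := hσ ⟨legTop p d v, h.leg_ne hv, h.leg_p hv⟩
        rw [h1, a3] at h2
        have h3 := Finset.card_le_card (desc_trans (PS.mem_leg (p := p) (d := d) (p v)))
        rw [h.leg_parent hp] at h3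
        simp only at h2
        omega
      apply h'.uniq hi' b1 hp'
      · rw [b2, h'.leg_parent hp', a2]
        congr 2
        exact Subtype.ext (h.leg_parent hp)
      · rw [b3, h'.card_parent hi' hp', a3, hc1]
  refine ⟨⟨Equiv.ofBijective φ hbij, ?_⟩⟩
  intro v w
  simp only [Equiv.ofBijective_apply]
  rw [h.adj, h'.adj, ← hcomm, ← hcomm, hinj.eq_iff, hinj.eq_iff, Ne, Ne, hφc', hφc']

/-- Let `T` and `U` be spiders, each with `n` vertices, such that for every partition of `n`
into exactly two parts `(n−a, a)` we have `N_{(n−a,a)}(T) = N_{(n−a,a)}(U)`.  Then `T` and `U`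
are isomorphic: the two-part portion of the chromatic symmetric function determines a spider
up to isomorphism. -/
theorem stmt_14 [Fintype V] [Fintype W] (T : SimpleGraph V) (U : SimpleGraph W)
    [DecidableRel T.Adj] [DecidableRel U.Adj]
    (hT : IsSpider T) (hU : IsSpider U) (n : ℕ)
    (hVn : Fintype.card V = n) (hWn : Fintype.card W = n)
    (hN : ∀ a : ℕ, 1 ≤ a → 2 * a ≤ n →
      NCoeff T {n - a, a} = NCoeff U {n - a, a}) :
    Nonempty (T ≃g U) := by
  obtain ⟨c, p, d, h, hi, h3⟩ := spider_PS T hT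
  obtain ⟨c', p', d', h', hi', h3'⟩ := spider_PS U hU
  rw [← h.deg] at h3
  rw [← h'.deg] at h3'
  refine h.iso hi h' hi' (hVn.trans hWn.symm) ?_
  refine arith n (fun b => (legsGE c p b).card) (fun b => (legsGE c' p' b).card)
    (fun a b hab => legsGE_anti hab) (fun a b hab => legsGE_anti hab)
    (fun a b ha hb => hVn ▸ h.three h3 ha hb) (fun a b ha hb => hWn ▸ h'.three h3' ha hb)
    ?_ ?_ ?_ ?_
  · intro b hb
    by_contra hne
    have := h.three h3 (a := 1) (b := b) (by omega) (Nat.pos_of_ne_zero hne)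
    omega
  · intro b hb
    by_contra hne
    have := h'.three h3' (a := 1) (b := b) (by omega) (Nat.pos_of_ne_zero hne)
    omega
  · intro a ha han
    have := hN a ha han.le
    rwa [h.N_lt hi hVn ha han, h'.N_lt hi' hWn ha han] at this
  · intro a ha han
    have := hN a ha han.le
    rwa [h.N_eq hi hVn ha han, h'.N_eq hi' hWn ha han] at this
end

section
/- Let T be a spider with n vertices and let t be its torso (the unique vertex of degree at least 3), so that the legs of T are the paths from t to the leaves and the leg containing a leaf v has length dist(t, v). Suppose the maximum leg length λ_1 satisfies 2·λ_1 ≤ n. Then for every integer a ≥ 1, the number of edges e ∈ E(T) such that the smaller of the two connected components of T − e has exactly a vertices equals the number of leaves v of T with dist(t, v) ≥ a (i.e., the a-th part of the conjugate of the partition of leg lengths). -/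
open SimpleGraph Finset

variable {V : Type*}

/-- `minSide T e` : the minimum of the orders of the connected components of `T − e`. -/
noncomputable def minSide [Fintype V] (T : SimpleGraph V) (e : Sym2 V) : ℕ :=
  sInf {m : ℕ | ∃ c : (T.deleteEdges {e}).ConnectedComponent, c.supp.ncard = m}

lemma sp_parent [Fintype V] (T : SimpleGraph V) (hT : T.IsTree) (t : V) :
    ∃ p : V → V, p t = t ∧ (∀ v, v ≠ t → T.dist t v = T.dist t (p v) + 1) ∧
      (∀ v, v ≠ t → T.Adj v (p v)) ∧
      (∀ e ∈ T.edgeSet, ∃ v, v ≠ t ∧ e = s(v, p v)) := by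
  classical
  have h1 : ∀ v, ∃ u, (v = t → u = t) ∧ (v ≠ t → T.Adj v u ∧ T.dist t v = T.dist t u + 1) := by
    intro v
    by_cases hv : v = t
    · exact ⟨t, fun _ => rfl, fun h => absurd hv h⟩
    · obtain ⟨w, hw⟩ := hT.connected.exists_walk_length_eq_dist v t
      cases w with
      | nil => exact absurd rfl hv
      | @cons _ u _ h q =>
        refine ⟨u, fun h => absurd h hv, fun _ => ⟨h, ?_⟩⟩
        rw [Walk.length_cons] at hw
        have h2 := dist_le q
        have h3 := hT.connected.dist_triangle (u := v) (v := u) (w := t)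
        have h4 : T.dist v u = 1 := dist_eq_one_iff_adj.2 h
        rw [T.dist_comm (u := t) (v := v), T.dist_comm (u := t) (v := u)]
        omega
  choose p hp1 hp2 using h1
  refine ⟨p, hp1 t rfl, fun v hv => (hp2 v hv).2, fun v hv => (hp2 v hv).1, ?_⟩
  let f : V → Sym2 V := fun v => s(v, p v)
  have himg : (univ.erase t).image f = T.edgeFinset := by
    apply Finset.eq_of_subset_of_card_le
    · intro e he
      simp only [Finset.mem_image, Finset.mem_erase] at he
      obtain ⟨v, ⟨hv, -⟩, rfl⟩ := he
      simpa [f] using (hp2 v hv).1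
    · rw [Finset.card_image_of_injOn]
      · have := hT.card_edgeFinset
        rw [Finset.card_erase_of_mem (mem_univ t), Finset.card_univ]
        omega
      · intro x hx y hy hxy
        have hx' : x ≠ t := by simpa using hx
        have hy' : y ≠ t := by simpa using hy
        have a1 := (hp2 x hx').2
        have a2 := (hp2 y hy').2
        simp only [f, Sym2.eq_iff] at hxy
        rcases hxy with h | ⟨h, h'⟩
        · exact h.1
        · rw [h'] at a1; rw [← h] at a2; omega
  intro e he
  have : e ∈ T.edgeFinset := by simpa using he
  rw [← himg] at this
  simp only [Finset.mem_image, Finset.mem_erase] at this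
  obtain ⟨v, ⟨hv, -⟩, h⟩ := this
  exact ⟨v, hv, h.symm⟩

section
variable {t : V} {p : V → V} {d : V → ℕ}

lemma sp_iter_t (hpt : p t = t) (k : ℕ) : p^[k] t = t := Function.iterate_fixed hpt k

lemma sp_iter_d (hpt : p t = t) (hd : ∀ v, v ≠ t → d v = d (p v) + 1) (k : ℕ) :
    ∀ v, p^[k] v ≠ t → d v = d (p^[k] v) + k := by
  induction k with
  | zero => intro v _; rfl
  | succ k ih =>
    intro v hv
    have hvt : v ≠ t := by
      rintro rfl; exact hv (sp_iter_t hpt _)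
    rw [Function.iterate_succ_apply] at hv ⊢
    rw [hd v hvt, ih _ hv]; omega

lemma sp_iter_inj (hpt : p t = t) (hinj : ∀ x y, p x = p y → p x ≠ t → x = y) (k : ℕ) :
    ∀ x y, p^[k] x = p^[k] y → p^[k] x ≠ t → x = y := by
  induction k with
  | zero => intro x y h _; exact h
  | succ k ih =>
    intro x y h ht
    rw [Function.iterate_succ_apply] at h ht
    rw [Function.iterate_succ_apply] at h
    have h2 := ih _ _ h ht
    refine hinj x y h2 ?_
    intro h3
    rw [h3] at ht
    exact ht (sp_iter_t hpt _)

lemma sp_iter_ne (hpt : p t = t) (hd : ∀ v, v ≠ t → d v = d (p v) + 1) (k : ℕ) :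
    ∀ w, k < d w → d t = 0 → p^[k] w ≠ t := by
  induction k with
  | zero => intro w h h0 he; have he2 : w = t := he; subst he2; omega
  | succ k ih =>
    intro w h h0
    rw [Function.iterate_succ_apply]
    by_cases hw : w = t
    · subst hw; omega
    · have := hd w hw
      exact ih _ (by omega) h0
end

lemma sp_minSide [Fintype V] (T : SimpleGraph V) (t : V) (p : V → V) (d : V → ℕ)
    (hpt : p t = t) (hd : ∀ v, v ≠ t → d v = d (p v) + 1)
    (hadj : ∀ v, v ≠ t → T.Adj v (p v))
    (hedge : ∀ e ∈ T.edgeSet, ∃ v, v ≠ t ∧ e = s(v, p v))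
    (hinj : ∀ x y, p x = p y → p x ≠ t → x = y)
    (w : V) (hw : ∀ u, u ≠ t → p u ≠ w) (k : ℕ) (hk : p^[k] w ≠ t)
    (hn : 2 * (k + 1) ≤ Fintype.card V) :
    minSide T s(p^[k] w, p (p^[k] w)) = k + 1 := by
  classical
  set v := p^[k] w with hv
  set D : Set V := {x | ∃ j, p^[j] x = v} with hD
  have hDc : D = (fun i => p^[i] w) '' (Finset.range (k + 1) : Set ℕ) := by
    ext x
    simp only [hD, Set.mem_setOf_eq, Set.mem_image, Finset.coe_range, Set.mem_Iio]
    constructor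
    · rintro ⟨j, hj⟩
      rcases le_or_gt j k with hjk | hjk
      · refine ⟨k - j, by omega, ?_⟩
        symm
        apply sp_iter_inj hpt hinj j
        · rw [← Function.iterate_add_apply, Nat.add_sub_cancel' hjk, hj]
        · rwa [hj]
      · exfalso
        obtain ⟨m, rfl⟩ : ∃ m, j = k + (m + 1) := ⟨j - k - 1, by omega⟩
        rw [Function.iterate_add_apply] at hj
        have h2 := sp_iter_inj hpt hinj k _ _ (hj.trans hv) (by rwa [hj])
        rw [Function.iterate_succ_apply'] at h2
        refine hw _ ?_ h2
        intro h3
        rw [h3, hpt] at h2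
        rw [hv, ← h2] at hk
        exact hk (sp_iter_t hpt _)
    · rintro ⟨i, hi, rfl⟩
      refine ⟨k - i, ?_⟩
      rw [← Function.iterate_add_apply, Nat.sub_add_cancel (by omega)]
  have hcard : D.ncard = k + 1 := by
    rw [hDc, Set.ncard_image_of_injOn, Set.ncard_coe_finset, Finset.card_range]
    have key : ∀ i, i ≤ k → d w = d (p^[i] w) + i := by
      intro i hi
      apply sp_iter_d hpt hd
      intro h
      apply hk
      rw [hv, ← Nat.sub_add_cancel hi, Function.iterate_add_apply, h, sp_iter_t hpt]
    intro i hi j hj hij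
    simp at hi hj
    have h1 := key i (by omega)
    have h2 := key j (by omega)
    simp only at hij
    rw [hij] at h1
    omega
  have hcard2 : Dᶜ.ncard = Fintype.card V - (k + 1) := by
    rw [Set.ncard_compl, hcard, Nat.card_eq_fintype_card]
  set G := T.deleteEdges {s(v, p v)} with hG
  have hvD : v ∈ D := ⟨0, rfl⟩
  have htD : t ∉ D := by
    rintro ⟨j, hj⟩
    rw [sp_iter_t hpt] at hj
    exact hk hj.symm
  have hne : ∀ x, x ≠ t → x ≠ v → G.Adj x (p x) := by
    intro x hx hxv
    rw [hG, deleteEdges_adj]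
    refine ⟨hadj x hx, ?_⟩
    simp only [Set.mem_singleton_iff, Sym2.eq_iff]
    rintro (h | ⟨h1, h2⟩)
    · exact hxv h.1
    · have a1 := hd x hx
      have a2 := hd v hk
      rw [h2] at a1; rw [← h1] at a2; omega
  have hpD : ∀ x, x ≠ v → (p x ∈ D ↔ x ∈ D) := by
    intro x hx
    constructor
    · rintro ⟨j, hj⟩
      exact ⟨j + 1, hj⟩
    · rintro ⟨j, hj⟩
      cases j with
      | zero => exact absurd hj hx
      | succ j => exact ⟨j, hj⟩
  have hcl : ∀ x y, G.Adj x y → (x ∈ D ↔ y ∈ D) := by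
    intro x y hxy
    rw [hG, deleteEdges_adj] at hxy
    obtain ⟨h1, h2⟩ := hxy
    obtain ⟨u, hu, he⟩ := hedge s(x, y) h1
    rw [he] at h2
    have huv : u ≠ v := by
      rintro rfl; exact h2 rfl
    rcases Sym2.eq_iff.1 he with ⟨rfl, rfl⟩ | ⟨rfl, rfl⟩
    · exact (hpD _ huv).symm
    · exact hpD _ huv
  have hreach : ∀ x y, G.Reachable x y → (x ∈ D ↔ y ∈ D) := by
    rintro x y ⟨q⟩
    induction q with
    | nil => rfl
    | cons h _ ih => exact (hcl _ _ h).trans ih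
  have hin : ∀ j x, p^[j] x = v → G.Reachable x v := by
    intro j
    induction j with
    | zero => rintro x rfl; exact Reachable.refl _
    | succ j ih =>
      intro x hx
      by_cases hxv : x = v
      · rw [hxv]
      · have hxt : x ≠ t := by
          rintro rfl
          exact htD ⟨_, hx⟩
        exact (hne x hxt hxv).reachable.trans (ih _ hx)
  have hout : ∀ m x, d x = m → x ∉ D → G.Reachable x t := by
    intro m
    induction m with
    | zero =>
      intro x hx _
      by_cases hxt : x = t
      · rw [hxt]
      · have := hd x hxt; omega
    | succ m ih =>
      intro x hx hxD
      by_cases hxt : x = t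
      · rw [hxt]
      · have := hd x hxt
        have hxv : x ≠ v := by rintro rfl; exact hxD hvD
        exact (hne x hxt hxv).reachable.trans
          (ih _ (by omega) (fun h => hxD ((hpD x hxv).1 h)))
  have hs1 : (G.connectedComponentMk v).supp = D := by
    ext x
    rw [ConnectedComponent.mem_supp_iff, ConnectedComponent.eq]
    exact ⟨fun h => (hreach _ _ h).2 hvD, fun ⟨j, hj⟩ => hin j x hj⟩
  have hs2 : (G.connectedComponentMk t).supp = Dᶜ := by
    ext x
    rw [ConnectedComponent.mem_supp_iff, ConnectedComponent.eq]
    exact ⟨fun h h' => htD ((hreach _ _ h).1 h'), fun h => hout _ x rfl h⟩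
  unfold minSide
  apply IsLeast.csInf_eq
  constructor
  · exact ⟨G.connectedComponentMk v, by rw [hs1, hcard]⟩
  · rintro m ⟨c, rfl⟩
    induction c using ConnectedComponent.ind with
    | _ x =>
      by_cases hx : x ∈ D
      · obtain ⟨j, hj⟩ := hx
        rw [ConnectedComponent.eq.2 (hin j x hj), hs1, hcard]
      · rw [ConnectedComponent.eq.2 (hout _ x rfl hx), hs2, hcard2]
        omega

/-- Let `T` be a spider with `n` vertices and torso `t` (its unique vertex of degree ≥ 3), so
the legs of `T` are the paths from `t` to the leaves and the leg through a leaf `v` has length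
`dist(t,v)`.  Suppose the maximum leg length `λ₁` satisfies `2·λ₁ ≤ n`.  Then for every
`a ≥ 1`, the number of edges `e` such that the smaller component of `T − e` has exactly `a`
vertices equals the number of leaves `v` with `dist(t,v) ≥ a` (the `a`-th part of the conjugate
of the partition of leg lengths). -/
theorem stmt_15 [Fintype V] (T : SimpleGraph V) [DecidableRel T.Adj]
    (hT : T.IsTree) (t : V)
    (ht3 : 3 ≤ T.degree t) (htuniq : ∀ v : V, 3 ≤ T.degree v → v = t)
    (hlegs : ∀ v : V, T.degree v = 1 → 2 * T.dist t v ≤ Fintype.card V)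
    (a : ℕ) (ha : 1 ≤ a) :
    {e : Sym2 V | e ∈ T.edgeSet ∧ minSide T e = a}.ncard =
      {v : V | T.degree v = 1 ∧ a ≤ T.dist t v}.ncard := by
  classical
  obtain ⟨p, hpt, hd, hadj, hedge⟩ := sp_parent T hT t
  have hd0 : T.dist t t = 0 := dist_self
  have hinj : ∀ x y, p x = p y → p x ≠ t → x = y := by
    intro x y hxy hx
    by_contra hne
    have hxt : x ≠ t := by rintro rfl; exact hx hpt
    have hyt : y ≠ t := by rintro rfl; exact hx (hxy.trans hpt)
    apply hx
    apply htuniq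
    have d1 := hd x hxt
    have d2 := hd y hyt
    have d3 := hd _ hx
    rw [← hxy] at d2
    have hsub : ({x, y, p (p x)} : Finset V) ⊆ T.neighborFinset (p x) := by
      intro z hz
      simp only [Finset.mem_insert, Finset.mem_singleton] at hz
      rw [mem_neighborFinset]
      rcases hz with rfl | rfl | rfl
      · exact (hadj _ hxt).symm
      · rw [hxy]; exact (hadj _ hyt).symm
      · exact hadj _ hx
    have h3 : ({x, y, p (p x)} : Finset V).card = 3 := by
      rw [Finset.card_eq_three]
      refine ⟨x, y, p (p x), hne, ?_, ?_, rfl⟩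
      · intro h; rw [← h] at d3; omega
      · intro h; rw [← h] at d3; omega
    rw [← card_neighborFinset_eq_degree, ← h3]
    exact Finset.card_le_card hsub
  have hleaf : ∀ v, v ≠ t → (T.degree v = 1 ↔ ∀ u, u ≠ t → p u ≠ v) := by
    intro v hv
    constructor
    · rintro h u hu rfl
      rw [← card_neighborFinset_eq_degree, Finset.card_eq_one] at h
      obtain ⟨z, hz⟩ := h
      have h1 : u ∈ T.neighborFinset (p u) := by
        rw [mem_neighborFinset]; exact (hadj u hu).symm
      have h2 : p (p u) ∈ T.neighborFinset (p u) := by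
        rw [mem_neighborFinset]; exact hadj _ hv
      rw [hz, Finset.mem_singleton] at h1 h2
      have d1 := hd u hu
      have d2 := hd _ hv
      rw [h2, ← h1] at d2
      omega
    · intro h
      rw [← card_neighborFinset_eq_degree, Finset.card_eq_one]
      refine ⟨p v, ?_⟩
      ext z
      rw [mem_neighborFinset, Finset.mem_singleton]
      constructor
      · intro hz
        obtain ⟨u, hu, he⟩ := hedge s(v, z) hz
        rcases Sym2.eq_iff.1 he with ⟨rfl, rfl⟩ | ⟨h1, rfl⟩
        · rfl
        · exact absurd h1.symm (h _ hu)
      · rintro rfl; exact hadj v hv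
  have hlt : ∀ v, T.degree v = 1 → v ≠ t := by
    rintro v h rfl; omega
  have key : ∀ w k, T.degree w = 1 → k + 1 ≤ T.dist t w →
      p^[k] w ≠ t ∧ minSide T s(p^[k] w, p (p^[k] w)) = k + 1 := by
    intro w k hw hk
    have hne := sp_iter_ne (d := T.dist t) hpt hd k w hk hd0
    refine ⟨hne, sp_minSide T t p (T.dist t) hpt hd hadj hedge hinj w
      ((hleaf w (hlt w hw)).1 hw) k hne ?_⟩
    have := hlegs w hw
    omega
  obtain ⟨k, rfl⟩ : ∃ k, a = k + 1 := ⟨a - 1, by omega⟩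
  symm
  apply Set.ncard_congr (fun w _ => s(p^[k] w, p (p^[k] w)))
  · rintro w ⟨h1, h2⟩
    obtain ⟨h3, h4⟩ := key w k h1 h2
    exact ⟨hadj _ h3, h4⟩
  · rintro w w' ⟨h1, h2⟩ ⟨h1', h2'⟩ he
    obtain ⟨h3, -⟩ := key w k h1 h2
    obtain ⟨h3', -⟩ := key w' k h1' h2'
    refine sp_iter_inj hpt hinj k w w' ?_ h3
    rcases Sym2.eq_iff.1 he with h | ⟨h, h'⟩
    · exact h.1
    · have a1 := hd _ h3
      have a2 := hd _ h3'
      rw [h'] at a1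
      rw [← h] at a2
      omega
  · rintro e ⟨he, hm⟩
    obtain ⟨v, hv, rfl⟩ := hedge e he
    obtain ⟨w, hwD, hmax⟩ := Finset.exists_max_image
      (univ.filter (fun x => ∃ j, p^[j] x = v)) (T.dist t) ⟨v, by simpa using ⟨0, rfl⟩⟩
    simp only [Finset.mem_filter, Finset.mem_univ, true_and] at hwD hmax
    obtain ⟨j, rfl⟩ := hwD
    have hwt : w ≠ t := by
      rintro rfl; exact hv (sp_iter_t hpt _)
    have hwl : T.degree w = 1 := by
      rw [hleaf w hwt]
      rintro u hu rfl
      have := hmax u ⟨j + 1, rfl⟩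
      have := hd u hu
      omega
    have hdj := sp_iter_d (d := T.dist t) hpt hd j w hv
    have hdv := hd _ hv
    have h4 := (key w j hwl (by omega)).2
    have : j = k := by omega
    subst this
    exact ⟨w, ⟨hwl, by omega⟩, rfl⟩
end
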